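/- arXiv:2201.00476 — 2 statements merged into one kernel-verified Lean document; each statement's English description precedes it below -/
import Mathlib

section
/- Let m be a positive integer and Z = mP_1 + ... + mP_s a set of s non-degenerate equimultiple fat points in P^n (the points span P^n). If s ≤ n+3, then reg(Z) = T(Z), where T(Z) = max{T_j(Z) : j=1,...,n} with T_j(Z) = max{⌊(mq + j - 2)/j⌋ : some q of the points lie on a j-dimensional linear subspace}. -/
open MvPolynomial

noncomputable section

/-- The defining prime ideal of the point of projective space with homogeneous
coordinates `p`: the ideal generated by the linear forms vanishing at `p`. -/
def pointIdeal {K : Type} [Field K] {N : ℕ} (p : Fin N → K) :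
    Ideal (MvPolynomial (Fin N) K) :=
  Ideal.span {f | f.IsHomogeneous 1 ∧ eval p f = 0}

/-- The ideal of the fat point scheme `m₁P₁ + ⋯ + m_sP_s`. -/
def fatIdeal {K : Type} [Field K] {N s : ℕ} (p : Fin s → Fin N → K) (m : Fin s → ℕ) :
    Ideal (MvPolynomial (Fin N) K) :=
  ⨅ i, pointIdeal (p i) ^ (m i)

/-- `dim_K` of the degree-`t` graded piece of the ideal `I`. -/
def gradedDim (K : Type) [Field K] {N : ℕ} (I : Ideal (MvPolynomial (Fin N) K)) (t : ℕ) : ℕ :=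
  Module.finrank K ↥(homogeneousSubmodule (Fin N) K t ⊓ I.restrictScalars K)

/-- The Hilbert function of `R/I` in degree `t`. -/
def hilbFn (K : Type) [Field K] {N : ℕ} (I : Ideal (MvPolynomial (Fin N) K)) (t : ℕ) : ℕ :=
  Module.finrank K ↥(homogeneousSubmodule (Fin N) K t) - gradedDim K I t

/-- The regularity index of `R/I` relative to the multiplicity `e`:
the least `t` with `H_{R/I}(t) = e`. -/
def regIndex (K : Type) [Field K] {N : ℕ} (I : Ideal (MvPolynomial (Fin N) K)) (e : ℕ) : ℕ :=
  sInf {t | hilbFn K I t = e}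

/-- The multiplicity `e(R/I) = ∑ C(mᵢ+n-1, n)` of a fat point scheme in `ℙⁿ`. -/
def fatMult (n : ℕ) {s : ℕ} (m : Fin s → ℕ) : ℕ :=
  ∑ i, (m i + n - 1).choose n

/-- The regularity index of the fat point scheme `m₁P₁ + ⋯ + m_sP_s` in `ℙⁿ`. -/
def regFat (K : Type) [Field K] {n s : ℕ} (p : Fin s → Fin (n + 1) → K) (m : Fin s → ℕ) : ℕ :=
  regIndex K (fatIdeal p m) (fatMult n m)

/-- The coordinate vectors `p i` represent distinct points of projective space. -/
def ProjDistinct {K : Type} [Field K] {N s : ℕ} (p : Fin s → Fin N → K) : Prop :=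
  (∀ i, p i ≠ 0) ∧ ∀ i j, i ≠ j → ∀ c : K, p i ≠ c • p j

/-- The points `p i`, `i ∈ Q`, lie on a `j`-dimensional linear subspace of `ℙⁿ`. -/
def OnLinearSubspace {K : Type} [Field K] {N s : ℕ} (p : Fin s → Fin N → K)
    (Q : Finset (Fin s)) (j : ℕ) : Prop :=
  ∃ W : Submodule K (Fin N → K), Module.finrank K ↥W ≤ j + 1 ∧ ∀ i ∈ Q, p i ∈ W

open Classical in
/-- The Segre bound `T(Z) = max {T_j(Z) | j = 1,…,n}` for fat points in `ℙⁿ`. -/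
def segreBound {K : Type} [Field K] (n : ℕ) {s : ℕ} (p : Fin s → Fin (n + 1) → K)
    (m : Fin s → ℕ) : ℕ :=
  (Finset.Icc 1 n).sup fun j =>
    Finset.univ.powerset.sup fun Q =>
      if Q.Nonempty ∧ OnLinearSubspace p Q j then (∑ i ∈ Q, m i + j - 2) / j else 0

/-- The standard coordinate point `(1,0,…,0)`. -/
def stdPt (K : Type) [Field K] (N : ℕ) : Fin N → K := fun j => if (j : ℕ) = 0 then 1 else 0

/-! ### Linear substitutions -/

/-- The substitution of variables induced by a linear map. -/
def lsub {K : Type} [Field K] {a b : ℕ} (A : (Fin a → K) →ₗ[K] (Fin b → K)) :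
    MvPolynomial (Fin b) K →ₐ[K] MvPolynomial (Fin a) K :=
  aeval (fun k => ∑ i, C (A (Pi.single i 1) k) * X i)

lemma lsub_hom {K : Type} [Field K] {a b : ℕ} (A : (Fin a → K) →ₗ[K] (Fin b → K))
    {F : MvPolynomial (Fin b) K} {t : ℕ} (hF : F.IsHomogeneous t) :
    (lsub A F).IsHomogeneous t := by
  have := hF.aeval (S := K) (τ := Fin a) (n := 1)
    (fun k => ∑ i, C (A (Pi.single i 1) k) * X i)
    (fun k => IsHomogeneous.sum _ _ _ fun i _ => isHomogeneous_C_mul_X _ _)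
  simpa [lsub] using this

lemma eval_lsub {K : Type} [Field K] {a b : ℕ} (A : (Fin a → K) →ₗ[K] (Fin b → K))
    (F : MvPolynomial (Fin b) K) (z : Fin a → K) :
    eval z (lsub A F) = eval (A z) F := by
  have h : (aeval z : MvPolynomial (Fin a) K →ₐ[K] K).comp (lsub A) = aeval (A z) := by
    apply MvPolynomial.algHom_ext
    intro k
    simp only [lsub, AlgHom.comp_apply, aeval_X, map_sum, map_mul, aeval_C]
    have hz : z = ∑ i, z i • (Pi.single i 1 : Fin a → K) := by
      ext j; simp [Finset.sum_apply, Pi.single_apply]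
    conv_rhs => rw [hz]
    simp [Finset.sum_apply, mul_comm]
  have := congrArg (fun f => f F) h
  simpa [aeval_eq_eval] using this

lemma lsub_point {K : Type} [Field K] {a b : ℕ} (A : (Fin a → K) →ₗ[K] (Fin b → K))
    (z : Fin a → K) (m : ℕ) {F : MvPolynomial (Fin b) K} (hF : F ∈ pointIdeal (A z) ^ m) :
    lsub A F ∈ pointIdeal z ^ m := by
  have h1 : (pointIdeal (A z)).map (lsub A) ≤ pointIdeal z := by
    rw [pointIdeal, Ideal.map_span, Ideal.span_le]
    rintro _ ⟨f, ⟨hf1, hf2⟩, rfl⟩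
    exact Ideal.subset_span ⟨lsub_hom A hf1, by
      have := eval_lsub A f z
      rw [hf2] at this; exact this⟩
  have h2 : lsub A F ∈ (pointIdeal (A z) ^ m).map (lsub A) := Ideal.mem_map_of_mem _ hF
  rw [Ideal.map_pow] at h2
  exact Ideal.pow_right_mono h1 m h2

lemma lsub_comp {K : Type} [Field K] {a b c : ℕ} (A : (Fin a → K) →ₗ[K] (Fin b → K))
    (B : (Fin b → K) →ₗ[K] (Fin c → K)) (F : MvPolynomial (Fin c) K) :
    lsub A (lsub B F) = lsub (B ∘ₗ A) F := by
  have h : (lsub A).comp (lsub B) = lsub (B ∘ₗ A) := by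
    apply MvPolynomial.algHom_ext
    intro k
    simp only [lsub, AlgHom.comp_apply, aeval_X, map_sum, map_mul, LinearMap.comp_apply]
    simp only [Finset.mul_sum]
    rw [Finset.sum_comm]
    refine Finset.sum_congr rfl fun i _ => ?_
    have hz : A (Pi.single i 1) = ∑ j, A (Pi.single i 1) j • (Pi.single j 1 : Fin b → K) := by
      ext j; simp [Finset.sum_apply, Pi.single_apply]
    conv_rhs => rw [hz]
    simp only [map_sum, map_smul, Finset.sum_apply, Pi.smul_apply, smul_eq_mul, Finset.sum_mul,
      map_mul]
    refine Finset.sum_congr rfl fun j _ => ?_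
    rw [show (aeval fun k => ∑ i, C ((A (Pi.single i 1)) k) * X i)
      (C ((B (Pi.single j 1)) k) : MvPolynomial (Fin b) K) = C ((B (Pi.single j 1)) k) by
        rw [aeval_C]; rfl]
    ring
  exact congrArg (fun f => f F) h

lemma lsub_id {K : Type} [Field K] {a : ℕ} (F : MvPolynomial (Fin a) K) :
    lsub (LinearMap.id) F = F := by
  have h : lsub (LinearMap.id : (Fin a → K) →ₗ[K] (Fin a → K)) = AlgHom.id K _ := by
    apply MvPolynomial.algHom_ext
    intro k
    simp only [lsub, aeval_X, LinearMap.id_apply, AlgHom.id_apply]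
    rw [Finset.sum_eq_single k] <;> simp +contextual [Pi.single_apply, eq_comm]
  simp [h]

/-! ### The dimension of spaces of forms -/

lemma hom_eq_restrict (K : Type) [Field K] (N t : ℕ) :
    homogeneousSubmodule (Fin N) K t = restrictSupport K {d : Fin N →₀ ℕ | d.degree = t} :=
  homogeneousSubmodule_eq_finsupp_supported _ _ _

lemma finrank_restrict (K : Type) [Field K] {N : ℕ} (S : Set (Fin N →₀ ℕ)) :
    Module.finrank K (restrictSupport K S) = Nat.card S :=
  Module.finrank_eq_nat_card_basis (basisRestrictSupport K S)

lemma degset_eq (N t : ℕ) : {d : Fin N →₀ ℕ | d.degree = t} =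
    ((Finset.univ : Finset (Fin N)).finsuppAntidiag t : Set (Fin N →₀ ℕ)) := by
  ext d
  simp [Finsupp.degree_eq_sum]

lemma degset_finite (N t : ℕ) : {d : Fin N →₀ ℕ | d.degree = t}.Finite := by
  rw [degset_eq]; exact Finset.finite_toSet _

lemma finrank_hom (K : Type) [Field K] (n t : ℕ) :
    Module.finrank K (homogeneousSubmodule (Fin (n + 1)) K t) = (t + n).choose n := by
  rw [hom_eq_restrict, finrank_restrict, degset_eq]
  simp only [SetLike.coe_sort_coe, Nat.card_eq_fintype_card, Fintype.card_coe]
  rw [Finset.card_finsuppAntidiag_nat_eq_choose]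
  simp only [Finset.card_univ, Fintype.card_fin]
  rw [show n + 1 + t - 1 = t + n by omega, Nat.choose_symm_add]

instance finite_hom (K : Type) [Field K] (N t : ℕ) :
    FiniteDimensional K (homogeneousSubmodule (Fin N) K t) :=
  Module.Finite.iff_fg.mpr (homogeneousSubmodule_fg _ _ _)

/-! ### Powers of the ideal of the first coordinate point -/

lemma upper_aux (n m : ℕ) : IsUpperSet {d : Fin (n + 1) →₀ ℕ | d 0 + m ≤ d.degree} := by
  intro a b hab ha
  obtain ⟨c, rfl⟩ := exists_add_of_le hab
  simp only [Set.mem_ofPred_eq, map_add, Finsupp.add_apply] at ha ⊢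
  have : c 0 ≤ c.degree := Finsupp.le_degree 0 c
  omega

lemma mem_e0_pow {K : Type} [Field K] {n : ℕ} (m : ℕ) (F : MvPolynomial (Fin (n + 1)) K) :
    F ∈ pointIdeal (Pi.single 0 1 : Fin (n + 1) → K) ^ m ↔
      ∀ d ∈ F.support, d 0 + m ≤ d.degree := by
  constructor
  · intro hF
    suffices h : ∀ m, pointIdeal (Pi.single 0 1 : Fin (n + 1) → K) ^ m ≤
        restrictSupportIdeal K {d : Fin (n + 1) →₀ ℕ | d 0 + m ≤ d.degree} (upper_aux n m) from
      fun d hd => h m hF hd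
    have key : pointIdeal (Pi.single 0 1 : Fin (n + 1) → K) ≤
        restrictSupportIdeal K {d : Fin (n + 1) →₀ ℕ | d 0 + 1 ≤ d.degree} (upper_aux n 1) := by
      rw [pointIdeal, Ideal.span_le]
      rintro f ⟨hf1, hf2⟩ d hd
      have hd1 : d.degree = 1 := by
        by_contra hne
        exact (mem_support_iff.mp hd) (hf1.coeff_eq_zero hne)
      have hle : d 0 ≤ d.degree := Finsupp.le_degree 0 d
      show d 0 + 1 ≤ d.degree
      by_contra hcon
      have hd0 : d 0 = 1 := by omega
      have hds : d = Finsupp.single 0 1 := by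
        ext k
        by_cases hk : k = 0
        · subst hk; simp [hd0]
        · rw [Finsupp.degree_eq_sum] at hd1
          have := Finset.add_le_sum (s := Finset.univ) (f := fun i => d i)
            (fun i _ => Nat.zero_le _) (Finset.mem_univ (0 : Fin (n+1))) (Finset.mem_univ k)
            (Ne.symm hk)
          have hk0 : d k = 0 := by omega
          simp [hk0, Finsupp.single_apply, Ne.symm hk]
      apply mem_support_iff.mp hd
      rw [eval_eq'] at hf2
      rw [Finset.sum_eq_single d] at hf2
      · rw [hds] at hf2 ⊢
        rw [Finset.prod_eq_one, mul_one] at hf2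
        · exact hf2
        · intro i _
          by_cases hi : i = 0
          · subst hi; simp
          · simp [Finsupp.single_apply, Ne.symm hi]
      · intro e he hne
        have he1 : e.degree = 1 := by
          by_contra hne
          exact (mem_support_iff.mp he) (hf1.coeff_eq_zero hne)
        have : ∃ k, k ≠ 0 ∧ e k ≠ 0 := by
          by_contra hc
          push Not at hc
          apply hne
          rw [hds]
          ext k
          by_cases hk : k = 0
          · subst hk
            rw [Finsupp.degree_eq_sum, Finset.sum_eq_single 0] at he1
            · simp [he1]
            · intro b _ hb; exact hc b hb
            · simp
          · simp [hc k hk, Finsupp.single_apply, Ne.symm hk]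
        obtain ⟨k, hk, hek⟩ := this
        rw [Finset.prod_eq_zero (Finset.mem_univ k), mul_zero]
        simp [hk, hek]
      · intro h; exact absurd hd h
    intro m
    induction m with
    | zero =>
      intro f _ d _
      simpa using Finsupp.le_degree 0 d
    | succ m ih =>
      rw [pow_succ, Ideal.mul_le]
      intro r hr s hs d hd
      have h1 := ih hr
      have h2 := key hs
      have hd' : d ∈ (r * s).support := hd
      obtain ⟨a, ha, b, hb, rfl⟩ := Finset.mem_add.mp (support_mul r s hd')
      have h3 : a 0 + m ≤ a.degree := h1 ha
      have h4 : b 0 + 1 ≤ b.degree := h2 hb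
      show (a + b) 0 + (m + 1) ≤ (a + b).degree
      simp only [map_add, Finsupp.add_apply]
      omega
  · intro h
    rw [F.as_sum]
    refine Ideal.sum_mem _ fun d hd => ?_
    have hdm := h d hd
    rw [monomial_eq, Finsupp.prod_fintype _ _ (by simp), Fin.prod_univ_succ]
    rw [Finsupp.degree_eq_sum, Fin.sum_univ_succ] at hdm
    refine Ideal.mul_mem_left _ _ (Ideal.mul_mem_left _ _ ?_)
    have hX : ∀ i : Fin n, (X i.succ : MvPolynomial (Fin (n + 1)) K) ∈
        pointIdeal (Pi.single 0 1 : Fin (n + 1) → K) := by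
      intro i
      exact Ideal.subset_span ⟨isHomogeneous_X _ _, by simp⟩
    have h1 : (∏ i : Fin n, (X i.succ : MvPolynomial (Fin (n + 1)) K) ^ d i.succ) ∈
        ∏ i : Fin n, pointIdeal (Pi.single 0 1 : Fin (n + 1) → K) ^ d i.succ :=
      Ideal.prod_mem_prod fun i _ => Ideal.pow_mem_pow (hX i) _
    rw [Finset.prod_pow_eq_pow_sum] at h1
    exact Ideal.pow_le_pow_right (by omega) h1

lemma e0_dim (K : Type) [Field K] (n m t : ℕ) (hm : 0 < m) (ht : m ≤ t + 1) :
    Module.finrank K ↥(homogeneousSubmodule (Fin (n + 1)) K t ⊓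
      (pointIdeal (Pi.single 0 1 : Fin (n + 1) → K) ^ m).restrictScalars K) +
      (m + n - 1).choose n = (t + n).choose n := by
  classical
  have h1 : homogeneousSubmodule (Fin (n + 1)) K t ⊓
      (pointIdeal (Pi.single 0 1 : Fin (n + 1) → K) ^ m).restrictScalars K =
      restrictSupport K {d : Fin (n + 1) →₀ ℕ | d.degree = t ∧ d 0 + m ≤ d.degree} := by
    ext F
    rw [Submodule.mem_inf, hom_eq_restrict, Submodule.restrictScalars_mem, mem_e0_pow,
      mem_restrictSupport_iff, mem_restrictSupport_iff]
    constructor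
    · rintro ⟨h1, h2⟩ d hd
      exact ⟨h1 hd, h2 d hd⟩
    · intro h
      exact ⟨fun d hd => (h hd).1, fun d hd => (h hd).2⟩
  rw [h1, finrank_restrict]
  have h2 : (m + n - 1).choose n =
      Nat.card ({d : Fin (n + 1) →₀ ℕ | d.degree = m - 1} : Set _) := by
    rw [← finrank_restrict K, ← hom_eq_restrict, finrank_hom]
    congr 1; omega
  have h3 : (t + n).choose n = Nat.card ({d : Fin (n + 1) →₀ ℕ | d.degree = t} : Set _) := by
    rw [← finrank_restrict K, ← hom_eq_restrict, finrank_hom]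
  rw [h2, h3]
  simp only [Nat.card_coe_set_eq]
  have h4 : {d : Fin (n + 1) →₀ ℕ | d.degree = t} =
      {d : Fin (n + 1) →₀ ℕ | d.degree = t ∧ d 0 + m ≤ d.degree} ∪
      (fun d => d + Finsupp.single 0 (t + 1 - m)) '' {d : Fin (n + 1) →₀ ℕ | d.degree = m - 1} := by
    ext d
    simp only [Set.mem_ofPred_eq, Set.mem_union, Set.mem_image]
    constructor
    · intro hd
      by_cases h : d 0 + m ≤ d.degree
      · exact Or.inl ⟨hd, h⟩
      · right
        have hle : Finsupp.single 0 (t + 1 - m) ≤ d := by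
          rw [Finsupp.single_le_iff]; omega
        obtain ⟨c, rfl⟩ := exists_add_of_le hle
        refine ⟨c, ?_, add_comm _ _⟩
        have hd' := hd
        simp only [map_add, Finsupp.degree_single] at hd'
        omega
    · rintro (h | ⟨c, hc, rfl⟩)
      · exact h.1
      · simp only [map_add, Finsupp.degree_single, hc]; omega
  rw [h4, Set.ncard_union_eq ?_ ((degset_finite _ t).subset fun d hd => hd.1)
    ((degset_finite _ _).image _), Set.ncard_image_of_injective]
  · intro a b h; exact add_right_cancel h
  · rw [Set.disjoint_left]
    rintro _ ⟨h5, h6⟩ ⟨c, hc, rfl⟩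
    have hc : c.degree = m - 1 := hc
    simp only [map_add, Finsupp.degree_single, hc, Finsupp.add_apply, Finsupp.single_eq_same] at h5 h6
    omega

/-- linear automorphism carrying the first basis vector to a given nonzero vector -/
lemma exists_equiv_e0 {K : Type} [Field K] {n : ℕ} (P : Fin (n + 1) → K) (hP : P ≠ 0) :
    ∃ A : (Fin (n + 1) → K) ≃ₗ[K] (Fin (n + 1) → K), A (Pi.single 0 1) = P := by
  have h0 : (Pi.single 0 1 : Fin (n + 1) → K) ≠ 0 := by simp
  obtain ⟨g, hg⟩ := Submodule.exists_linearEquiv_restrict_eq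
    ((LinearEquiv.toSpanNonzeroSingleton K _ _ h0).symm ≪≫ₗ
      LinearEquiv.toSpanNonzeroSingleton K _ P hP)
  refine ⟨g, ?_⟩
  have h1 := hg (LinearEquiv.toSpanNonzeroSingleton K _ _ h0 1)
  rw [LinearEquiv.trans_apply, LinearEquiv.symm_apply_apply] at h1
  simpa using h1.symm

lemma lsub_symm {K : Type} [Field K] {n : ℕ}
    (A : (Fin n → K) ≃ₗ[K] (Fin n → K)) (F : MvPolynomial (Fin n) K) :
    lsub A.symm.toLinearMap (lsub A.toLinearMap F) = F := by
  rw [lsub_comp]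
  simp [lsub_id]

lemma lsub_symm' {K : Type} [Field K] {n : ℕ}
    (A : (Fin n → K) ≃ₗ[K] (Fin n → K)) (F : MvPolynomial (Fin n) K) :
    lsub A.toLinearMap (lsub A.symm.toLinearMap F) = F := by
  rw [lsub_comp]
  simp [lsub_id]

lemma point_dim (K : Type) [Field K] (n m t : ℕ) (hm : 0 < m) (ht : m ≤ t + 1)
    (P : Fin (n + 1) → K) (hP : P ≠ 0) :
    Module.finrank K ↥(homogeneousSubmodule (Fin (n + 1)) K t ⊓
      (pointIdeal P ^ m).restrictScalars K) + (m + n - 1).choose n = (t + n).choose n := by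
  obtain ⟨A, hA⟩ := exists_equiv_e0 P hP
  rw [← e0_dim K n m t hm ht]
  congr 1
  have h1 : ∀ F ∈ homogeneousSubmodule (Fin (n + 1)) K t ⊓
      (pointIdeal P ^ m).restrictScalars K, lsub A.toLinearMap F ∈
      homogeneousSubmodule (Fin (n + 1)) K t ⊓
      (pointIdeal (Pi.single 0 1 : Fin (n + 1) → K) ^ m).restrictScalars K := by
    rintro F ⟨hF1, hF2⟩
    refine ⟨lsub_hom _ hF1, lsub_point _ _ _ ?_⟩
    simpa [hA] using hF2
  have h2 : ∀ F ∈ homogeneousSubmodule (Fin (n + 1)) K t ⊓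
      (pointIdeal (Pi.single 0 1 : Fin (n + 1) → K) ^ m).restrictScalars K,
      lsub A.symm.toLinearMap F ∈
      homogeneousSubmodule (Fin (n + 1)) K t ⊓
      (pointIdeal P ^ m).restrictScalars K := by
    rintro F ⟨hF1, hF2⟩
    refine ⟨lsub_hom _ hF1, lsub_point _ _ _ ?_⟩
    simpa [← hA] using hF2
  refine LinearEquiv.finrank_eq (LinearEquiv.ofLinearMap
    ((lsub A.toLinearMap).toLinearMap.restrict h1)
    ((lsub A.symm.toLinearMap).toLinearMap.restrict h2) ?_ ?_)
  · ext1 F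
    apply Subtype.ext
    exact lsub_symm' A _
  · ext1 F
    apply Subtype.ext
    exact lsub_symm A _

/-! ### Separation -/

/-- Simultaneous interpolation of jets by forms of degree `t`. -/
def JetSep {K : Type} [Field K] {N s : ℕ} (p : Fin s → Fin N → K) (m t : ℕ) : Prop :=
  ∀ f : Fin s → MvPolynomial (Fin N) K, (∀ x, (f x).IsHomogeneous t) →
    ∃ F : MvPolynomial (Fin N) K, F.IsHomogeneous t ∧ ∀ x, F - f x ∈ pointIdeal (p x) ^ m

lemma finrank_comap_inf {K V : Type} [Field K] [AddCommGroup V] [Module K V]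
    (S T : Submodule K V) :
    Module.finrank K (T.comap S.subtype) = Module.finrank K ↥(S ⊓ T) := by
  rw [← Submodule.map_comap_subtype]
  exact (Submodule.equivMapOfInjective S.subtype S.injective_subtype _).finrank_eq

/-- simultaneous quotient map -/
def quotAll {K V : Type} [Field K] [AddCommGroup V] [Module K V] {s : ℕ}
    (U : Fin s → Submodule K V) : V →ₗ[K] (∀ x, V ⧸ U x) :=
  LinearMap.pi fun x => (U x).mkQ

lemma quotAll_rank {K V : Type} [Field K] [AddCommGroup V] [Module K V] [FiniteDimensional K V]
    {s : ℕ} (U : Fin s → Submodule K V) :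
    Module.finrank K (LinearMap.range (quotAll U)) + Module.finrank K ↥(⨅ x, U x) =
      Module.finrank K V := by
  have h : LinearMap.ker (quotAll U) = ⨅ x, U x := by
    ext v
    rw [LinearMap.mem_ker, Submodule.mem_iInf, funext_iff]
    exact forall_congr' fun x => Submodule.Quotient.mk_eq_zero (U x)
  rw [← LinearMap.finrank_range_add_finrank_ker (quotAll U), h]

lemma quotAll_codim {K V : Type} [Field K] [AddCommGroup V] [Module K V] [FiniteDimensional K V]
    {s : ℕ} (U : Fin s → Submodule K V) (e : ℕ)
    (h : ∀ x, Module.finrank K (U x) + e = Module.finrank K V) :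
    Module.finrank K (∀ x, V ⧸ U x) = s * e := by
  rw [Module.finrank_pi_fintype]
  rw [Finset.sum_congr rfl (g := fun _ => e)]
  · simp
  · intro x _
    have h1 := Submodule.finrank_quotient_add_finrank (U x)
    have h2 := h x
    omega

lemma quotAll_surj {K V : Type} [Field K] [AddCommGroup V] [Module K V] [FiniteDimensional K V]
    {s : ℕ} (U : Fin s → Submodule K V) (e : ℕ)
    (h : ∀ x, Module.finrank K (U x) + e = Module.finrank K V) :
    Function.Surjective (quotAll U) ↔
      s * e + Module.finrank K ↥(⨅ x, U x) = Module.finrank K V := by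
  rw [← LinearMap.range_eq_top, ← quotAll_codim U e h, ← quotAll_rank U]
  constructor
  · intro h; rw [h, finrank_top]
  · intro h
    apply Submodule.eq_top_of_finrank_eq
    omega

/-- the degree `t` part of a power of a point ideal, inside the forms -/
def jetKer {K : Type} [Field K] {N : ℕ} (P : Fin N → K) (m t : ℕ) :
    Submodule K (homogeneousSubmodule (Fin N) K t) :=
  ((pointIdeal P ^ m).restrictScalars K).comap (homogeneousSubmodule (Fin N) K t).subtype

lemma sep_iff_surj {K : Type} [Field K] {N s : ℕ} (p : Fin s → Fin N → K) (m t : ℕ) :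
    JetSep p m t ↔ Function.Surjective (quotAll fun x => jetKer (p x) m t) := by
  constructor
  · intro h g
    choose f hf using fun x => Submodule.mkQ_surjective _ (g x)
    obtain ⟨F, hF, hF'⟩ := h (fun x => (f x : MvPolynomial (Fin N) K)) (fun x => (f x).2)
    refine ⟨⟨F, hF⟩, ?_⟩
    funext x
    rw [← hf x]
    exact (Submodule.Quotient.eq (jetKer (p x) m t)).mpr (hF' x)
  · intro h f hf
    obtain ⟨F, hF⟩ := h fun x => (jetKer (p x) m t).mkQ ⟨f x, hf x⟩
    refine ⟨F, F.2, fun x => ?_⟩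
    have := congrFun hF x
    exact (Submodule.Quotient.eq (jetKer (p x) m t)).mp this

lemma gradedDim_eq {K : Type} [Field K] {N s : ℕ} (p : Fin s → Fin N → K) (m t : ℕ) :
    gradedDim K (fatIdeal p (fun _ => m)) t =
      Module.finrank K ↥(⨅ x, jetKer (p x) m t) := by
  unfold gradedDim
  rw [← finrank_comap_inf]
  congr 2
  all_goals
    first
    | rfl
    | (ext F; simp [fatIdeal, jetKer, Submodule.mem_iInf])

lemma sep_iff_dim {K : Type} [Field K] {n s : ℕ} (p : Fin s → Fin (n + 1) → K)
    (hp : ∀ x, p x ≠ 0) (m t : ℕ) (hm : 0 < m) (ht : m ≤ t + 1) :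
    JetSep p m t ↔ s * (m + n - 1).choose n + gradedDim K (fatIdeal p (fun _ => m)) t =
      (t + n).choose n := by
  rw [sep_iff_surj, quotAll_surj _ ((m + n - 1).choose n), gradedDim_eq, finrank_hom]
  intro x
  rw [jetKer, finrank_comap_inf, point_dim K n m t hm ht _ (hp x), finrank_hom]

lemma gradedDim_le {K : Type} [Field K] {n : ℕ} (I : Ideal (MvPolynomial (Fin (n + 1)) K))
    (t : ℕ) : gradedDim K I t ≤ (t + n).choose n := by
  rw [← finrank_hom K]
  exact Submodule.finrank_mono inf_le_left

lemma sep_hilb {K : Type} [Field K] {n s : ℕ} (p : Fin s → Fin (n + 1) → K)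
    (hp : ∀ x, p x ≠ 0) (m t : ℕ) (hm : 0 < m) (ht : m ≤ t + 1) (h : JetSep p m t) :
    hilbFn K (fatIdeal p (fun _ => m)) t = s * (m + n - 1).choose n := by
  have := (sep_iff_dim p hp m t hm ht).mp h
  unfold hilbFn
  rw [finrank_hom]
  omega

lemma hilb_sep {K : Type} [Field K] {n s : ℕ} (p : Fin s → Fin (n + 1) → K)
    (hp : ∀ x, p x ≠ 0) (m t : ℕ) (hm : 0 < m) (hn : 0 < n) (hs : 0 < s)
    (h : hilbFn K (fatIdeal p (fun _ => m)) t = s * (m + n - 1).choose n) :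
    m ≤ t + 1 ∧ JetSep p m t := by
  have h1 := gradedDim_le (fatIdeal p (fun _ => m)) t
  unfold hilbFn at h
  rw [finrank_hom] at h
  have ht : m ≤ t + 1 := by
    by_contra hcon
    have h2 : (t + n).choose n < (m + n - 1).choose n := by
      calc (t + n).choose n < (t + n + 1).choose n := by
            obtain ⟨k, rfl⟩ : ∃ k, n = k + 1 := ⟨n - 1, by omega⟩
            rw [Nat.choose_succ_succ (t + (k + 1)) k, Nat.succ_eq_add_one]
            have : 0 < (t + (k + 1)).choose k := Nat.choose_pos (by omega)
            omega
        _ ≤ _ := Nat.choose_le_choose n (by omega)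
    have h3 : (m + n - 1).choose n ≤ s * (m + n - 1).choose n := Nat.le_mul_of_pos_left _ hs
    omega
  refine ⟨ht, ?_⟩
  rw [sep_iff_dim p hp m t hm ht]
  omega

/-! ### The combinatorial lemma -/

open Classical in
/-- The support of a space of relations. -/
def suppS {K : Type} [Field K] {s : ℕ} (Z : Submodule K (Fin s → K)) : Finset (Fin s) :=
  Finset.univ.filter fun x => ∃ φ ∈ Z, φ x ≠ 0

lemma mem_suppS {K : Type} [Field K] {s : ℕ} {Z : Submodule K (Fin s → K)} {x : Fin s} :
    x ∈ suppS Z ↔ ∃ φ ∈ Z, φ x ≠ 0 := by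
  simp [suppS]

lemma rel_ker_ne {K : Type} [Field K] {s : ℕ} (Z : Submodule K (Fin s → K))
    (h2 : Module.finrank K Z = 2) (a : Fin s) : ∃ ψ ∈ Z, ψ ≠ 0 ∧ ψ a = 0 := by
  let f : Z →ₗ[K] K := (LinearMap.proj a).comp Z.subtype
  have h1 := LinearMap.finrank_range_add_finrank_ker f
  have h3 : Module.finrank K (LinearMap.range f) ≤ 1 := by
    simpa using Submodule.finrank_le (LinearMap.range f)
  have h4 : LinearMap.ker f ≠ ⊥ := by
    intro h
    rw [h, finrank_bot] at h1
    omega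
  obtain ⟨ψ, hψ, hne⟩ := Submodule.exists_mem_ne_zero_of_ne_bot h4
  exact ⟨ψ, ψ.2, by simpa using hne, hψ⟩

lemma rel_ker_prop {K : Type} [Field K] {s : ℕ} (Z : Submodule K (Fin s → K))
    (h2 : Module.finrank K Z = 2) {a : Fin s} (ha : a ∈ suppS Z) {φ ψ : Fin s → K}
    (hφ : φ ∈ Z) (hψ : ψ ∈ Z) (hφa : φ a = 0) (hψa : ψ a = 0) (hψ0 : ψ ≠ 0) :
    ∃ c : K, φ = c • ψ := by
  let f : Z →ₗ[K] K := (LinearMap.proj a).comp Z.subtype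
  have h1 := LinearMap.finrank_range_add_finrank_ker f
  have h3 : LinearMap.range f ≠ ⊥ := by
    obtain ⟨χ, hχ, hχa⟩ := mem_suppS.mp ha
    intro h
    apply hχa
    have : f ⟨χ, hχ⟩ ∈ LinearMap.range f := LinearMap.mem_range_self _ _
    rw [h] at this
    exact (Submodule.mem_bot K).mp this
  have h4 : Module.finrank K (LinearMap.range f) ≠ 0 := by
    intro h; exact h3 (Submodule.finrank_eq_zero.mp h)
  have h5 : 0 < Module.finrank K (LinearMap.ker f) := by
    have h6 : LinearMap.ker f ≠ ⊥ := by
      intro h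
      have : (⟨ψ, hψ⟩ : Z) ∈ LinearMap.ker f := hψa
      rw [h] at this
      apply hψ0
      simpa using this
    rw [Nat.pos_iff_ne_zero]
    intro h; exact h6 (Submodule.finrank_eq_zero.mp h)
  have h6 : Module.finrank K (LinearMap.ker f) = 1 := by omega
  have h7 := (finrank_eq_one_iff_of_nonzero' (⟨⟨ψ, hψ⟩, hψa⟩ : LinearMap.ker f)
    (by intro h; exact hψ0 (congrArg (fun z : LinearMap.ker f => ((z : Z) : Fin s → K)) h))).mp h6
    ⟨⟨φ, hφ⟩, hφa⟩
  obtain ⟨c, hc⟩ := h7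
  refine ⟨c, ?_⟩
  have := congrArg (fun z : LinearMap.ker f => ((z : Z) : Fin s → K)) hc
  exact this.symm

lemma exists_pos_of_sum {s : ℕ} (A : Finset (Fin s)) (d : Fin s → ℕ) (h : 1 ≤ ∑ x ∈ A, d x) :
    ∃ a ∈ A, 1 ≤ d a := by
  by_contra hc
  push Not at hc
  have : ∑ x ∈ A, d x = 0 := Finset.sum_eq_zero fun x hx => by have := hc x hx; omega
  omega

lemma comb_lemma {K : Type} [Field K] {s : ℕ} (R : Submodule K (Fin s → K))
    (hR : Module.finrank K R ≤ 2) (d : Fin s → ℕ) (t i : ℕ) (hit : i < t)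
    (hcond : ∀ Z ≤ R, Z ≠ ⊥ → Module.finrank K Z * t + i ≤ ∑ x ∈ suppS Z, d x) :
    ∃ J : Finset (Fin s), J.card = Module.finrank K R ∧ (∀ x ∈ J, 1 ≤ d x) ∧
      (∀ φ ∈ R, (∀ x ∈ J, φ x = 0) → φ = 0) ∧
      ∀ Z ≤ R, Z ≠ ⊥ → Module.finrank K Z * t + i + (J ∩ suppS Z).card ≤
        (∑ x ∈ suppS Z, d x) + Module.finrank K Z := by
  classical
  have hpos : ∀ Z : Submodule K (Fin s → K), Z ≠ ⊥ → 1 ≤ Module.finrank K Z := by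
    intro Z hZ
    rw [Nat.one_le_iff_ne_zero]
    intro h; exact hZ (Submodule.finrank_eq_zero.mp h)
  have hmax : ∀ Z ≤ R, Module.finrank K Z = Module.finrank K R → Z = R :=
    fun Z hZ h => Submodule.eq_of_le_of_finrank_eq hZ h
  obtain h0 | h1 | h2 : Module.finrank K R = 0 ∨ Module.finrank K R = 1 ∨
    Module.finrank K R = 2 := by omega
  · have hb : R = ⊥ := Submodule.finrank_eq_zero.mp h0
    refine ⟨∅, by simp [h0], by simp, ?_, ?_⟩
    · intro φ hφ _; rw [hb] at hφ; simpa using hφ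
    · intro Z hZ hne
      rw [hb, le_bot_iff] at hZ
      exact absurd hZ hne
  · have hb : R ≠ ⊥ := by rintro rfl; simp at h1
    have hc := hcond R le_rfl hb
    obtain ⟨a, ha, hda⟩ := exists_pos_of_sum (suppS R) d (by rw [h1] at hc; omega)
    refine ⟨{a}, by simp [h1], by simpa using hda, ?_, ?_⟩
    · intro φ hφ h
      have h : φ a = 0 := h a (by simp)
      by_contra hne
      obtain ⟨χ, hχ, hχa⟩ := mem_suppS.mp ha
      obtain ⟨c, hc⟩ := (finrank_eq_one_iff_of_nonzero' (⟨φ, hφ⟩ : R)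
        (by intro h; apply hne; simpa using h)).mp h1 ⟨χ, hχ⟩
      have := congrArg (fun z : R => (z : Fin s → K) a) hc
      simp [h] at this
      exact hχa this.symm
    · intro Z hZ hne
      have := hcond Z hZ hne
      have h3 : ({a} ∩ suppS Z).card ≤ 1 := by
        simpa using Finset.card_le_card (Finset.inter_subset_left (s₁ := {a}) (s₂ := suppS Z))
      have := hpos Z hne
      omega
  · have hb : R ≠ ⊥ := by rintro rfl; simp at h2
    have hcR := hcond R le_rfl hb
    rw [h2] at hcR
    set N := suppS R with hN
    let cls : Fin s → Finset (Fin s) := fun x =>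
      N.filter fun y => ∀ φ ∈ R, φ x = 0 → φ y = 0
    have mem_cls : ∀ x y, y ∈ cls x ↔ y ∈ N ∧ ∀ φ ∈ R, φ x = 0 → φ y = 0 := by
      intro x y; simp [cls]
    obtain ⟨a, ha, hamax⟩ := Finset.exists_max_image (N.filter fun x => 1 ≤ d x)
      (fun x => ∑ y ∈ cls x, d y) (by
        obtain ⟨a, ha, hda⟩ := exists_pos_of_sum N d (by omega)
        exact ⟨a, by simp [ha, hda]⟩)
    obtain ⟨haN, hda⟩ := Finset.mem_filter.mp ha
    obtain ⟨ψ, hψ, hψ0, hψa⟩ := rel_ker_ne R h2 a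
    obtain ⟨b, hb', hbmax⟩ := Finset.exists_max_image (N.filter fun x => 1 ≤ d x ∧ x ∉ cls a)
      (fun x => ∑ y ∈ cls x, d y) (by
        have hZ : Submodule.span K {ψ} ≤ R := by
          rw [Submodule.span_le]; simpa using hψ
        have hZ0 : Submodule.span K {ψ} ≠ ⊥ := by simpa using hψ0
        have := hcond _ hZ hZ0
        have := hpos _ hZ0
        have h3 : t ≤ Module.finrank K (Submodule.span K {ψ}) * t := Nat.le_mul_of_pos_left _ this
        obtain ⟨b, hb, hdb⟩ := exists_pos_of_sum (suppS (Submodule.span K {ψ})) d (by omega)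
        obtain ⟨χ, hχ, hχb⟩ := mem_suppS.mp hb
        obtain ⟨c, rfl⟩ := Submodule.mem_span_singleton.mp hχ
        have hψb : ψ b ≠ 0 := by intro h; apply hχb; simp [h]
        refine ⟨b, ?_⟩
        rw [Finset.mem_filter]
        refine ⟨mem_suppS.mpr ⟨ψ, hψ, hψb⟩, hdb, ?_⟩
        intro hcon
        exact hψb (((mem_cls _ _).mp hcon).2 ψ hψ hψa))
    obtain ⟨hbN, hdb, hbcls⟩ := Finset.mem_filter.mp hb'
    have hbcls' : ∃ χ ∈ R, χ a = 0 ∧ χ b ≠ 0 := by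
      by_contra hc
      push Not at hc
      exact hbcls ((mem_cls _ _).mpr ⟨hbN, hc⟩)
    obtain ⟨χ, hχ, hχa, hχb⟩ := hbcls'
    have hab : a ≠ b := by rintro rfl; exact hχb hχa
    have hχ0 : χ ≠ 0 := by rintro rfl; exact hχb rfl
    -- elements of a class have the same kernel
    have hcls : ∀ x z φ, z ∈ cls x → φ ∈ R → φ z = 0 → φ x = 0 := by
      intro x z φ hz hφ hφz
      obtain ⟨hzN, hz⟩ := (mem_cls _ _).mp hz
      obtain ⟨ω, hω, hω0, hωx⟩ := rel_ker_ne R h2 x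
      obtain ⟨c, rfl⟩ := rel_ker_prop R h2 hzN hφ hω hφz (hz ω hω hωx) hω0
      simp [hωx]
    refine ⟨{a, b}, by rw [Finset.card_pair hab, h2], ?_, ?_, ?_⟩
    · intro x hx
      rw [Finset.mem_insert, Finset.mem_singleton] at hx
      rcases hx with rfl | rfl <;> assumption
    · intro φ hφ h
      have hφa : φ a = 0 := h a (by simp)
      have hφb : φ b = 0 := h b (by simp)
      obtain ⟨c, rfl⟩ := rel_ker_prop R h2 haN hφ hχ hφa hχa hχ0
      simp [hχb] at hφb
      simp [hφb]
    · intro Z hZ hne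
      have hZc := hcond Z hZ hne
      have hZp := hpos Z hne
      have hZ2 : Module.finrank K Z ≤ 2 := by rw [← h2]; exact Submodule.finrank_mono hZ
      have hcard : ({a, b} ∩ suppS Z).card ≤ 2 := by
        rw [← Finset.card_pair hab]
        exact Finset.card_le_card Finset.inter_subset_left
      by_cases hZ1 : Module.finrank K Z = 1
      swap
      · omega
      by_cases haZ : a ∈ suppS Z
      swap
      · have : ({a, b} ∩ suppS Z) ⊆ {b} := by
          intro x hx
          simp only [Finset.mem_inter, Finset.mem_insert, Finset.mem_singleton] at hx ⊢
          rcases hx.1 with rfl | rfl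
          · exact absurd hx.2 haZ
          · rfl
        have := Finset.card_le_card this
        rw [Finset.card_singleton] at this
        omega
      by_cases hbZ : b ∈ suppS Z
      swap
      · have : ({a, b} ∩ suppS Z) ⊆ {a} := by
          intro x hx
          simp only [Finset.mem_inter, Finset.mem_insert, Finset.mem_singleton] at hx ⊢
          rcases hx.1 with rfl | rfl
          · rfl
          · exact absurd hx.2 hbZ
        have := Finset.card_le_card this
        rw [Finset.card_singleton] at this
        omega
      suffices h : t + i + 1 ≤ ∑ x ∈ suppS Z, d x by rw [hZ1]; omega
      by_contra hcon
      obtain ⟨φ, hφ, hφ0⟩ := Submodule.exists_mem_ne_zero_of_ne_bot hne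
      have hZall : ∀ x, x ∈ suppS Z ↔ φ x ≠ 0 := by
        intro x
        rw [mem_suppS]
        constructor
        · rintro ⟨ω, hω, hωx⟩ h
          obtain ⟨c, hc⟩ := (finrank_eq_one_iff_of_nonzero' (⟨φ, hφ⟩ : Z)
            (by intro h; apply hφ0; simpa using h)).mp hZ1 ⟨ω, hω⟩
          have := congrArg (fun z : Z => (z : Fin s → K) x) hc
          simp [h] at this
          exact hωx this.symm
        · intro h; exact ⟨φ, hφ, h⟩
      have hφR := hZ hφ
      have hφa := (hZall a).mp haZ
      have hφb := (hZall b).mp hbZ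
      have hsub : suppS Z ⊆ N := fun x hx => mem_suppS.mpr ⟨φ, hφR, (hZall x).mp hx⟩
      have hsd := Finset.sum_sdiff (f := d) hsub
      obtain ⟨y, hy, hdy⟩ := exists_pos_of_sum (N \ suppS Z) d (by omega)
      obtain ⟨hyN, hyZ⟩ := Finset.mem_sdiff.mp hy
      have hφy : φ y = 0 := by by_contra h; exact hyZ ((hZall y).mpr h)
      have hsubc : N \ suppS Z ⊆ cls y := by
        intro z hz
        obtain ⟨hzN, hzZ⟩ := Finset.mem_sdiff.mp hz
        refine (mem_cls _ _).mpr ⟨hzN, fun ω hω hωy => ?_⟩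
        obtain ⟨c, rfl⟩ := rel_ker_prop R h2 hyN hω hφR hωy hφy hφ0
        have hφz : φ z = 0 := by by_contra h; exact hzZ ((hZall z).mpr h)
        simp [hφz]
      have h3 : ∑ x ∈ N \ suppS Z, d x ≤ ∑ x ∈ cls y, d x := Finset.sum_le_sum_of_subset hsubc
      have h4 : ∑ x ∈ cls y, d x ≤ ∑ x ∈ cls a, d x := hamax y (by simp [hyN, hdy])
      have h5 : ∑ x ∈ cls y, d x ≤ ∑ x ∈ cls b, d x := hbmax y (by
        rw [Finset.mem_filter]
        exact ⟨hyN, hdy, fun h => hφa (hcls a y φ h hφR hφy)⟩)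
      have hdisj : Disjoint (cls a) (cls b) := by
        rw [Finset.disjoint_left]
        intro z hza hzb
        exact hχb (hcls b z χ hzb hχ (((mem_cls _ _).mp hza).2 χ hχ hχa))
      have hsub2 : cls a ∪ cls b ⊆ suppS Z := by
        intro z hz
        rw [hZall]
        intro hφz
        rcases Finset.mem_union.mp hz with h | h
        · exact hφa (hcls a z φ h hφR hφz)
        · exact hφb (hcls b z φ h hφR hφz)
      have h6 := Finset.sum_le_sum_of_subset (f := d) hsub2
      rw [Finset.sum_union hdisj] at h6
      omega

/-! ### Linear forms -/

/-- The linear form attached to a functional. -/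
def linF {K : Type} [Field K] {N : ℕ} :
    ((Fin N → K) →ₗ[K] K) →ₗ[K] MvPolynomial (Fin N) K where
  toFun l := ∑ k, C (l (Pi.single k 1)) * X k
  map_add' a b := by simp [add_mul, Finset.sum_add_distrib]
  map_smul' a b := by simp [Finset.smul_sum, smul_eq_C_mul, mul_assoc]

lemma linF_apply {K : Type} [Field K] {N : ℕ} (l : (Fin N → K) →ₗ[K] K) :
    linF l = ∑ k, C (l (Pi.single k 1)) * X k := rfl

lemma linF_hom {K : Type} [Field K] {N : ℕ} (l : (Fin N → K) →ₗ[K] K) :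
    (linF l).IsHomogeneous 1 :=
  IsHomogeneous.sum _ _ _ fun i _ => isHomogeneous_C_mul_X _ _

lemma eval_linF {K : Type} [Field K] {N : ℕ} (l : (Fin N → K) →ₗ[K] K) (z : Fin N → K) :
    eval z (linF l) = l z := by
  rw [linF_apply]
  simp only [map_sum, map_mul, eval_C, eval_X]
  conv_rhs => rw [show z = ∑ i, z i • (Pi.single i 1 : Fin N → K) by
      ext j; simp [Finset.sum_apply, Pi.single_apply]]
  simp [mul_comm]

lemma linF_mem {K : Type} [Field K] {N : ℕ} (l : (Fin N → K) →ₗ[K] K) (z : Fin N → K)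
    (h : l z = 0) : linF l ∈ pointIdeal z :=
  Ideal.subset_span ⟨linF_hom l, by rw [eval_linF, h]⟩

lemma X_eq_linF {K : Type} [Field K] {N : ℕ} (k : Fin N) :
    (X k : MvPolynomial (Fin N) K) = linF (LinearMap.proj k) := by
  rw [linF_apply, Finset.sum_eq_single k]
  · simp
  · intro b _ hb; simp [hb.symm]
  · simp

lemma prod_linF_hom {K : Type} [Field K] {N : ℕ} (L : List ((Fin N → K) →ₗ[K] K)) :
    ((L.map linF).prod).IsHomogeneous L.length := by
  induction L with
  | nil => simpa using isHomogeneous_one _ _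
  | cons a L ih =>
    simp only [List.map_cons, List.prod_cons, List.length_cons]
    rw [add_comm]
    exact (linF_hom a).mul ih

lemma prod_linF_mem {K : Type} [Field K] {N : ℕ} (P : Fin N → K)
    (L : List ((Fin N → K) →ₗ[K] K)) (hL : ∀ l ∈ L, l P = 0) :
    (L.map linF).prod ∈ pointIdeal P ^ L.length := by
  induction L with
  | nil => simp
  | cons a L ih =>
    simp only [List.map_cons, List.prod_cons, List.length_cons]
    rw [pow_succ']
    exact Ideal.mul_mem_mul (linF_mem a P (hL a (by simp))) (ih fun l hl => hL l (by simp [hl]))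

/-! ### The filtration at a point -/

/-- generators of the filtration -/
def filtGen {K : Type} [Field K] {N : ℕ} (P : Fin N → K) (u : (Fin N → K) →ₗ[K] K)
    (t k : ℕ) : Set (MvPolynomial (Fin N) K) :=
  {f | ∃ L : List ((Fin N → K) →ₗ[K] K), k ≤ L.length ∧ L.length ≤ t ∧ (∀ l ∈ L, l P = 0) ∧
    f = linF u ^ (t - L.length) * (L.map linF).prod}

/-- The filtration of the forms of degree `t` by order of vanishing at `P`. -/
def filt {K : Type} [Field K] {N : ℕ} (P : Fin N → K) (u : (Fin N → K) →ₗ[K] K)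
    (t k : ℕ) : Submodule K (MvPolynomial (Fin N) K) :=
  Submodule.span K (filtGen P u t k)

lemma filt_mono {K : Type} [Field K] {N : ℕ} (P : Fin N → K) (u : (Fin N → K) →ₗ[K] K)
    (t : ℕ) {k k' : ℕ} (h : k ≤ k') : filt P u t k' ≤ filt P u t k := by
  apply Submodule.span_mono
  rintro f ⟨L, h1, h2⟩
  exact ⟨L, by omega, h2⟩

lemma filt_hom {K : Type} [Field K] {N : ℕ} (P : Fin N → K) (u : (Fin N → K) →ₗ[K] K)
    (t k : ℕ) : filt P u t k ≤ homogeneousSubmodule (Fin N) K t := by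
  rw [filt, Submodule.span_le]
  rintro f ⟨L, h1, h2, h3, rfl⟩
  have := ((linF_hom u).pow (t - L.length)).mul (prod_linF_hom L)
  rw [show 1 * (t - L.length) + L.length = t by omega] at this
  exact this

lemma filt_point {K : Type} [Field K] {N : ℕ} (P : Fin N → K) (u : (Fin N → K) →ₗ[K] K)
    (t k : ℕ) : filt P u t k ≤ (pointIdeal P ^ k).restrictScalars K := by
  rw [filt, Submodule.span_le]
  rintro f ⟨L, h1, h2, h3, rfl⟩
  exact Ideal.mul_mem_left _ _ (Ideal.pow_le_pow_right h1 (prod_linF_mem P L h3))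

lemma filt_mul_kill {K : Type} [Field K] {N : ℕ} (P : Fin N → K) (u : (Fin N → K) →ₗ[K] K)
    (t k : ℕ) (l : (Fin N → K) →ₗ[K] K) (hl : l P = 0) {f : MvPolynomial (Fin N) K}
    (hf : f ∈ filt P u t k) : linF l * f ∈ filt P u (t + 1) (k + 1) := by
  suffices h : filt P u t k ≤
      (filt P u (t + 1) (k + 1)).comap (LinearMap.mulLeft K (linF l)) from h hf
  rw [filt, Submodule.span_le]
  rintro f ⟨L, h1, h2, h3, rfl⟩
  apply Submodule.subset_span
  refine ⟨l :: L, by simpa using h1, by simpa using h2, ?_, ?_⟩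
  · intro l' hl'
    rcases List.mem_cons.mp hl' with rfl | h
    · exact hl
    · exact h3 _ h
  · simp only [List.length_cons, List.map_cons, List.prod_cons, LinearMap.mulLeft_apply]
    rw [show t + 1 - (L.length + 1) = t - L.length by omega]
    ring

lemma filt_mul_u {K : Type} [Field K] {N : ℕ} (P : Fin N → K) (u : (Fin N → K) →ₗ[K] K)
    (t k : ℕ) {f : MvPolynomial (Fin N) K}
    (hf : f ∈ filt P u t k) : linF u * f ∈ filt P u (t + 1) k := by
  suffices h : filt P u t k ≤
      (filt P u (t + 1) k).comap (LinearMap.mulLeft K (linF u)) from h hf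
  rw [filt, Submodule.span_le]
  rintro f ⟨L, h1, h2, h3, rfl⟩
  apply Submodule.subset_span
  refine ⟨L, h1, by omega, h3, ?_⟩
  simp only [LinearMap.mulLeft_apply]
  rw [show t + 1 - L.length = (t - L.length) + 1 by omega]
  ring

lemma filt_mul {K : Type} [Field K] {N : ℕ} (P : Fin N → K) (u : (Fin N → K) →ₗ[K] K)
    (hu : u P = 1) (t k : ℕ) (l : (Fin N → K) →ₗ[K] K) {f : MvPolynomial (Fin N) K}
    (hf : f ∈ filt P u t k) : linF l * f ∈ filt P u (t + 1) k := by
  have h : linF l = l P • linF u + linF (l - l P • u) := by simp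
  rw [h, add_mul, smul_mul_assoc]
  refine Submodule.add_mem _ (Submodule.smul_mem _ _ (filt_mul_u P u t k hf)) ?_
  exact filt_mono P u _ (Nat.le_succ k) (filt_mul_kill P u t k _ (by simp [hu]) hf)

lemma hom_le_filt {K : Type} [Field K] {N : ℕ} (P : Fin N → K) (u : (Fin N → K) →ₗ[K] K)
    (hu : u P = 1) (t : ℕ) : homogeneousSubmodule (Fin N) K t ≤ filt P u t 0 := by
  have hmon : ∀ (t : ℕ) (d : Fin N →₀ ℕ), d.degree = t →
      (monomial d 1 : MvPolynomial (Fin N) K) ∈ filt P u t 0 := by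
    intro t
    induction t with
    | zero =>
      intro d hd
      have : d = 0 := (Finsupp.degree_eq_zero_iff d).mp hd
      subst this
      exact Submodule.subset_span ⟨[], by simp⟩
    | succ t ih =>
      intro d hd
      have : ∃ k, d k ≠ 0 := by
        by_contra hc
        push Not at hc
        have : d = 0 := by ext k; simp [hc k]
        subst this
        simp at hd
      obtain ⟨k, hk⟩ := this
      obtain ⟨c, rfl⟩ := exists_add_of_le (show Finsupp.single k 1 ≤ d by
        rw [Finsupp.single_le_iff]; omega)
      have hc : c.degree = t := by
        simp only [map_add, Finsupp.degree_single] at hd; omega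
      rw [show (monomial (Finsupp.single k 1 + c) 1 : MvPolynomial (Fin N) K) =
        X k * monomial c 1 by rw [X, monomial_mul, one_mul], X_eq_linF]
      exact filt_mul P u hu t 0 _ (ih c hc)
  intro F hF
  rw [F.as_sum]
  refine Submodule.sum_mem _ fun d hd => ?_
  have hdeg : d.degree = t := by
    by_contra hne
    exact (mem_support_iff.mp hd) (IsHomogeneous.coeff_eq_zero hF hne)
  have := (filt P u t 0).smul_mem (coeff d F) (hmon t d hdeg)
  rwa [smul_monomial, smul_eq_mul, mul_one] at this

/-! ### Dual bases -/

lemma dual_family {K : Type} [Field K] {n s : ℕ} (p : Fin s → Fin (n + 1) → K)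
    (hspan : Submodule.span K (Set.range p) = ⊤) (J : Finset (Fin s))
    (hJ : J.card = Module.finrank K (LinearMap.ker (Fintype.linearCombination K p)))
    (hJ0 : ∀ φ ∈ LinearMap.ker (Fintype.linearCombination K p), (∀ x ∈ J, φ x = 0) → φ = 0) :
    ∃ w : Fin s → ((Fin (n + 1) → K) →ₗ[K] K),
      (∀ y ∉ J, w y (p y) = 1) ∧ (∀ y ∉ J, ∀ z ∉ J, z ≠ y → w y (p z) = 0) ∧
      ∀ l : (Fin (n + 1) → K) →ₗ[K] K, l = ∑ y ∈ Jᶜ, l (p y) • w y := by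
  classical
  have hr := LinearMap.finrank_range_add_finrank_ker (Fintype.linearCombination K p)
  rw [Fintype.range_linearCombination, hspan, finrank_top] at hr
  simp only [Module.finrank_fintype_fun_eq_card, Fintype.card_fin] at hr
  let v : {y // y ∉ J} → (Fin (n + 1) → K) := fun y => p y
  have hli : LinearIndependent K v := by
    rw [Fintype.linearIndependent_iff]
    intro g hg i
    let φ : Fin s → K := fun x => if h : x ∉ J then g ⟨x, h⟩ else 0
    have h1 : φ ∈ LinearMap.ker (Fintype.linearCombination K p) := by
      rw [LinearMap.mem_ker, Fintype.linearCombination_apply, ← hg]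
      rw [← Fintype.sum_subtype_add_sum_subtype (fun x => x ∉ J) (fun x => φ x • p x)]
      rw [Finset.sum_eq_zero (s := (Finset.univ : Finset {x // ¬ x ∉ J})), add_zero]
      · refine Finset.sum_congr rfl fun x _ => ?_
        simp [φ, x.2, v]
      · intro x _
        simp [φ, x.2]
    have h2 : φ = 0 := hJ0 φ h1 (by intro x hx; simp [φ, hx])
    have := congrFun h2 i
    simpa [φ, i.2] using this
  have hcard : Fintype.card {y // y ∉ J} = Module.finrank K (Fin (n + 1) → K) := by
    rw [Fintype.card_subtype_compl]
    simp
    omega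
  have : Nonempty {y // y ∉ J} := by
    rw [← Fintype.card_pos_iff, hcard]; simp
  let b := basisOfLinearIndependentOfCardEqFinrank hli hcard
  have hb : ∀ y, b y = p y := by intro y; simp [b, v]
  let w : Fin s → ((Fin (n + 1) → K) →ₗ[K] K) := fun y => if h : y ∉ J then b.coord ⟨y, h⟩ else 0
  have hw : ∀ y (hy : y ∉ J), w y = b.coord ⟨y, hy⟩ := by intro y hy; simp [w, hy]
  have hw1 : ∀ y ∉ J, w y (p y) = 1 := by
    intro y hy
    rw [hw y hy, ← hb ⟨y, hy⟩]
    simp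
  have hw0 : ∀ y ∉ J, ∀ z ∉ J, z ≠ y → w y (p z) = 0 := by
    intro y hy z hz hne
    rw [hw y hy, ← hb ⟨z, hz⟩]
    simp [Finsupp.single_apply, hne]
  refine ⟨w, hw1, hw0, ?_⟩
  intro l
  apply b.ext
  rintro ⟨z, hz⟩
  rw [hb]
  simp only [LinearMap.sum_apply, LinearMap.smul_apply, smul_eq_mul]
  rw [Finset.sum_eq_single z]
  · rw [hw1 z hz, mul_one]
  · intro y hy hne
    rw [hw0 y (by simpa using hy) z hz hne.symm, mul_zero]
  · intro h; simp [hz] at h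

/-! ### The key construction -/

/-- The numerical condition used in the construction. -/
def KCond {K : Type} [Field K] {N s : ℕ} (p : Fin s → Fin N → K) (x0 : Fin s)
    (t i : ℕ) (d : Fin s → ℕ) : Prop :=
  d x0 = 0 ∧ (∀ x, x ≠ x0 → i ≤ d x) ∧
    ∀ Z ≤ LinearMap.ker (Fintype.linearCombination K p), Z ≠ ⊥ →
      Module.finrank K Z * t + i ≤ ∑ x ∈ suppS Z, d x

open Classical in
/-- lowering `d` on a set -/
def dropOn {s : ℕ} (J : Finset (Fin s)) (d : Fin s → ℕ) : Fin s → ℕ :=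
  fun x => d x - if x ∈ J then 1 else 0

lemma dropOn_mem {s : ℕ} {J : Finset (Fin s)} (d : Fin s → ℕ) {x : Fin s} (h : x ∈ J) :
    dropOn J d x = d x - 1 := by simp [dropOn, h]

lemma dropOn_not {s : ℕ} {J : Finset (Fin s)} (d : Fin s → ℕ) {x : Fin s} (h : x ∉ J) :
    dropOn J d x = d x := by simp [dropOn, h]

lemma dropOn_sum {s : ℕ} (J S : Finset (Fin s)) (d : Fin s → ℕ) (h : ∀ x ∈ J, 1 ≤ d x) :
    ∑ x ∈ S, dropOn J d x + (J ∩ S).card = ∑ x ∈ S, d x := by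
  classical
  rw [Finset.inter_comm, ← Finset.filter_mem_eq_inter, Finset.card_filter,
    ← Finset.sum_add_distrib]
  refine Finset.sum_congr rfl fun x _ => ?_
  by_cases hx : x ∈ J
  · have := h x hx
    rw [dropOn_mem d hx, if_pos hx]; omega
  · rw [dropOn_not d hx, if_neg hx, add_zero]

/-- the order of vanishing after multiplying by a linear form -/
lemma mul_linF_order {K : Type} [Field K] {N s : ℕ} (p : Fin s → Fin N → K)
    (J : Finset (Fin s)) (d : Fin s → ℕ) (hd : ∀ x ∈ J, 1 ≤ d x) (t : ℕ) (y : Fin s)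
    (l : (Fin N → K) →ₗ[K] K) (hl : y ∉ J → l (p y) = 0) {F : MvPolynomial (Fin N) K}
    (hF : F ∈ pointIdeal (p y) ^ (t - dropOn J d y)) :
    linF l * F ∈ pointIdeal (p y) ^ (t + 1 - d y) := by
  by_cases hy : y ∈ J
  · have := hd y hy
    rw [dropOn_mem d hy, show t - (d y - 1) = t + 1 - d y by omega] at hF
    exact Ideal.mul_mem_left _ _ hF
  · rw [dropOn_not d hy] at hF
    have := Ideal.mul_mem_mul (linF_mem l (p y) (hl hy)) hF
    rw [← pow_succ'] at this
    exact Ideal.pow_le_pow_right (by omega) this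

lemma key_construction {K : Type} [Field K] {n s : ℕ} (p : Fin s → Fin (n + 1) → K)
    (hspan : Submodule.span K (Set.range p) = ⊤)
    (hR : Module.finrank K (LinearMap.ker (Fintype.linearCombination K p)) ≤ 2)
    (x0 : Fin s) (u : (Fin (n + 1) → K) →ₗ[K] K) (hu : u (p x0) = 1) :
    ∀ (t i : ℕ) (d : Fin s → ℕ), i ≤ t → KCond p x0 t i d →
      ∀ L : List ((Fin (n + 1) → K) →ₗ[K] K), L.length = i → (∀ l ∈ L, l (p x0) = 0) →
      ∃ F : MvPolynomial (Fin (n + 1)) K, F.IsHomogeneous t ∧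
        (∀ x, x ≠ x0 → F ∈ pointIdeal (p x) ^ (t - d x)) ∧
        F - linF u ^ (t - i) * (L.map linF).prod ∈ filt (p x0) u t (i + 1) := by
  classical
  intro t
  have base : ∀ (t i : ℕ) (d : Fin s → ℕ), i = t → KCond p x0 t i d →
      ∀ L : List ((Fin (n + 1) → K) →ₗ[K] K), L.length = i → (∀ l ∈ L, l (p x0) = 0) →
      ∃ F : MvPolynomial (Fin (n + 1)) K, F.IsHomogeneous t ∧
        (∀ x, x ≠ x0 → F ∈ pointIdeal (p x) ^ (t - d x)) ∧
        F - linF u ^ (t - i) * (L.map linF).prod ∈ filt (p x0) u t (i + 1) := by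
    rintro t i d rfl ⟨hd0, hd1, hd2⟩ L hL hLk
    refine ⟨(L.map linF).prod, ?_, ?_, ?_⟩
    · rw [← hL]; exact prod_linF_hom L
    · intro x hx
      have := hd1 x hx
      rw [show i - d x = 0 by omega]
      simp
    · simp
  induction t with
  | zero =>
    intro i d hi
    exact base 0 i d (by omega)
  | succ t ih =>
    intro i d hi hcond L hL hLk
    by_cases hit : i = t + 1
    · exact base _ i d hit hcond L hL hLk
    obtain ⟨hd0, hd1, hd2⟩ := hcond
    obtain ⟨J, hJc, hJd, hJ0, hJZ⟩ := comb_lemma _ hR d (t + 1) i (by omega) hd2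
    obtain ⟨w, hw1, hw0, hwl⟩ := dual_family p hspan J hJc hJ0
    have hx0 : x0 ∉ J := fun h => by have := hJd x0 h; omega
    rcases Nat.eq_zero_or_pos i with rfl | hipos
    · have hc' : KCond p x0 t 0 (dropOn J d) := by
        refine ⟨by rw [dropOn_not d hx0, hd0], fun _ _ => Nat.zero_le _, fun Z hZ hne => ?_⟩
        have h1 := hJZ Z hZ hne
        have h2 := dropOn_sum J (suppS Z) d hJd
        rw [Nat.mul_succ] at h1
        omega
      obtain ⟨F, hF1, hF2, hF3⟩ := ih 0 _ (Nat.zero_le _) hc' [] rfl (by simp)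
      refine ⟨linF (w x0) * F, ?_, ?_, ?_⟩
      · rw [add_comm t 1]; exact (linF_hom _).mul hF1
      · intro x hx
        exact mul_linF_order p J d hJd t x _ (fun hxJ => hw0 x0 hx0 x hxJ hx) (hF2 x hx)
      · have hLn : L = [] := List.length_eq_zero_iff.mp hL
        subst hLn
        simp only [List.map_nil, List.prod_nil, mul_one, tsub_zero, zero_add] at hF3 ⊢
        have h1 := filt_mul (p x0) u hu t 1 (w x0) hF3
        have h2 : linF (w x0 - u) * linF u ^ t ∈ filt (p x0) u (t + 1) (0 + 1) := by
          apply filt_mul_kill (p x0) u t 0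
          · simp [hw1 x0 hx0, hu]
          · exact Submodule.subset_span ⟨[], by simp⟩
        have h3 := Submodule.add_mem _ h1 h2
        convert h3 using 1
        simp only [map_sub]
        ring
    · obtain ⟨l, L', rfl⟩ : ∃ l L', L = l :: L' := by
        cases L with
        | nil => simp at hL; omega
        | cons a L' => exact ⟨a, L', rfl⟩
      have hlk : l (p x0) = 0 := hLk l (by simp)
      have hL'k : ∀ l' ∈ L', l' (p x0) = 0 := fun l' h => hLk l' (by simp [h])
      have hL' : L'.length = i - 1 := by simp at hL; omega
      have hF : ∀ x : Fin s, ∃ F : MvPolynomial (Fin (n + 1)) K, x ∈ (insert x0 J)ᶜ →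
          F.IsHomogeneous t ∧
          (∀ y, y ≠ x0 → F ∈ pointIdeal (p y) ^ (t - dropOn (insert x J) d y)) ∧
          F - linF u ^ (t - (i - 1)) * (L'.map linF).prod ∈ filt (p x0) u t i := by
        intro x
        by_cases hx : x ∈ (insert x0 J)ᶜ
        swap
        · exact ⟨0, fun h => absurd h hx⟩
        simp only [Finset.mem_compl, Finset.mem_insert, not_or] at hx
        have hdx := hd1 x hx.1
        have hJd' : ∀ y ∈ insert x J, 1 ≤ d y := by
          intro y hy
          rcases Finset.mem_insert.mp hy with rfl | h
          · omega
          · exact hJd y h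
        have hc' : KCond p x0 t (i - 1) (dropOn (insert x J) d) := by
          refine ⟨by simp [dropOn, hd0], fun y hy => ?_, fun Z hZ hne => ?_⟩
          · have := hd1 y hy
            unfold dropOn
            split_ifs <;> omega
          have h1 := hJZ Z hZ hne
          have h2 := dropOn_sum (insert x J) (suppS Z) d hJd'
          have h3 : (insert x J ∩ suppS Z).card ≤ (J ∩ suppS Z).card + 1 := by
            refine le_trans (Finset.card_le_card (t := insert x (J ∩ suppS Z)) ?_)
              (Finset.card_insert_le _ _)
            intro z hz
            simp only [Finset.mem_inter, Finset.mem_insert] at hz ⊢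
            tauto
          rw [Nat.mul_succ] at h1
          omega
        obtain ⟨F, hF1, hF2, hF3⟩ := ih (i - 1) _ (by omega) hc' L' hL' hL'k
        rw [show i - 1 + 1 = i by omega] at hF3
        exact ⟨F, fun _ => ⟨hF1, hF2, hF3⟩⟩
      choose F hF using hF
      have hl : l = ∑ x ∈ (insert x0 J)ᶜ, l (p x) • w x := by
        conv_lhs => rw [hwl l]
        symm
        apply Finset.sum_subset
        · intro y hy
          simp only [Finset.mem_compl, Finset.mem_insert, not_or] at hy ⊢
          exact hy.2
        · intro y hy hy'
          simp only [Finset.mem_compl, Finset.mem_insert, not_or] at hy hy'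
          have : y = x0 := by by_contra h; exact hy' ⟨h, hy⟩
          rw [this, hlk, zero_smul]
      refine ⟨∑ x ∈ (insert x0 J)ᶜ, l (p x) • (linF (w x) * F x), ?_, ?_, ?_⟩
      · apply (homogeneousSubmodule (Fin (n + 1)) K (t + 1)).sum_mem
        intro x hx
        apply Submodule.smul_mem
        show (linF (w x) * F x).IsHomogeneous (t + 1)
        rw [add_comm t 1]
        exact (linF_hom _).mul (hF x hx).1
      · intro y hy
        apply ((pointIdeal (p y) ^ (t + 1 - d y)).restrictScalars K).sum_mem
        intro x hx
        apply Submodule.smul_mem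
        have hFx := (hF x hx).2.1 y hy
        simp only [Finset.mem_compl, Finset.mem_insert, not_or] at hx
        have hdx := hd1 x hx.1
        refine mul_linF_order p (insert x J) d ?_ t y _ ?_ hFx
        · intro y hy
          rcases Finset.mem_insert.mp hy with rfl | h
          · omega
          · exact hJd y h
        · intro hyJ
          simp only [Finset.mem_insert, not_or] at hyJ
          exact hw0 x hx.2 y hyJ.2 hyJ.1
      · have h1 : ∑ x ∈ (insert x0 J)ᶜ, l (p x) • (linF (w x) * (F x -
            linF u ^ (t - (i - 1)) * (L'.map linF).prod)) ∈ filt (p x0) u (t + 1) (i + 1) := by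
          apply Submodule.sum_mem
          intro x hx
          apply Submodule.smul_mem
          have hFx := (hF x hx).2.2
          simp only [Finset.mem_compl, Finset.mem_insert, not_or] at hx
          exact filt_mul_kill (p x0) u t i (w x) (hw0 x hx.2 x0 hx0 (Ne.symm hx.1)) hFx
        convert h1 using 1
        have h2 : linF l = ∑ x ∈ (insert x0 J)ᶜ, l (p x) • linF (w x) := by
          conv_lhs => rw [hl]
          simp only [map_sum, map_smul]
        simp only [List.map_cons, List.prod_cons, mul_sub, smul_sub, Finset.sum_sub_distrib]
        rw [h2, show t + 1 - i = t - (i - 1) by omega]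
        congr 1
        rw [Finset.sum_mul, Finset.mul_sum]
        refine Finset.sum_congr rfl fun x _ => ?_
        simp only [smul_eq_C_mul]
        ring

lemma sep_one {K : Type} [Field K] {n s : ℕ} (p : Fin s → Fin (n + 1) → K)
    (hspan : Submodule.span K (Set.range p) = ⊤)
    (hR : Module.finrank K (LinearMap.ker (Fintype.linearCombination K p)) ≤ 2)
    (hp : ∀ x, p x ≠ 0) (m t : ℕ) (hm : 0 < m) (hmt : 2 * m ≤ t + 1) (x0 : Fin s)
    (hZ : ∀ Z ≤ LinearMap.ker (Fintype.linearCombination K p), Z ≠ ⊥ →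
      Module.finrank K Z * t + m * (((suppS Z).erase x0).card + 1) ≤
        ((suppS Z).erase x0).card * t + 1)
    (f : MvPolynomial (Fin (n + 1)) K) (hf : f.IsHomogeneous t) :
    ∃ F : MvPolynomial (Fin (n + 1)) K, F.IsHomogeneous t ∧
      (∀ x, x ≠ x0 → F ∈ pointIdeal (p x) ^ m) ∧ F - f ∈ pointIdeal (p x0) ^ m := by
  classical
  obtain ⟨u, hu⟩ : ∃ u : (Fin (n + 1) → K) →ₗ[K] K, u (p x0) = 1 := by
    obtain ⟨k, hk⟩ := Function.ne_iff.mp (hp x0)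
    exact ⟨(p x0 k)⁻¹ • LinearMap.proj k, by simpa using inv_mul_cancel₀ hk⟩
  let d : Fin s → ℕ := fun x => if x = x0 then 0 else t - m
  have hcond : ∀ i, i + 1 ≤ m → KCond p x0 t i d := by
    intro i hi
    refine ⟨by simp [d], fun x hx => by simp [d, hx]; omega, fun Z hZR hne => ?_⟩
    have h1 := hZ Z hZR hne
    have h2 : ∑ x ∈ suppS Z, d x = ((suppS Z).erase x0).card * (t - m) := by
      rw [← Finset.sum_erase (f := d) (a := x0) (suppS Z) (by simp [d])]
      rw [Finset.sum_const_nat]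
      intro x hx
      simp [d, (Finset.mem_erase.mp hx).1]
    rw [h2]
    obtain ⟨c, rfl⟩ : ∃ c, t = m + c := ⟨t - m, by omega⟩
    rw [Nat.add_sub_cancel_left]
    nlinarith
  suffices h : ∀ j k, k + j = m → ∀ f ∈ filt (p x0) u t k,
      ∃ F : MvPolynomial (Fin (n + 1)) K, F.IsHomogeneous t ∧
      (∀ x, x ≠ x0 → F ∈ pointIdeal (p x) ^ m) ∧ F - f ∈ pointIdeal (p x0) ^ m from
    h m 0 (by omega) f (hom_le_filt _ _ hu t hf)
  intro j
  induction j with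
  | zero =>
    intro k hk f hf
    obtain rfl : k = m := by omega
    refine ⟨0, isHomogeneous_zero _ _ _, fun _ _ => Ideal.zero_mem _, ?_⟩
    rw [zero_sub, Ideal.neg_mem_iff]
    exact filt_point _ _ _ _ hf
  | succ j ih =>
    intro k hk f hf
    induction hf using Submodule.span_induction with
    | mem f hf =>
      obtain ⟨L, h1, h2, h3, rfl⟩ := hf
      rcases Nat.lt_or_ge k L.length with h4 | h4
      · exact ih (k + 1) (by omega) _ (Submodule.subset_span ⟨L, h4, h2, h3, rfl⟩)
      have hL : L.length = k := by omega
      obtain ⟨F, hF1, hF2, hF3⟩ := key_construction p hspan hR x0 u hu t k d (by omega)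
        (hcond k (by omega)) L hL h3
      obtain ⟨F', hF1', hF2', hF3'⟩ := ih (k + 1) (by omega) _ hF3
      refine ⟨F - F', hF1.sub hF1', fun x hx => ?_, ?_⟩
      · refine Ideal.sub_mem _ ?_ (hF2' x hx)
        have := hF2 x hx
        simp only [d, if_neg hx] at this
        rwa [show t - (t - m) = m by omega] at this
      · rw [hL]
        have := Ideal.neg_mem_iff _ |>.mpr hF3'
        convert this using 1
        ring
    | zero =>
      exact ⟨0, isHomogeneous_zero _ _ _, fun _ _ => Ideal.zero_mem _, by simp⟩
    | add a b _ _ ha hb =>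
      obtain ⟨F, hF1, hF2, hF3⟩ := ha
      obtain ⟨F', hF1', hF2', hF3'⟩ := hb
      refine ⟨F + F', hF1.add hF1', fun x hx => Ideal.add_mem _ (hF2 x hx) (hF2' x hx), ?_⟩
      convert Ideal.add_mem _ hF3 hF3' using 1
      ring
    | smul c a _ ha =>
      obtain ⟨F, hF1, hF2, hF3⟩ := ha
      refine ⟨C c * F, by simpa using (isHomogeneous_C _ c).mul hF1,
        fun x hx => Ideal.mul_mem_left _ _ (hF2 x hx), ?_⟩
      convert Ideal.mul_mem_left _ (C c) hF3 using 1
      rw [smul_eq_C_mul]; ring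

lemma sep_all {K : Type} [Field K] {n s : ℕ} (p : Fin s → Fin (n + 1) → K)
    (hspan : Submodule.span K (Set.range p) = ⊤)
    (hR : Module.finrank K (LinearMap.ker (Fintype.linearCombination K p)) ≤ 2)
    (hp : ∀ x, p x ≠ 0) (m t : ℕ) (hm : 0 < m) (hmt : 2 * m ≤ t + 1)
    (hZ : ∀ x0, ∀ Z ≤ LinearMap.ker (Fintype.linearCombination K p), Z ≠ ⊥ →
      Module.finrank K Z * t + m * (((suppS Z).erase x0).card + 1) ≤
        ((suppS Z).erase x0).card * t + 1) : JetSep p m t := by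
  classical
  intro f hf
  choose F hF1 hF2 hF3 using fun x => sep_one p hspan hR hp m t hm hmt x (hZ x) (f x) (hf x)
  refine ⟨∑ x, F x, IsHomogeneous.sum _ _ _ fun x _ => hF1 x, fun x => ?_⟩
  rw [← Finset.add_sum_erase _ _ (Finset.mem_univ x)]
  rw [add_sub_right_comm]
  refine Ideal.add_mem _ (hF3 x) (Ideal.sum_mem _ fun y hy => ?_)
  exact hF2 y x (Finset.ne_of_mem_erase hy).symm

/-! ### The Segre bound -/

lemma segre_ge {K : Type} [Field K] {n s : ℕ} (p : Fin s → Fin (n + 1) → K) (m : ℕ)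
    (Q : Finset (Fin s)) (j : ℕ) (hj1 : 1 ≤ j) (hjn : j ≤ n) (hQ : Q.Nonempty)
    (h : OnLinearSubspace p Q j) : m * Q.card ≤ j * segreBound n p (fun _ => m) + 1 := by
  classical
  have h1 : (∑ i ∈ Q, m + j - 2) / j ≤ segreBound n p (fun _ => m) := by
    unfold segreBound
    refine le_trans ?_ (Finset.le_sup (b := j) (Finset.mem_Icc.mpr ⟨hj1, hjn⟩))
    refine le_trans ?_ (Finset.le_sup (b := Q) (by simp))
    rw [if_pos ⟨hQ, h⟩]
  rw [Finset.sum_const, smul_eq_mul] at h1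
  have h2 := (Nat.div_lt_iff_lt_mul (by omega)).mp (Nat.lt_succ_of_le h1)
  rw [Nat.succ_mul, mul_comm _ j] at h2
  rw [mul_comm]
  omega

lemma segre_le {K : Type} [Field K] {n s : ℕ} (p : Fin s → Fin (n + 1) → K) (m t : ℕ)
    (hm : 0 < m)
    (h : ∀ (Q : Finset (Fin s)) (j : ℕ), 1 ≤ j → j ≤ n → Q.Nonempty → OnLinearSubspace p Q j →
      m * Q.card ≤ j * t + 1) : segreBound n p (fun _ => m) ≤ t := by
  classical
  unfold segreBound
  apply Finset.sup_le
  intro j hj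
  rw [Finset.mem_Icc] at hj
  apply Finset.sup_le
  intro Q _
  split_ifs with hQ
  · have h1 := h Q j hj.1 hj.2 hQ.1 hQ.2
    rw [Finset.sum_const, smul_eq_mul, mul_comm]
    have h2 : 1 ≤ m * Q.card := Nat.mul_pos hm (Finset.card_pos.mpr hQ.1)
    apply Nat.le_of_lt_succ
    rw [Nat.div_lt_iff_lt_mul (by omega), Nat.succ_mul, mul_comm t j]
    omega
  · exact Nat.zero_le _

lemma finrank_rel {K : Type} [Field K] {n s : ℕ} (p : Fin s → Fin (n + 1) → K)
    (hspan : Submodule.span K (Set.range p) = ⊤) :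
    n + 1 + Module.finrank K (LinearMap.ker (Fintype.linearCombination K p)) = s := by
  have hr := LinearMap.finrank_range_add_finrank_ker (Fintype.linearCombination K p)
  rw [Fintype.range_linearCombination, hspan, finrank_top] at hr
  simpa only [Module.finrank_fintype_fun_eq_card, Fintype.card_fin] using hr

/-- two distinct points span a plane -/
lemma two_le_finrank {K : Type} [Field K] {N s : ℕ} (p : Fin s → Fin N → K)
    (hdist : ProjDistinct p) {x y : Fin s} (hxy : x ≠ y) (W : Submodule K (Fin N → K))
    (hx : p x ∈ W) (hy : p y ∈ W) : 2 ≤ Module.finrank K W := by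
  by_contra hc
  have h1 : Module.finrank K W ≤ 1 := by omega
  obtain ⟨v, hv⟩ := (finrank_le_one_iff).mp h1
  obtain ⟨a, ha⟩ := hv ⟨p x, hx⟩
  obtain ⟨b, hb⟩ := hv ⟨p y, hy⟩
  have ha' : a • (v : Fin N → K) = p x := congrArg Subtype.val ha
  have hb' : b • (v : Fin N → K) = p y := congrArg Subtype.val hb
  have hb0 : b ≠ 0 := by
    rintro rfl
    rw [zero_smul] at hb'
    exact hdist.1 y hb'.symm
  apply hdist.2 x y hxy (a * b⁻¹)
  rw [← ha', ← hb', smul_smul, mul_assoc, inv_mul_cancel₀ hb0, mul_one]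

lemma finrank_span_le {K : Type} [Field K] {N s : ℕ} (p : Fin s → Fin N → K)
    (Z : Submodule K (Fin s → K)) (hZ : Z ≤ LinearMap.ker (Fintype.linearCombination K p))
    (Q : Finset (Fin s)) (hQ : suppS Z ⊆ Q) :
    Module.finrank K (Submodule.span K (p '' Q)) + Module.finrank K Z ≤ Q.card := by
  classical
  let v : Q → (Fin N → K) := fun y => p y
  have hr := LinearMap.finrank_range_add_finrank_ker (Fintype.linearCombination K v)
  rw [Fintype.range_linearCombination] at hr
  have h1 : Set.range v = p '' Q := by
    ext z; simp [v]
  rw [h1] at hr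
  simp only [Module.finrank_fintype_fun_eq_card, Fintype.card_coe] at hr
  have h2 : Module.finrank K Z ≤
      Module.finrank K (LinearMap.ker (Fintype.linearCombination K v)) := by
    have hz : ∀ φ ∈ Z, ∀ x ∉ Q, φ x = 0 := by
      intro φ hφ x hx
      by_contra h
      exact hx (hQ (mem_suppS.mpr ⟨φ, hφ, h⟩))
    let g : (Fin s → K) →ₗ[K] (Q → K) := LinearMap.funLeft K K (fun y : Q => (y : Fin s))
    have hg : ∀ φ ∈ Z, g φ ∈ LinearMap.ker (Fintype.linearCombination K v) := by
      intro φ hφ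
      have h3 := hZ hφ
      rw [LinearMap.mem_ker, Fintype.linearCombination_apply] at h3 ⊢
      rw [← h3, ← Finset.sum_subset (Finset.subset_univ Q)
        (fun x _ hx => by rw [hz φ hφ x hx, zero_smul])]
      rw [← Finset.sum_coe_sort Q (fun x => φ x • p x)]
      rfl
    refine LinearMap.finrank_le_finrank_of_injective (f := g.restrict hg) ?_
    intro φ ψ h
    apply Subtype.ext
    funext x
    by_cases hx : x ∈ Q
    · exact congrFun (congrArg Subtype.val h) ⟨x, hx⟩
    · rw [hz _ φ.2 x hx, hz _ ψ.2 x hx]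
  omega

lemma upper_bound {K : Type} [Field K] {n s : ℕ} (hs : s ≤ n + 3) (hn : 0 < n)
    (m : ℕ) (hm : 0 < m) (p : Fin s → Fin (n + 1) → K) (hdist : ProjDistinct p)
    (hspan : Submodule.span K (Set.range p) = ⊤) :
    hilbFn K (fatIdeal p (fun _ => m)) (segreBound n p (fun _ => m)) =
      s * (m + n - 1).choose n := by
  classical
  have hrel := finrank_rel p hspan
  set t := segreBound n p (fun _ => m) with ht
  have h2 : 2 * m ≤ t + 1 := by
    let x : Fin s := ⟨0, by omega⟩
    let y : Fin s := ⟨1, by omega⟩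
    have hxy : x ≠ y := by simp [x, y]
    have h := segre_ge p m {x, y} 1 le_rfl hn (by simp) ⟨Submodule.span K {p x, p y}, by
      have := finrank_span_finset_le_card (R := K) ({p x, p y} : Finset (Fin (n + 1) → K))
      have h2 := Finset.card_le_two (a := p x) (b := p y)
      simp only [Finset.coe_insert, Finset.coe_singleton] at this
      unfold Set.finrank at this
      omega, by
      intro i hi
      apply Submodule.subset_span
      simp only [Finset.mem_insert, Finset.mem_singleton] at hi
      rcases hi with rfl | rfl <;> simp⟩
    rw [Finset.card_pair hxy] at h
    omega
  apply sep_hilb p hdist.1 m t hm (by omega)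
  apply sep_all p hspan (by omega) hdist.1 m t hm h2
  intro x0 Z hZ hne
  have hZ1 : 1 ≤ Module.finrank K Z := by
    rw [Nat.one_le_iff_ne_zero]
    intro h; exact hne (Submodule.finrank_eq_zero.mp h)
  set A := (suppS Z).erase x0 with hA
  set Q := insert x0 A with hQ
  have hQc : Q.card = A.card + 1 := Finset.card_insert_of_notMem (by simp [hA])
  have hsub : suppS Z ⊆ Q := by
    intro x hx
    by_cases h : x = x0
    · simp [hQ, h]
    · simp [hQ, hA, h, hx]
  have h3 := finrank_span_le p Z hZ Q hsub
  set W := Submodule.span K (p '' Q) with hW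
  have hWm : ∀ x ∈ Q, p x ∈ W := fun x hx => Submodule.subset_span ⟨x, hx, rfl⟩
  have hx0W := hWm x0 (by simp [hQ])
  have hW1 : 1 ≤ Module.finrank K W := by
    rw [Nat.one_le_iff_ne_zero]
    intro h
    have h := Submodule.finrank_eq_zero.mp h
    rw [h] at hx0W
    exact hdist.1 x0 (by simpa using hx0W)
  have hAne : A.Nonempty := Finset.card_pos.mp (by omega)
  obtain ⟨y, hy⟩ := hAne
  have hW2 := two_le_finrank p hdist (Finset.ne_of_mem_erase hy) W
    (hWm y (by simp [hQ, hy])) hx0W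
  have hWn : Module.finrank K W ≤ n + 1 := by
    simpa using Submodule.finrank_le W
  have h4 := segre_ge p m Q (Module.finrank K W - 1) (by omega) (by omega) ⟨x0, by simp [hQ]⟩
    ⟨W, by omega, hWm⟩
  rw [hQc, ← ht] at h4
  have h5 : (Module.finrank K W - 1) * t + Module.finrank K Z * t ≤ A.card * t := by
    rw [← add_mul]
    exact Nat.mul_le_mul_right _ (by omega)
  omega

/-! ### Restriction to subspaces -/

lemma sep_restrict {K : Type} [Field K] {N M s q : ℕ} (p : Fin s → Fin N → K) (m t : ℕ)
    (h : JetSep p m t) (A : (Fin M → K) →ₗ[K] (Fin N → K)) (hA : Function.Injective A)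
    (α : Fin q → Fin s) (hα : Function.Injective α) (z : Fin q → Fin M → K)
    (hz : ∀ i, A (z i) = p (α i)) : JetSep z m t := by
  obtain ⟨B, hB⟩ := A.exists_leftInverse_of_injective (LinearMap.ker_eq_bot.mpr hA)
  intro f hf
  obtain ⟨F, hF1, hF2⟩ := h (Function.extend α (fun i => lsub B (f i)) 0) (by
    intro x
    by_cases hx : ∃ i, α i = x
    · obtain ⟨i, rfl⟩ := hx
      rw [hα.extend_apply]
      exact lsub_hom B (hf i)
    · rw [Function.extend_apply' _ _ _ hx]
      exact isHomogeneous_zero _ _ _)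
  refine ⟨lsub A F, lsub_hom A hF1, fun i => ?_⟩
  have h1 := hF2 (α i)
  rw [hα.extend_apply, ← hz i] at h1
  have h2 := lsub_point A (z i) m h1
  rwa [map_sub, lsub_comp, hB, lsub_id] at h2

lemma sep_subspace {K : Type} [Field K] {N s : ℕ} (p : Fin s → Fin N → K) (m t : ℕ)
    (h : JetSep p m t) (hdist : ProjDistinct p) (Q : Finset (Fin s)) (M : ℕ)
    (W : Submodule K (Fin N → K)) (hW : Module.finrank K W = M) (hQ : ∀ x ∈ Q, p x ∈ W) :
    ∃ z : Fin Q.card → Fin M → K, JetSep z m t ∧ ProjDistinct z ∧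
      (W = Submodule.span K (p '' Q) → Submodule.span K (Set.range z) = ⊤) := by
  let e : W ≃ₗ[K] (Fin M → K) := LinearEquiv.ofFinrankEq _ _ (by simp [hW])
  let A : (Fin M → K) →ₗ[K] (Fin N → K) := W.subtype ∘ₗ e.symm.toLinearMap
  have hAi : Function.Injective A := W.injective_subtype.comp e.symm.injective
  let α : Fin Q.card → Fin s := fun i => (Q.equivFin.symm i : Fin s)
  have hα : Function.Injective α := Subtype.val_injective.comp Q.equivFin.symm.injective
  have hαQ : ∀ i, α i ∈ Q := fun i => (Q.equivFin.symm i).2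
  let z : Fin Q.card → Fin M → K := fun i => e ⟨p (α i), hQ _ (hαQ i)⟩
  have hz : ∀ i, A (z i) = p (α i) := by
    intro i; simp [A, z]
  refine ⟨z, sep_restrict p m t h A hAi α hα z hz, ⟨?_, ?_⟩, ?_⟩
  · intro i hi
    apply hdist.1 (α i)
    rw [← hz i, hi, map_zero]
  · intro i j hij c hc
    apply hdist.2 (α i) (α j) (fun h => hij (hα h)) c
    rw [← hz i, ← hz j, hc, map_smul]
  · intro hWs
    apply Submodule.map_injective_of_injective hAi
    rw [Submodule.map_span, Submodule.map_top, ← Set.range_comp]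
    have h1 : LinearMap.range A = W := by
      simp [A, LinearMap.range_comp]
    have h2 : Set.range (A ∘ z) = p '' Q := by
      ext v
      simp only [Set.mem_range, Function.comp_apply, hz, Set.mem_image]
      constructor
      · rintro ⟨i, rfl⟩; exact ⟨α i, hαQ i, rfl⟩
      · rintro ⟨x, hx, rfl⟩
        exact ⟨Q.equivFin ⟨x, hx⟩, by simp [α]⟩
    rw [h1, h2, hWs]

lemma sep_count {K : Type} [Field K] {N s : ℕ} (p : Fin s → Fin N → K) (m t : ℕ)
    (hm : 0 < m) (ht : m ≤ t + 1)
    (h : JetSep p m t) (hdist : ProjDistinct p) (Q : Finset (Fin s)) (j : ℕ)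
    (W : Submodule K (Fin N → K)) (hW : Module.finrank K W = j + 1) (hQ : ∀ x ∈ Q, p x ∈ W) :
    Q.card * (m + j - 1).choose j ≤ (t + j).choose j := by
  obtain ⟨z, hz, hzd, _⟩ := sep_subspace p m t h hdist Q (j + 1) W hW hQ
  have := (sep_iff_dim z hzd.1 m t hm ht).mp hz
  omega

/-! ### Rational normal curves -/

lemma eval_hom_smul {K : Type} [Field K] {N t : ℕ} {F : MvPolynomial (Fin N) K}
    (hF : F.IsHomogeneous t) (c : K) (z : Fin N → K) :
    eval (fun i => c * z i) F = c ^ t * eval z F := by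
  rw [eval_eq', eval_eq', Finset.mul_sum]
  refine Finset.sum_congr rfl fun d hd => ?_
  have h1 : d.degree = t := by
    rw [Finsupp.degree_eq_weight_one]
    exact hF (mem_support_iff.mp hd)
  rw [← h1, Finsupp.degree_eq_sum]
  simp only [mul_pow, Finset.prod_mul_distrib, Finset.prod_pow_eq_pow_sum]
  ring

lemma eval_aeval_curve {K : Type} [Field K] {N : ℕ} (γ : Fin N → Polynomial K) (ρ : K)
    (f : MvPolynomial (Fin N) K) : (aeval γ f).eval ρ = eval (fun i => (γ i).eval ρ) f := by
  have h2 : (Polynomial.aeval ρ).comp (aeval γ : MvPolynomial (Fin N) K →ₐ[K] Polynomial K) =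
      aeval (fun i => (γ i).eval ρ) := by
    apply MvPolynomial.algHom_ext
    intro i
    simp
  have h3 := congrArg (fun g => g f) h2
  simp only [AlgHom.comp_apply, Polynomial.coe_aeval_eq_eval] at h3
  rw [h3, aeval_eq_eval]

lemma curve_order {K : Type} [Field K] {N : ℕ} (γ : Fin N → Polynomial K) (ρ c : K)
    (z : Fin N → K) (hγ : ∀ i, (γ i).eval ρ = c * z i) (m : ℕ) {F : MvPolynomial (Fin N) K}
    (hF : F ∈ pointIdeal z ^ m) : (Polynomial.X - Polynomial.C ρ) ^ m ∣ aeval γ F := by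
  have h1 : (pointIdeal z).map (aeval γ : MvPolynomial (Fin N) K →ₐ[K] Polynomial K) ≤
      Ideal.span {Polynomial.X - Polynomial.C ρ} := by
    rw [pointIdeal, Ideal.map_span, Ideal.span_le]
    rintro _ ⟨f, ⟨hf1, hf2⟩, rfl⟩
    rw [SetLike.mem_coe, Ideal.mem_span_singleton, Polynomial.dvd_iff_isRoot, Polynomial.IsRoot]
    simp only [eval_aeval_curve, hγ]
    rw [eval_hom_smul hf1, hf2, mul_zero]
  have h2 := Ideal.mem_map_of_mem (aeval γ : MvPolynomial (Fin N) K →ₐ[K] Polynomial K) hF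
  rw [Ideal.map_pow] at h2
  have h3 := Ideal.pow_right_mono h1 m h2
  rwa [Ideal.span_singleton_pow, Ideal.mem_span_singleton] at h3

open Classical in
lemma curve_bound {K : Type} [Field K] {N s : ℕ} (n : ℕ) (p : Fin s → Fin N → K) (m t : ℕ)
    (hm : 0 < m) (ht : m ≤ t + 1) (h : JetSep p m t) {ι : Type} [Fintype ι] (α : ι → Fin s)
    (hα : Function.Injective α) (γ : Fin N → Polynomial K) (hdeg : ∀ i, (γ i).natDegree ≤ n)
    (ν c : ι → K) (hν : Function.Injective ν)
    (hγ : ∀ x i, (γ i).eval (ν x) = c x * p (α x) i) (x₀ : ι)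
    (i₀ i₁ : Fin N) (h0 : (γ i₀).eval (ν x₀) ≠ 0) (g : Polynomial K)
    (h1 : γ i₁ = (Polynomial.X - Polynomial.C (ν x₀)) * g) (hg : g.eval (ν x₀) ≠ 0) :
    m * Fintype.card ι ≤ n * t + 1 := by
  obtain ⟨F, hF1, hF2⟩ := h (fun y => if y = α x₀ then X i₀ ^ (t + 1 - m) * X i₁ ^ (m - 1) else 0)
    (by
      intro y
      split_ifs
      · have := ((isHomogeneous_X K i₀).pow (t + 1 - m)).mul ((isHomogeneous_X K i₁).pow (m - 1))
        rwa [show 1 * (t + 1 - m) + 1 * (m - 1) = t by omega] at this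
      · exact isHomogeneous_zero _ _ _)
  set G : Polynomial K := aeval γ F with hG
  have hx0 : (Polynomial.X - Polynomial.C (ν x₀)) ^ m ∣
      G - γ i₀ ^ (t + 1 - m) * γ i₁ ^ (m - 1) := by
    have := curve_order γ (ν x₀) (c x₀) (p (α x₀)) (hγ x₀) m (hF2 (α x₀))
    simpa using this
  have hx : ∀ x, x ≠ x₀ → (Polynomial.X - Polynomial.C (ν x)) ^ m ∣ G := by
    intro x hx
    have := curve_order γ (ν x) (c x) (p (α x)) (hγ x) m (hF2 (α x))
    simpa [hα.eq_iff, hx] using this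
  have hne : G ≠ 0 := by
    intro hG0
    rw [hG0, zero_sub, dvd_neg, h1, mul_pow, mul_left_comm] at hx0
    obtain ⟨k, rfl⟩ : ∃ k, m = k + 1 := ⟨m - 1, by omega⟩
    rw [Nat.add_sub_cancel, pow_succ] at hx0
    have := (mul_dvd_mul_iff_left (pow_ne_zero k (Polynomial.X_sub_C_ne_zero (ν x₀)))).mp hx0
    rw [Polynomial.dvd_iff_isRoot] at this
    simp [h0, hg] at this
  let e : ι → ℕ := fun x => if x = x₀ then m - 1 else m
  have hdiv : ∏ x, (Polynomial.X - Polynomial.C (ν x)) ^ e x ∣ G := by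
    apply Finset.prod_dvd_of_coprime
    · intro x _ y _ hxy
      exact (Polynomial.pairwise_coprime_X_sub_C hν hxy).pow
    · intro x _
      by_cases hxx : x = x₀
      · subst hxx
        simp only [e, if_true]
        have h2 := (pow_dvd_pow (Polynomial.X - Polynomial.C (ν x)) (Nat.sub_le m 1)).trans hx0
        refine (dvd_sub_left ?_).mp h2
        rw [h1, mul_pow]
        exact Dvd.dvd.mul_left (Dvd.intro _ rfl) _
      · simp only [e, if_neg hxx]
        exact hx x hxx
  have hd := Polynomial.natDegree_le_of_dvd hdiv hne
  rw [Polynomial.natDegree_prod _ _ (fun x _ => pow_ne_zero _ (Polynomial.X_sub_C_ne_zero _))] at hd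
  simp only [Polynomial.natDegree_pow, Polynomial.natDegree_X_sub_C, mul_one] at hd
  have hsum : ∑ x, e x + 1 = m * Fintype.card ι := by
    have : ∑ x, e x + ∑ x, (if x = x₀ then 1 else 0) = ∑ x : ι, m := by
      rw [← Finset.sum_add_distrib]
      refine Finset.sum_congr rfl fun x _ => ?_
      simp only [e]; split_ifs <;> omega
    simp at this
    rw [this, mul_comm]
  have hb : G.natDegree ≤ t * n := by
    exact MvPolynomial.aeval_natDegree_le F hF1.totalDegree_le γ hdeg
  rw [mul_comm n t]
  omega

/-- index map for the curve -/
def rncIdx {n s : ℕ} (ι : Fin (n + 1) → Fin s) (ia ib : Fin s) :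
    Option (Option (Fin (n + 1))) → Fin s
  | none => ia
  | some none => ib
  | some (some i) => ι i

/-- nodes of the curve -/
def rncNode {K : Type} [Field K] {n : ℕ} (ρ : Fin (n + 1) → K) :
    Option (Option (Fin (n + 1))) → K
  | none => 1
  | some none => 0
  | some (some i) => ρ i

/-- constants of the curve -/
def rncConst {K : Type} [Field K] {n : ℕ} (c₁ c₀ : K) (ρ : Fin (n + 1) → K) :
    Option (Option (Fin (n + 1))) → K
  | none => c₁
  | some none => c₀
  | some (some i) => ρ i

lemma rnc_aux {K : Type} [Field K] {n s : ℕ} (hn : 1 ≤ n) (p : Fin s → Fin (n + 1) → K) (m t : ℕ)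
    (hm : 0 < m) (ht : m ≤ t + 1) (h : JetSep p m t) (ι : Fin (n + 1) → Fin s)
    (hι : Function.Injective ι) (hpι : ∀ i, p (ι i) = Pi.single i 1) (ia ib : Fin s)
    (hab : ia ≠ ib) (hia : ∀ i, ι i ≠ ia) (hib : ∀ i, ι i ≠ ib)
    (a b : Fin (n + 1) → K) (d : K) (hd : d ≠ 0) (hpa : p ia = a) (hpb : p ib = d • b)
    (ha : ∀ i, a i ≠ 0) (hb : ∀ i, b i ≠ 0) (hne : ∀ i, a i ≠ b i)
    (hcr : ∀ i k, i ≠ k → a i * b k ≠ a k * b i) : m * (n + 3) ≤ n * t + 1 := by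
  have hne' : ∀ i, a i - b i ≠ 0 := fun i => sub_ne_zero.mpr (hne i)
  have hne2 : ∀ i, b i - a i ≠ 0 := fun i => sub_ne_zero.mpr (hne i).symm
  let ρ : Fin (n + 1) → K := fun i => a i / (a i - b i)
  have hρ0 : ∀ i, ρ i ≠ 0 := fun i => div_ne_zero (ha i) (hne' i)
  have hρ1 : ∀ i, ρ i ≠ 1 := by
    intro i hi
    simp only [ρ, div_eq_one_iff_eq (hne' i)] at hi
    exact hb i (by linear_combination hi)
  have hρ : Function.Injective ρ := by
    intro i k hik
    by_contra hne3
    simp only [ρ] at hik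
    rw [div_eq_div_iff (hne' i) (hne' k)] at hik
    exact hcr i k hne3 (by linear_combination -hik)
  let D : Fin (n + 1) → Polynomial K :=
    fun k => Polynomial.C (b k - a k) * (Polynomial.X - Polynomial.C (ρ k))
  have hD : ∀ k x, (D k).eval x = (b k - a k) * x + a k := by
    intro k x
    simp only [D, ρ, Polynomial.eval_mul, Polynomial.eval_C, Polynomial.eval_sub,
      Polynomial.eval_X]
    have := hne' k
    field_simp
    ring
  have hDne : ∀ k x, x ≠ ρ k → (D k).eval x ≠ 0 := by
    intro k x hx
    simp only [D, Polynomial.eval_mul, Polynomial.eval_C, Polynomial.eval_sub,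
      Polynomial.eval_X]
    exact mul_ne_zero (hne2 k) (sub_ne_zero.mpr hx)
  let γ : Fin (n + 1) → Polynomial K :=
    fun i => Polynomial.C (a i * b i) * ∏ k ∈ Finset.univ.erase i, D k
  have hγs : ∀ i, (γ i).eval (ρ i) ≠ 0 := by
    intro i
    simp only [γ, Polynomial.eval_mul, Polynomial.eval_C, Polynomial.eval_prod]
    refine mul_ne_zero (mul_ne_zero (ha i) (hb i)) (Finset.prod_ne_zero_iff.mpr fun k hk => ?_)
    exact hDne k _ (fun h => (Finset.ne_of_mem_erase hk) (hρ h).symm)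
  have hγd : ∀ i j, i ≠ j → (γ i).eval (ρ j) = 0 := by
    intro i j hij
    simp only [γ, Polynomial.eval_mul, Polynomial.eval_prod]
    rw [Finset.prod_eq_zero (i := j) (Finset.mem_erase.mpr ⟨hij.symm, Finset.mem_univ _⟩),
      mul_zero]
    simp [D]
  have h01 : (0 : Fin (n + 1)) ≠ Fin.last n := by
    intro h; have := congrArg Fin.val h; simp at this; omega
  have key := curve_bound n p m t hm ht h (rncIdx ι ia ib) (by
      rintro (_ | _ | i) (_ | _ | k) hik
      all_goals simp only [rncIdx] at hik
      all_goals first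
        | rfl
        | exact absurd hik hab
        | exact absurd hik.symm hab
        | exact absurd hik (hia _)
        | exact absurd hik.symm (hia _)
        | exact absurd hik (hib _)
        | exact absurd hik.symm (hib _)
        | rw [hι hik]) γ (by
      intro i
      refine (Polynomial.natDegree_C_mul_le _ _).trans ?_
      refine (Polynomial.natDegree_prod_le _ _).trans ?_
      refine (Finset.sum_le_card_nsmul _ _ 1 fun k _ => ?_).trans ?_
      · refine (Polynomial.natDegree_C_mul_le _ _).trans ?_
        rw [Polynomial.natDegree_X_sub_C]
      · simp) (rncNode ρ)
      (rncConst (∏ k, b k) ((∏ k, a k) * d⁻¹) (fun i => (γ i).eval (ρ i)))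
      (by
      rintro (_ | _ | i) (_ | _ | k) hik
      all_goals simp only [rncNode] at hik
      all_goals first
        | rfl
        | exact absurd hik one_ne_zero
        | exact absurd hik.symm one_ne_zero
        | exact absurd hik (hρ0 _)
        | exact absurd hik.symm (hρ0 _)
        | exact absurd hik (hρ1 _)
        | exact absurd hik.symm (hρ1 _)
        | rw [hρ hik])
      (by
      rintro (_ | _ | j) i
      · simp only [rncNode, rncConst, rncIdx, γ, Polynomial.eval_mul, Polynomial.eval_C,
          Polynomial.eval_prod, hD, hpa]
        rw [← Finset.mul_prod_erase Finset.univ b (Finset.mem_univ i)]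
        simp only [mul_one, sub_add_cancel]
        ring
      · simp only [rncNode, rncConst, rncIdx, γ, Polynomial.eval_mul, Polynomial.eval_C,
          Polynomial.eval_prod, hD, hpb]
        rw [← Finset.mul_prod_erase Finset.univ a (Finset.mem_univ i)]
        simp only [mul_zero, zero_add, Pi.smul_apply, smul_eq_mul]
        field_simp
      · simp only [rncNode, rncConst, rncIdx, hpι]
        by_cases hij : i = j
        · subst hij; simp
        · rw [hγd i j hij]; simp [hij])
      (some (some 0)) 0 (Fin.last n) (hγs 0)
      (Polynomial.C (a (Fin.last n) * b (Fin.last n)) * (Polynomial.C (b 0 - a 0) *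
        ∏ k ∈ (Finset.univ.erase (Fin.last n)).erase 0, D k))
      (by
        simp only [γ, rncNode]
        rw [← Finset.mul_prod_erase (Finset.univ.erase (Fin.last n)) D
          (Finset.mem_erase.mpr ⟨h01, Finset.mem_univ _⟩)]
        simp only [D]
        ring)
      (by
        simp only [rncNode, Polynomial.eval_mul, Polynomial.eval_C, Polynomial.eval_prod]
        refine mul_ne_zero (mul_ne_zero (ha _) (hb _)) (mul_ne_zero (hne2 0)
          (Finset.prod_ne_zero_iff.mpr fun k hk => ?_))
        exact hDne k _ (fun h => (Finset.ne_of_mem_erase hk) (hρ h).symm))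
  simpa [Fintype.card_option] using key

lemma rnc_bound {K : Type} [Field K] [Infinite K] {n s : ℕ} (hn : 1 ≤ n)
    (p : Fin s → Fin (n + 1) → K) (m t : ℕ)
    (hm : 0 < m) (ht : m ≤ t + 1) (h : JetSep p m t) (ι : Fin (n + 1) → Fin s)
    (hι : Function.Injective ι) (hpι : ∀ i, p (ι i) = Pi.single i 1) (ia ib : Fin s)
    (hab : ia ≠ ib) (hia : ∀ i, ι i ≠ ia) (hib : ∀ i, ι i ≠ ib)
    (ha : ∀ i, p ia i ≠ 0) (hb : ∀ i, p ib i ≠ 0)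
    (hcr : ∀ i k, i ≠ k → p ia i * p ib k ≠ p ia k * p ib i) : m * (n + 3) ≤ n * t + 1 := by
  classical
  obtain ⟨c, hc⟩ := Infinite.exists_notMem_finset
    (insert 0 (Finset.univ.image fun i => p ia i / p ib i))
  simp only [Finset.mem_insert, Finset.mem_image, Finset.mem_univ, true_and, not_or,
    not_exists] at hc
  refine rnc_aux hn p m t hm ht h ι hι hpι ia ib hab hia hib (p ia) (c • p ib) c⁻¹
    (inv_ne_zero hc.1) rfl ?_ ha (fun i => mul_ne_zero hc.1 (hb i)) ?_ ?_
  · rw [smul_smul, inv_mul_cancel₀ hc.1, one_smul]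
  · intro i hi
    apply hc.2 i
    rw [div_eq_iff (hb i), hi]; rfl
  · intro i k hik hh
    simp only [Pi.smul_apply, smul_eq_mul] at hh
    exact hcr i k hik (mul_left_cancel₀ hc.1 (by linear_combination hh))

lemma hom_mem_zero_pow {K : Type} [Field K] {N t : ℕ} {F : MvPolynomial (Fin N) K}
    (hF : F.IsHomogeneous t) : F ∈ pointIdeal (0 : Fin N → K) ^ t := by
  have h1 : homogeneousSubmodule (Fin N) K 1 ≤
      (pointIdeal (0 : Fin N → K)).restrictScalars K := by
    intro f hf
    refine Ideal.subset_span ⟨hf, ?_⟩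
    have := eval_hom_smul (show f.IsHomogeneous 1 from hf) 0 (0 : Fin N → K)
    simpa using this
  have h2 : ∀ k, (homogeneousSubmodule (Fin N) K 1) ^ k ≤
      (pointIdeal (0 : Fin N → K) ^ k).restrictScalars K := by
    intro k
    induction k with
    | zero => intro f _; simp
    | succ k ih =>
      rw [pow_succ, Submodule.mul_le]
      intro f hf g hg
      have := Ideal.mul_mem_mul (ih hf) (h1 hg)
      rw [pow_succ]
      exact this
  have := h2 t
  rw [homogeneousSubmodule_one_pow] at this
  exact this hF

lemma vanish_mem {K : Type} [Field K] {N t : ℕ} {F : MvPolynomial (Fin N) K}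
    (hF : F.IsHomogeneous t) (z : Fin N → K) (hz : z ≠ 0) (h : eval z F = 0) :
    F ∈ pointIdeal z := by
  obtain ⟨i, hi⟩ := Function.ne_iff.mp hz
  let u : (Fin N → K) →ₗ[K] K := (z i)⁻¹ • LinearMap.proj i
  have hu : u z = 1 := by simpa [u] using inv_mul_cancel₀ hi
  have h1 : ∀ g ∈ filt z u t 0, g - C (eval z g) * linF u ^ t ∈ pointIdeal z := by
    intro g hg
    refine Submodule.span_induction ?_ ?_ ?_ ?_ hg
    · rintro f ⟨L, -, h2, h3, rfl⟩
      rcases L with _ | ⟨l, L⟩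
      · simp [eval_linF, hu]
      · have h4 : linF u ^ (t - (l :: L).length) * ((l :: L).map linF).prod ∈ pointIdeal z := by
          rw [List.map_cons, List.prod_cons]
          exact Ideal.mul_mem_left _ _ (Ideal.mul_mem_right _ _
            (linF_mem l z (h3 l (by simp))))
        have h5 : eval z (linF u ^ (t - (l :: L).length) * ((l :: L).map linF).prod) = 0 := by
          simp [eval_linF, h3 l (by simp)]
        rw [h5]
        simpa using h4
    · simp
    · intro f g _ _ hf hg
      have := Ideal.add_mem _ hf hg
      convert this using 1
      simp only [map_add]
      ring
    · intro a f _ hf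
      have := Ideal.mul_mem_left _ (C a) hf
      convert this using 1
      simp only [map_mul, smul_eq_C_mul, eval_C]
      ring
  have := h1 F (hom_le_filt z u hu t hF)
  rw [h] at this
  simpa using this

lemma two_point {K : Type} [Field K] {N s : ℕ} (p : Fin s → Fin N → K)
    (hdist : ProjDistinct p) {x y : Fin s} (hxy : x ≠ y) :
    Module.finrank K (Submodule.span K ({p x, p y} : Set (Fin N → K))) = 2 := by
  classical
  apply le_antisymm
  · have := finrank_span_finset_le_card (R := K) ({p x, p y} : Finset (Fin N → K))
    simp only [Finset.coe_insert, Finset.coe_singleton] at this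
    exact this.trans Finset.card_le_two
  · exact two_le_finrank p hdist hxy _ (Submodule.subset_span (by simp))
      (Submodule.subset_span (by simp))

lemma two_mul_le {K : Type} [Field K] {N s : ℕ} (hs : 2 ≤ s) (p : Fin s → Fin N → K) (m t : ℕ)
    (hm : 0 < m) (ht : m ≤ t + 1) (h : JetSep p m t) (hdist : ProjDistinct p) :
    2 * m ≤ t + 1 := by
  have hxy : (⟨0, by omega⟩ : Fin s) ≠ ⟨1, by omega⟩ := by simp
  have := sep_count p m t hm ht h hdist {⟨0, by omega⟩, ⟨1, by omega⟩} 1 _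
    (two_point p hdist hxy) (by
      intro x hx
      simp only [Finset.mem_insert, Finset.mem_singleton] at hx
      rcases hx with rfl | rfl <;> exact Submodule.subset_span (by simp))
  rw [Finset.card_pair hxy] at this
  simpa using this

lemma exclude_four {K : Type} [Field K] (p : Fin 7 → Fin 5 → K)
    (h : JetSep p 2 3) (hdist : ProjDistinct p) (φ : (Fin 5 → K) →ₗ[K] K) (hφ : φ ≠ 0)
    (u v : Fin 7) (huv : u ≠ v) (hx : ∀ x, x ≠ u → x ≠ v → φ (p x) = 0) : False := by
  classical
  set U := Submodule.span K ({p u, p v} : Set (Fin 5 → K)) with hU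
  have hU2 : Module.finrank K U = 2 := two_point p hdist huv
  have hq : Module.finrank K ((Fin 5 → K) ⧸ U) = 3 := by
    have := U.finrank_quotient_add_finrank
    simp only [Module.finrank_fintype_fun_eq_card, Fintype.card_fin] at this
    omega
  let e : ((Fin 5 → K) ⧸ U) ≃ₗ[K] (Fin 3 → K) := LinearEquiv.ofFinrankEq _ _ (by simp [hq])
  let B : (Fin 5 → K) →ₗ[K] (Fin 3 → K) := e.toLinearMap ∘ₗ U.mkQ
  have hBs : Function.Surjective B := e.surjective.comp U.mkQ_surjective
  have hBk : ∀ z ∈ U, B z = 0 := by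
    intro z hz
    simp [B, (Submodule.Quotient.mk_eq_zero U).mpr hz]
  obtain ⟨B', hB'⟩ := B.exists_rightInverse_of_surjective (LinearMap.range_eq_top.mpr hBs)
  let S : Finset (Fin 7) := {u, v}ᶜ
  have hS : S.card = 5 := by
    rw [Finset.card_compl, Finset.card_pair huv]; simp
  let E : homogeneousSubmodule (Fin 3) K 2 →ₗ[K] (S → K) :=
    LinearMap.pi fun x => (aeval (B (p x)) : MvPolynomial (Fin 3) K →ₐ[K] K).toLinearMap ∘ₗ
      (homogeneousSubmodule (Fin 3) K 2).subtype
  have hE : LinearMap.ker E ≠ ⊥ := by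
    apply LinearMap.ker_ne_bot_of_finrank_lt
    have h1 := finrank_hom K 2 2
    have h2 : (2 + 2).choose 2 = 6 := rfl
    rw [h2] at h1
    simp only [Module.finrank_fintype_fun_eq_card, Fintype.card_coe, hS]
    rw [show Module.finrank K (homogeneousSubmodule (Fin 3) K 2) = 6 from h1]
    norm_num
  obtain ⟨⟨q, hq2⟩, hqk, hq0⟩ := (Submodule.ne_bot_iff _).mp hE
  have hq2' : q.IsHomogeneous 2 := hq2
  have hqne : q ≠ 0 := fun hh => hq0 (Subtype.ext hh)
  have hqe : ∀ x ∈ S, eval (B (p x)) q = 0 := by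
    intro x hxS
    have := congrFun (LinearMap.mem_ker.mp hqk) ⟨x, hxS⟩
    simpa [E, aeval_eq_eval] using this
  set G := linF φ * lsub B q with hG
  have hG0 : G ≠ 0 := by
    apply mul_ne_zero
    · intro h0
      apply hφ
      ext1 z
      have := eval_linF φ (Pi.single z 1)
      rw [h0] at this
      ext
      simpa using this.symm
    · intro h0
      apply hqne
      have := lsub_comp B' B q
      rw [hB', lsub_id, h0, map_zero] at this
      exact this.symm
  have hGh : G.IsHomogeneous 3 := (linF_hom φ).mul (lsub_hom B hq2')
  have hGm : ∀ x, G ∈ pointIdeal (p x) ^ 2 := by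
    intro x
    by_cases hxS : x ∈ S
    · have hx1 : x ≠ u ∧ x ≠ v := by simpa [S] using hxS
      rw [pow_two]
      refine Ideal.mul_mem_mul (linF_mem _ _ (hx x hx1.1 hx1.2)) ?_
      exact vanish_mem (lsub_hom B hq2') _ (hdist.1 x) (by rw [eval_lsub, hqe x hxS])
    · have hx1 : x = u ∨ x = v := by
        have : ¬ (x ≠ u ∧ x ≠ v) := by simpa [S] using hxS
        tauto
      have hB0 : B (p x) = 0 := by
        apply hBk
        rcases hx1 with rfl | rfl <;> exact Submodule.subset_span (by simp)
      refine Ideal.mul_mem_left _ _ (lsub_point B (p x) 2 ?_)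
      rw [hB0]
      exact hom_mem_zero_pow hq2'
  have hdim := (sep_iff_dim (n := 4) p hdist.1 2 3 (by norm_num) (by norm_num)).mp h
  have h3 : (2 + 4 - 1).choose 4 = 5 := rfl
  have h4 : (3 + 4).choose 4 = 35 := rfl
  rw [h3, h4] at hdim
  have hz : gradedDim K (fatIdeal p fun _ => 2) 3 = 0 := by omega
  unfold gradedDim at hz
  have : FiniteDimensional K ↥(homogeneousSubmodule (Fin 5) K 3 ⊓
    (fatIdeal p fun _ => 2).restrictScalars K) :=
    Submodule.finiteDimensional_of_le (inf_le_left : _ ≤ homogeneousSubmodule (Fin 5) K 3)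
  rw [Submodule.finrank_eq_zero] at hz
  have hGI : G ∈ homogeneousSubmodule (Fin 5) K 3 ⊓
      (fatIdeal p fun _ => 2).restrictScalars K := by
    refine ⟨hGh, ?_⟩
    change G ∈ fatIdeal p fun _ => 2
    rw [fatIdeal, Submodule.mem_iInf]
    exact hGm
  rw [hz] at hGI
  exact hG0 (by simpa using hGI)

lemma dichotomy {K : Type} [Field K] [Infinite K] {n : ℕ} (hn : 1 ≤ n)
    (p : Fin (n + 3) → Fin (n + 1) → K) (m t : ℕ)
    (hm : 0 < m) (ht : m ≤ t + 1) (h : JetSep p m t)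
    (hspan : Submodule.span K (Set.range p) = ⊤) :
    m * (n + 3) ≤ n * t + 1 ∨ ∃ φ : (Fin (n + 1) → K) →ₗ[K] K, φ ≠ 0 ∧ ∃ u v, u ≠ v ∧
      ∀ x, x ≠ u → x ≠ v → φ (p x) = 0 := by
  classical
  have hr : Module.finrank K (Submodule.span K (Set.range p)) = n + 1 := by
    rw [hspan, finrank_top]; simp
  have hex := Submodule.exists_fun_fin_finrank_span_eq K (Set.range p)
  rw [hr] at hex
  obtain ⟨f, hf1, hf2, hf3⟩ := hex
  choose ι hι using hf1
  have hιi : Function.Injective ι := by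
    intro i k hik
    apply hf3.injective
    rw [← hι i, ← hι k, hik]
  let b := Module.Basis.mk hf3 (by rw [hf2, hspan])
  let A : (Fin (n + 1) → K) ≃ₗ[K] (Fin (n + 1) → K) := b.equivFun.symm
  have hA : ∀ i, A.symm (p (ι i)) = Pi.single i 1 := by
    intro i
    rw [LinearEquiv.symm_apply_eq, hι]
    simp [A, b]
  let z : Fin (n + 3) → Fin (n + 1) → K := fun x => A.symm (p x)
  have hz : JetSep z m t :=
    sep_restrict p m t h A.toLinearMap A.injective id Function.injective_id z (by simp [z])
  have hc : ((Finset.univ.image ι)ᶜ).card = 2 := by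
    rw [Finset.card_compl, Finset.card_image_of_injective _ hιi]
    simp
  obtain ⟨ia, ib, hab, hIc⟩ := Finset.card_eq_two.mp hc
  have hmem : ∀ x, x = ia ∨ x = ib ∨ ∃ i, ι i = x := by
    intro x
    by_cases hx : x ∈ (Finset.univ.image ι)ᶜ
    · rw [hIc] at hx
      simp only [Finset.mem_insert, Finset.mem_singleton] at hx
      tauto
    · simp only [Finset.mem_compl, not_not, Finset.mem_image, Finset.mem_univ, true_and] at hx
      tauto
  have hia : ∀ i, ι i ≠ ia := by
    intro i hi
    have : ia ∈ (Finset.univ.image ι)ᶜ := by rw [hIc]; simp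
    rw [Finset.mem_compl] at this
    exact this (Finset.mem_image.mpr ⟨i, Finset.mem_univ _, hi⟩)
  have hib : ∀ i, ι i ≠ ib := by
    intro i hi
    have : ib ∈ (Finset.univ.image ι)ᶜ := by rw [hIc]; simp
    rw [Finset.mem_compl] at this
    exact this (Finset.mem_image.mpr ⟨i, Finset.mem_univ _, hi⟩)
  -- transport of functionals
  have hred : (∃ φ : (Fin (n + 1) → K) →ₗ[K] K, φ ≠ 0 ∧ ∃ u v, u ≠ v ∧
      ∀ x, x ≠ u → x ≠ v → φ (z x) = 0) → ∃ φ : (Fin (n + 1) → K) →ₗ[K] K, φ ≠ 0 ∧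
      ∃ u v, u ≠ v ∧ ∀ x, x ≠ u → x ≠ v → φ (p x) = 0 := by
    rintro ⟨φ, hφ, u, v, huv, hx⟩
    refine ⟨φ ∘ₗ A.symm.toLinearMap, ?_, u, v, huv, hx⟩
    intro h0
    apply hφ
    ext1 i
    ext
    have := LinearMap.congr_fun h0 (A (Pi.single i 1))
    simpa using this
  have hproj : ∀ i : Fin (n + 1), (LinearMap.proj i : (Fin (n + 1) → K) →ₗ[K] K) ≠ 0 := by
    intro i h0
    have := LinearMap.congr_fun h0 (Pi.single i 1)
    simp at this
  by_cases ha : ∀ i, z ia i ≠ 0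
  · by_cases hb : ∀ i, z ib i ≠ 0
    · by_cases hcr : ∀ i k, i ≠ k → z ia i * z ib k ≠ z ia k * z ib i
      · exact Or.inl (rnc_bound hn z m t hm ht hz ι hιi hA ia ib hab hia hib ha hb hcr)
      · right
        apply hred
        push Not at hcr
        obtain ⟨i, k, hik, he⟩ := hcr
        refine ⟨z ib k • LinearMap.proj i - z ib i • LinearMap.proj k, ?_, ι i, ι k,
          fun hh => hik (hιi hh), ?_⟩
        · intro h0
          have := LinearMap.congr_fun h0 (Pi.single i 1)
          simp [hik.symm] at this
          exact hb k this
        · intro x hx1 hx2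
          rcases hmem x with rfl | rfl | ⟨j, rfl⟩
          · simp only [LinearMap.sub_apply, LinearMap.smul_apply, LinearMap.proj_apply,
              smul_eq_mul]
            linear_combination he
          · simp only [LinearMap.sub_apply, LinearMap.smul_apply, LinearMap.proj_apply,
              smul_eq_mul]
            ring
          · have h1 : i ≠ j := fun hh => hx1 (by rw [hh])
            have h2 : k ≠ j := fun hh => hx2 (by rw [hh])
            have h3 : z (ι j) = Pi.single j 1 := hA j
            rw [h3]
            simp [h1, h2]
    · right
      apply hred
      push Not at hb
      obtain ⟨i, hi⟩ := hb
      refine ⟨LinearMap.proj i, hproj i, ι i, ia, hia i, ?_⟩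
      intro x hx1 hx2
      rcases hmem x with rfl | rfl | ⟨j, rfl⟩
      · exact absurd rfl hx2
      · exact hi
      · have h1 : i ≠ j := fun hh => hx1 (by rw [hh])
        have h3 : z (ι j) = Pi.single j 1 := hA j
        rw [h3]
        simp [h1]
  · right
    apply hred
    push Not at ha
    obtain ⟨i, hi⟩ := ha
    refine ⟨LinearMap.proj i, hproj i, ι i, ib, hib i, ?_⟩
    intro x hx1 hx2
    rcases hmem x with rfl | rfl | ⟨j, rfl⟩
    · exact hi
    · exact absurd rfl hx2
    · have h1 : i ≠ j := fun hh => hx1 (by rw [hh])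
      have h3 : z (ι j) = Pi.single j 1 := hA j
      rw [h3]
      simp [h1]

lemma two_choose_two (k : ℕ) : 2 * (k + 1).choose 2 = (k + 1) * k := by
  rw [Nat.choose_two_right, Nat.add_sub_cancel]
  exact Nat.mul_div_cancel_left' (by
    rw [mul_comm]; exact (Nat.even_mul_succ_self k).two_dvd)

lemma hyper_count {K : Type} [Field K] {j : ℕ}
    (p : Fin (j + 4) → Fin (j + 2) → K) (m t : ℕ)
    (hm : 0 < m) (ht : m ≤ t + 1) (h : JetSep p m t) (hdist : ProjDistinct p)
    (φ : (Fin (j + 2) → K) →ₗ[K] K) (hφ : φ ≠ 0)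
    (u v : Fin (j + 4)) (huv : u ≠ v) (hx : ∀ x, x ≠ u → x ≠ v → φ (p x) = 0) :
    (j + 2) * (m + j - 1).choose j ≤ (t + j).choose j := by
  classical
  have hk : Module.finrank K (LinearMap.ker φ) = j + 1 := by
    have h1 := LinearMap.finrank_range_add_finrank_ker φ
    have h2 : LinearMap.range φ = ⊤ := LinearMap.range_eq_top.mpr
      (LinearMap.surjective hφ)
    rw [h2, finrank_top] at h1
    simp only [Module.finrank_self, Module.finrank_fintype_fun_eq_card, Fintype.card_fin] at h1
    omega
  have := sep_count p m t hm ht h hdist {u, v}ᶜ j (LinearMap.ker φ) hk (by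
    intro x hxS
    have hx1 : x ≠ u ∧ x ≠ v := by simpa using hxS
    exact hx x hx1.1 hx1.2)
  rwa [Finset.card_compl, Finset.card_pair huv, Fintype.card_fin,
    show j + 4 - 2 = j + 2 by omega] at this

lemma plane_arith (m t : ℕ) (hm : 0 < m) (h1 : 2 * m ≤ t + 1)
    (h : 4 * (m + 2 - 1).choose 2 ≤ (t + 2).choose 2) : 2 * m ≤ t := by
  by_contra h3
  obtain ⟨k, rfl⟩ : ∃ k, m = k + 1 := ⟨m - 1, by omega⟩
  obtain rfl : t = 2 * k + 1 := by omega
  have h4 := two_choose_two (k + 1)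
  have h5 := two_choose_two (2 * k + 2)
  rw [show k + 1 + 2 - 1 = k + 1 + 1 by omega] at h
  rw [show 2 * k + 1 + 2 = 2 * k + 2 + 1 by omega] at h
  nlinarith

lemma lower_main {K : Type} [Field K] [Infinite K] {n s : ℕ} (hn : 1 ≤ n) (hs : s ≤ n + 3)
    (p : Fin s → Fin (n + 1) → K) (m t : ℕ)
    (hm : 0 < m) (ht : m ≤ t + 1) (h : JetSep p m t) (hdist : ProjDistinct p)
    (hspan : Submodule.span K (Set.range p) = ⊤) : m * s ≤ n * t + 1 := by
  have hs1 := finrank_rel p hspan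
  have hF1 := two_mul_le (by omega) p m t hm ht h hdist
  have hdim : s * (m + n - 1).choose n ≤ (t + n).choose n := by
    have := (sep_iff_dim p hdist.1 m t hm ht).mp h
    omega
  -- the case of simple points
  have hm1 : m = 1 → n + 2 ≤ s → 2 ≤ t := by
    intro h1 h2
    by_contra h3
    subst h1
    rw [show 1 + n - 1 = n by omega, Nat.choose_self] at hdim
    have h4 : t = 1 := by omega
    subst h4
    rw [add_comm 1 n, Nat.choose_succ_self_right] at hdim
    omega
  obtain hs' | hs' | hs' : s = n + 1 ∨ s = n + 2 ∨ s = n + 3 := by omega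
  · subst hs'
    have hle : n * (2 * m) ≤ n * (t + 1) := Nat.mul_le_mul_left n hF1
    nlinarith [Nat.mul_le_mul (show 1 ≤ m from hm) hn]
  · subst hs'
    obtain rfl | rfl | h3 : n = 1 ∨ n = 2 ∨ 3 ≤ n := by omega
    · simp at hdim
      omega
    · have := plane_arith m t hm hF1 hdim
      omega
    · obtain rfl | h2 : m = 1 ∨ 2 ≤ m := by omega
      · have := hm1 rfl le_rfl
        nlinarith [Nat.mul_le_mul_left n this]
      · have hle : n * (2 * m) ≤ n * (t + 1) := Nat.mul_le_mul_left n hF1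
        obtain ⟨k, rfl⟩ := Nat.exists_eq_add_of_le h2
        obtain ⟨l, rfl⟩ := Nat.exists_eq_add_of_le h3
        nlinarith [Nat.zero_le (k * l)]
  · subst hs'
    obtain rfl | h5 | h5 : n = 1 ∨ 5 ≤ n ∨ (2 ≤ n ∧ n ≤ 4) := by omega
    · simp at hdim
      omega
    · obtain rfl | h2 : m = 1 ∨ 2 ≤ m := by omega
      · have := hm1 rfl (by omega)
        nlinarith [Nat.mul_le_mul_left n this]
      · have hle : n * (2 * m) ≤ n * (t + 1) := Nat.mul_le_mul_left n hF1
        obtain ⟨k, rfl⟩ := Nat.exists_eq_add_of_le h2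
        obtain ⟨l, rfl⟩ := Nat.exists_eq_add_of_le h5
        nlinarith [Nat.zero_le (k * l)]
    · rcases dichotomy hn p m t hm ht h hspan with hd | ⟨φ, hφ, u, v, huv, hx⟩
      · exact hd
      · obtain rfl | rfl | rfl : n = 2 ∨ n = 3 ∨ n = 4 := by omega
        · have := hyper_count (j := 1) p m t hm ht h hdist φ hφ u v huv hx
          simp at this
          omega
        · have := hyper_count (j := 2) p m t hm ht h hdist φ hφ u v huv hx
          have := plane_arith m t hm hF1 this
          omega
        · by_cases h6 : m = 2 ∧ t = 3
          · obtain ⟨rfl, rfl⟩ := h6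
            exact (exclude_four p h hdist φ hφ u v huv hx).elim
          · by_cases h7 : m = 1
            · have := hm1 h7 (by omega)
              omega
            · omega

lemma segre_lower {K : Type} [Field K] [Infinite K] {n s : ℕ} (hs : s ≤ n + 3)
    (p : Fin s → Fin (n + 1) → K) (m t : ℕ)
    (hm : 0 < m) (ht : m ≤ t + 1) (h : JetSep p m t) (hdist : ProjDistinct p)
    (hspan : Submodule.span K (Set.range p) = ⊤) : segreBound n p (fun _ => m) ≤ t := by
  classical
  refine segre_le p m t hm fun Q j hj1 hjn hQ hW => ?_
  obtain ⟨W, hW1, hW2⟩ := hW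
  set V := Submodule.span K (p '' (Q : Set (Fin s))) with hV
  have hQV : ∀ x ∈ Q, p x ∈ V := fun x hx => Submodule.subset_span ⟨x, hx, rfl⟩
  have hVW : V ≤ W := by
    rw [hV, Submodule.span_le]
    rintro _ ⟨x, hx, rfl⟩
    exact hW2 x hx
  have hr := Submodule.finrank_mono hVW
  have hQ1 : 0 < Q.card := hQ.card_pos
  by_cases hQc : Q.card = 1
  · rw [hQc]
    nlinarith
  · obtain ⟨x, hx, y, hy, hxy⟩ := Finset.one_lt_card.mp (show 1 < Q.card by omega)
    have hr2 := two_le_finrank p hdist hxy V (hQV x hx) (hQV y hy)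
    obtain ⟨k, hk⟩ : ∃ k, Module.finrank K V = k + 1 := ⟨Module.finrank K V - 1, by omega⟩
    have hcard : Q.card ≤ k + 3 := by
      have h1 : (⊤ : Submodule K (Fin (n + 1) → K)) ≤
          V ⊔ Submodule.span K ((Qᶜ.image p : Finset (Fin (n + 1) → K)) : Set (Fin (n + 1) → K)) := by
        rw [← hspan, Submodule.span_le]
        rintro _ ⟨y, rfl⟩
        by_cases hyQ : y ∈ Q
        · exact Submodule.mem_sup_left (hQV y hyQ)
        · exact Submodule.mem_sup_right (Submodule.subset_span
            (Finset.mem_coe.mpr (Finset.mem_image_of_mem _ (Finset.mem_compl.mpr hyQ))))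
      have h2 := Submodule.finrank_mono h1
      have h3 := Submodule.finrank_add_le_finrank_add_finrank V (Submodule.span K
        ((Qᶜ.image p : Finset (Fin (n + 1) → K)) : Set (Fin (n + 1) → K)))
      have h4 : Module.finrank K (Submodule.span K
        ((Qᶜ.image p : Finset (Fin (n + 1) → K)) : Set (Fin (n + 1) → K))) ≤ _ :=
        finrank_span_finset_le_card (R := K) (Qᶜ.image p)
      have h5 : (Qᶜ.image p).card ≤ Qᶜ.card := Finset.card_image_le
      rw [Finset.card_compl, Fintype.card_fin] at h5
      have h6 := Finset.card_le_univ Q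
      rw [Fintype.card_fin] at h6
      simp only [finrank_top, Module.finrank_fintype_fun_eq_card, Fintype.card_fin] at h2
      omega
    obtain ⟨z, hz1, hz2, hz3⟩ := sep_subspace p m t h hdist Q (k + 1) V hk hQV
    have h1 := lower_main (by omega) hcard z m t hm ht hz1 hz2 (hz3 rfl)
    have h2 : k * t ≤ j * t := Nat.mul_le_mul_right t (by omega)
    omega

lemma zero_case {K : Type} [Field K] {s : ℕ} (m : ℕ) (hm : 0 < m)
    (p : Fin s → Fin (0 + 1) → K) (hdist : ProjDistinct p)
    (hspan : Submodule.span K (Set.range p) = ⊤) :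
    regFat K p (fun _ => m) = 0 := by
  have h1 : ∀ x y : Fin s, x = y := by
    intro x y
    by_contra hxy
    have h2 : p y 0 ≠ 0 := by
      intro h0
      apply hdist.1 y
      ext i
      rw [show i = 0 from Fin.ext (by omega), h0]; rfl
    apply hdist.2 x y hxy (p x 0 / p y 0)
    ext i
    rw [show i = 0 from Fin.ext (by omega)]
    simp [h2]
  have hrel := finrank_rel p hspan
  have hs1 : s = 1 := by
    by_contra hne
    have := h1 ⟨0, by omega⟩ ⟨1, by omega⟩
    simp at this
  subst hs1
  unfold regFat regIndex
  rw [Nat.sInf_eq_zero]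
  left
  simp only [Set.mem_ofPred_eq, fatMult, hilbFn]
  rw [finrank_hom]
  have h3 : gradedDim K (fatIdeal p fun _ => m) 0 = 0 := by
    unfold gradedDim
    have : homogeneousSubmodule (Fin (0 + 1)) K 0 ⊓
        (fatIdeal p fun _ => m).restrictScalars K = ⊥ := by
      rw [eq_bot_iff]
      rintro F ⟨hF1, hF2⟩
      have hF1' : F.IsHomogeneous 0 := hF1
      have hF3 : F ∈ pointIdeal (p 0) := by
        have hF4 : F ∈ fatIdeal p fun _ => m := hF2
        rw [fatIdeal, Submodule.mem_iInf] at hF4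
        exact Ideal.pow_le_self hm.ne' (hF4 0)
      have hle : pointIdeal (p 0) ≤ RingHom.ker (eval (p 0)) := by
        rw [pointIdeal, Ideal.span_le]
        rintro f ⟨_, hf⟩
        exact hf
      have hF5 : eval (p 0) F = 0 := hle hF3
      have hF6 := (totalDegree_eq_zero_iff_eq_C).mp (Nat.le_zero.mp hF1'.totalDegree_le)
      rw [hF6, eval_C] at hF5
      rw [hF6, hF5]
      simp
    rw [this]
    simp
  rw [h3]
  simp

/-- Theorem 4.3: `s ≤ n+3` non-degenerate equimultiple fat points in `ℙⁿ`
satisfy `reg(Z) = T(Z)`. -/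
theorem stmt11 {K : Type} [Field K] [IsAlgClosed K] {n s : ℕ} (hs : s ≤ n + 3)
    (m : ℕ) (hm : 0 < m)
    (p : Fin s → Fin (n + 1) → K) (hdist : ProjDistinct p)
    (hspan : Submodule.span K (Set.range p) = ⊤) :
    regFat K p (fun _ => m) = segreBound n p (fun _ => m) := by
  have : Infinite K := IsAlgClosed.instInfinite
  rcases Nat.eq_zero_or_pos n with rfl | hn
  · rw [zero_case m hm p hdist hspan]
    simp [segreBound]
  · have hrel := finrank_rel p hspan
    have hmult : fatMult n (fun _ : Fin s => m) = s * (m + n - 1).choose n := by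
      simp [fatMult]
    have hub := upper_bound hs hn m hm p hdist hspan
    unfold regFat regIndex
    rw [hmult]
    apply le_antisymm
    · exact Nat.sInf_le hub
    · have hmem : sInf {t | hilbFn K (fatIdeal p fun _ => m) t = s * (m + n - 1).choose n} ∈
          {t | hilbFn K (fatIdeal p fun _ => m) t = s * (m + n - 1).choose n} :=
        Nat.sInf_mem ⟨_, hub⟩
      obtain ⟨ht, hsep⟩ := hilb_sep p hdist.1 m _ hm hn (by omega) hmem
      exact segre_lower hs p m _ hm ht hsep hdist hspan
end
end

section
/- Let l_1, l_2 be two distinct lines in P^2 and P_1,...,P_6 distinct points with P_1,P_2,P_3 ∈ l_1 \ l_2, P_4,P_5 ∈ l_2 \ l_1, and P_6 ∉ l_1 ∪ l_2. For a positive integer m, let Z = mP_1 + ... + mP_6. Then reg(Z) = 3m - 1, while the Segre bound satisfies T(Z) = T_2(Z) = 3m; in particular reg(Z) < T(Z). -/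
open MvPolynomial

noncomputable section

/-! ### Linear forms -/

/-- The linear form with coefficient vector `a`. -/
def linForm {K : Type} [Field K] {N : ℕ} (a : Fin N → K) : MvPolynomial (Fin N) K :=
  ∑ k, C (a k) * X k

lemma linForm_isHomogeneous {K : Type} [Field K] {N : ℕ} (a : Fin N → K) :
    (linForm a).IsHomogeneous 1 :=
  IsHomogeneous.sum _ _ _ fun _ _ => isHomogeneous_C_mul_X _ _

lemma exists_linForm {K : Type} [Field K] {N : ℕ} {f : MvPolynomial (Fin N) K}
    (hf : f.IsHomogeneous 1) : ∃ a, f = linForm a := by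
  have h : f ∈ homogeneousSubmodule (Fin N) K 1 := hf
  rw [homogeneousSubmodule_one_eq_span_X, Submodule.mem_span_range_iff_exists_fun] at h
  obtain ⟨c, hc⟩ := h
  exact ⟨c, by rw [← hc]; simp [linForm, smul_eq_C_mul]⟩

lemma eval_linForm {K : Type} [Field K] {N : ℕ} (a x : Fin N → K) :
    eval x (linForm a) = ∑ k, a k * x k := by
  simp [linForm]

/-- The Rees-type substitution at the point `P`. -/
def reesSub {K : Type} [Field K] {N : ℕ} (P : Fin N → K) (k : Fin N) :
    MvPolynomial (Fin N) K →ₐ[K] Polynomial (MvPolynomial (Fin N) K) :=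
  aeval fun j => Polynomial.C (C (P j) * (C (P k)⁻¹ * X k)) +
    Polynomial.X * Polynomial.C (X j - C (P j) * (C (P k)⁻¹ * X k))

lemma reesSub_linForm {K : Type} [Field K] {N : ℕ} (P : Fin N → K) (k : Fin N) (a : Fin N → K) :
    reesSub P k (linForm a) = Polynomial.C (C (eval P (linForm a)) * (C (P k)⁻¹ * X k)) +
      Polynomial.X * Polynomial.C (linForm a - C (eval P (linForm a)) * (C (P k)⁻¹ * X k)) := by
  have key : ∀ c : K, algebraMap K (Polynomial (MvPolynomial (Fin N) K)) c =
      Polynomial.C (C c) := fun c => rfl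
  rw [eval_linForm]
  simp only [linForm, map_sum, map_mul, reesSub, aeval_X, map_sub, Finset.sum_mul,
    algHom_C, key, ← Finset.sum_sub_distrib, Finset.mul_sum, ← Finset.sum_add_distrib]
  refine Finset.sum_congr rfl fun i _ => ?_
  ring

lemma mem_pointIdeal_linForm {K : Type} [Field K] {N : ℕ} (P : Fin N → K) (a : Fin N → K)
    (h : eval P (linForm a) = 0) : linForm a ∈ pointIdeal P :=
  Ideal.subset_span ⟨linForm_isHomogeneous a, h⟩

lemma coord_mem {K : Type} [Field K] {N : ℕ} (P : Fin N → K) (k : Fin N) (hk : P k ≠ 0)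
    (j : Fin N) : X j - C (P j) * (C (P k)⁻¹ * X k) ∈ pointIdeal P := by
  refine Ideal.subset_span ⟨?_, ?_⟩
  · refine (isHomogeneous_X _ _).sub ?_
    exact (isHomogeneous_C_mul_X _ _).C_mul _
  · simp [hk]

lemma mem_pow_iff {K : Type} [Field K] {N : ℕ} (P : Fin N → K) (k : Fin N) (hk : P k ≠ 0)
    (m : ℕ) (f : MvPolynomial (Fin N) K) :
    f ∈ pointIdeal P ^ m ↔ Polynomial.X ^ m ∣ reesSub P k f := by
  constructor
  · intro hf
    have h1 : (pointIdeal P).map (reesSub P k) ≤ Ideal.span {Polynomial.X} := by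
      rw [pointIdeal, Ideal.map_span, Ideal.span_le]
      rintro _ ⟨g, ⟨hg, hg0⟩, rfl⟩
      obtain ⟨a, rfl⟩ := exists_linForm hg
      rw [SetLike.mem_coe, Ideal.mem_span_singleton, reesSub_linForm, hg0]
      simp
    have h2 := Ideal.mem_map_of_mem (reesSub P k) hf
    rw [Ideal.map_pow] at h2
    have h3 := Ideal.pow_right_mono h1 m h2
    rwa [Ideal.span_singleton_pow, Ideal.mem_span_singleton] at h3
  · intro hf
    have hr : ∀ g, reesSub P k g ∈ reesAlgebra (pointIdeal P) := by
      intro g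
      induction g using MvPolynomial.induction_on with
      | C a =>
        have : reesSub P k (C a) = algebraMap (MvPolynomial (Fin N) K) _ (C a) := by
          rw [algHom_C]; rfl
        rw [this]
        exact Subalgebra.algebraMap_mem _ _
      | add p q hp hq => rw [map_add]; exact add_mem hp hq
      | mul_X p j hp =>
        rw [map_mul]
        refine mul_mem hp ?_
        rw [reesSub, aeval_X]
        refine add_mem (Subalgebra.algebraMap_mem (reesAlgebra (pointIdeal P)) _) ?_
        rw [mul_comm, ← pow_one Polynomial.X, Polynomial.C_mul_X_pow_eq_monomial]
        apply reesAlgebra.monomial_mem.2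
        rw [pow_one]
        exact coord_mem P k hk j
    have he : ∀ g, Polynomial.eval 1 (reesSub P k g) = g := by
      intro g
      induction g using MvPolynomial.induction_on with
      | C a =>
        have : reesSub P k (C a) = Polynomial.C (C a) := by
          rw [algHom_C]; rfl
        rw [this, Polynomial.eval_C]
      | add p q hp hq => rw [map_add, Polynomial.eval_add, hp, hq]
      | mul_X p j hp =>
        rw [map_mul, Polynomial.eval_mul, hp, reesSub, aeval_X]
        simp
    rw [← he f, Polynomial.eval_eq_sum, Polynomial.sum]
    refine Ideal.sum_mem _ fun i hi => ?_
    rw [one_pow, mul_one]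
    by_cases him : m ≤ i
    · exact Ideal.pow_le_pow_right him ((mem_reesAlgebra_iff _ _).1 (hr f) i)
    · rw [Polynomial.X_pow_dvd_iff.1 hf i (not_le.1 him)]
      exact Ideal.zero_mem _

lemma colon_notMem {K : Type} [Field K] {N : ℕ} (P : Fin N → K) (hP : P ≠ 0) (a : Fin N → K)
    (ha : eval P (linForm a) ≠ 0) (m : ℕ) (f : MvPolynomial (Fin N) K)
    (h : linForm a * f ∈ pointIdeal P ^ m) : f ∈ pointIdeal P ^ m := by
  obtain ⟨k, hk⟩ := Function.ne_iff.1 hP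
  rw [mem_pow_iff P k hk] at h ⊢
  rw [map_mul] at h
  refine Polynomial.prime_X.pow_dvd_of_dvd_mul_left m ?_ h
  rw [reesSub_linForm, Polynomial.X_dvd_iff]
  simpa using ⟨ha, hk⟩

lemma colon_mem {K : Type} [Field K] {N : ℕ} (P : Fin N → K) (hP : P ≠ 0) (a : Fin N → K)
    (ha : eval P (linForm a) = 0) (ha0 : linForm a ≠ 0) (m : ℕ) (f : MvPolynomial (Fin N) K)
    (h : linForm a * f ∈ pointIdeal P ^ m) : f ∈ pointIdeal P ^ (m - 1) := by
  obtain ⟨k, hk⟩ := Function.ne_iff.1 hP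
  rcases m with _ | m
  · simp
  rw [mem_pow_iff P k hk] at h ⊢
  rw [map_mul, reesSub_linForm, ha, pow_succ'] at h
  simp only [map_zero, zero_mul, zero_add, sub_zero, mul_assoc] at h
  have h' := (mul_dvd_mul_iff_left Polynomial.X_ne_zero).1 h
  refine Polynomial.prime_X.pow_dvd_of_dvd_mul_left m ?_ h'
  rw [Polynomial.X_dvd_iff]
  simpa using ha0

/-! ### Dimension of forms -/

lemma finrank_forms (K : Type) [Field K] (t : ℕ) :
    Module.finrank K ↥(homogeneousSubmodule (Fin 3) K t) = (t + 2).choose 2 := by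
  have h : {d : Fin 3 →₀ ℕ | d.degree = t} =
      (((Finset.univ : Finset (Fin 3)).finsuppAntidiag t : Finset _) : Set (Fin 3 →₀ ℕ)) := by
    ext d
    simp [Finset.mem_finsuppAntidiag, Finsupp.degree_eq_sum]
  rw [homogeneousSubmodule_eq_finsupp_supported, h]
  have e := (basisRestrictSupport K
    (((Finset.univ : Finset (Fin 3)).finsuppAntidiag t : Finset _) : Set (Fin 3 →₀ ℕ)))
  have e2 := Module.finrank_eq_card_basis e
  rw [restrictSupport] at e2
  rw [e2]
  simp only [Finset.coe_sort_coe, Fintype.card_coe, Finset.card_finsuppAntidiag_nat_eq_choose]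
  have : (Finset.univ : Finset (Fin 3)).card + t - 1 = t + 2 := by simp; omega
  rw [this]
  exact (Nat.choose_symm_add (a := t) (b := 2))

instance forms_finite (K : Type) [Field K] (N t : ℕ) :
    Module.Finite K ↥(homogeneousSubmodule (Fin N) K t) :=
  Module.Finite.iff_fg.2 (homogeneousSubmodule_fg _ _ _)

/-! ### A fat point imposes at most `C(m+1,2)` conditions -/

lemma sum_succ_choose (m : ℕ) : ∑ a ∈ Finset.range m, (a + 1) = (m + 1).choose 2 := by
  induction m with
  | zero => simp
  | succ n ih => rw [Finset.sum_range_succ, ih, Nat.choose_succ_succ' (n + 1) 1]; simp; ring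

lemma forms_le {K : Type} [Field K] (P : Fin 3 → K) (k : Fin 3) (hk : P k ≠ 0) (m t : ℕ) :
    ∃ T : Finset (MvPolynomial (Fin 3) K), T.card ≤ (m + 1).choose 2 ∧
      homogeneousSubmodule (Fin 3) K t ≤
        (pointIdeal P ^ m).restrictScalars K ⊔ Submodule.span K (T : Set (MvPolynomial (Fin 3) K)) := by
  classical
  let e : MvPolynomial (Fin 3) K := C (P k)⁻¹ * X k
  let y : Fin 3 → MvPolynomial (Fin 3) K := fun j => if j = k then e else X j - C (P j) * e
  have hyk : y k = e := by simp [y]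
  have hyi : ∀ i, y (k.succAbove i) ∈ pointIdeal P := fun i => by
    have : y (k.succAbove i) = X (k.succAbove i) - C (P (k.succAbove i)) * e := by
      simp [y, Fin.succAbove_ne]
    rw [this]
    exact coord_mem P k hk _
  let T : Finset (MvPolynomial (Fin 3) K) :=
    ((Finset.range m).sigma fun a => Finset.range (m - a)).image fun ab =>
      y k ^ (t - ab.1 - ab.2) * (y (k.succAbove 0) ^ ab.1 * y (k.succAbove 1) ^ ab.2)
  refine ⟨T, ?_, ?_⟩
  · refine Finset.card_image_le.trans ?_
    rw [Finset.card_sigma]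
    simp only [Finset.card_range]
    have h1 := Finset.sum_range_reflect (fun a => a + 1) m
    have h2 : ∑ a ∈ Finset.range m, (m - a) = ∑ j ∈ Finset.range m, (m - 1 - j + 1) :=
      Finset.sum_congr rfl fun a ha => by
        have := Finset.mem_range.1 ha
        omega
    rw [h2, h1, sum_succ_choose]
  · intro f hf
    let g : MvPolynomial (Fin 3) K :=
      aeval (fun j => C (P j) * X k + if j = k then 0 else X j) f
    have hg : g.IsHomogeneous t := by
      have := IsHomogeneous.aeval (n := 1) (show f.IsHomogeneous t from hf)
        (fun j => C (P j) * X k + if j = k then 0 else X j) (fun j => by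
          refine (isHomogeneous_C_mul_X _ _).add ?_
          split_ifs
          · exact isHomogeneous_zero _ _ _
          · exact isHomogeneous_X _ _)
      rwa [one_mul] at this
    have hfg : aeval y g = f := by
      have : ((aeval y).comp (aeval (fun j => C (P j) * X k + if j = k then 0 else X j)) :
          MvPolynomial (Fin 3) K →ₐ[K] MvPolynomial (Fin 3) K) = AlgHom.id K _ := by
        ext1 j
        simp only [AlgHom.comp_apply, aeval_X, map_add, map_mul, algHom_C, AlgHom.id_apply, hyk,
          algebraMap_eq]
        by_cases hj : j = k
        · subst hj
          simp only [if_true, map_zero, e]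
          rw [← mul_assoc, ← map_mul, mul_inv_cancel₀ hk]
          simp
        · simp [hj, y]
      exact DFunLike.congr_fun this f
    rw [← hfg, aeval_def, eval₂_eq']
    refine Submodule.sum_mem _ fun d hd => ?_
    rw [algebraMap_eq, ← smul_eq_C_mul]
    refine Submodule.smul_mem _ _ ?_
    rw [Fin.prod_univ_succAbove _ k, Fin.prod_univ_two]
    have hdeg : d k + (d (k.succAbove 0) + d (k.succAbove 1)) = t := by
      have := hg.degree_eq_sum_deg_support hd
      have h2 : d.degree = t := this.symm
      rw [Finsupp.degree_eq_sum, Fin.sum_univ_succAbove _ k, Fin.sum_univ_two] at h2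
      exact h2
    by_cases hm : m ≤ d (k.succAbove 0) + d (k.succAbove 1)
    · refine Submodule.mem_sup_left ?_
      rw [Submodule.restrictScalars_mem]
      refine Ideal.mul_mem_left _ _ (Ideal.pow_le_pow_right hm ?_)
      rw [pow_add]
      exact Ideal.mul_mem_mul (Ideal.pow_mem_pow (hyi 0) _) (Ideal.pow_mem_pow (hyi 1) _)
    · refine Submodule.mem_sup_right (Submodule.subset_span ?_)
      refine Finset.mem_coe.2 (Finset.mem_image.2 ⟨⟨d (k.succAbove 0), d (k.succAbove 1)⟩, ?_, ?_⟩)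
      · simp only [Finset.mem_sigma, Finset.mem_range]
        omega
      · have : t - d (k.succAbove 0) - d (k.succAbove 1) = d k := by omega
        simp only [this]

lemma codim_point {K : Type} [Field K] (P : Fin 3 → K) (hP : P ≠ 0) (m t : ℕ)
    (V : Submodule K (MvPolynomial (Fin 3) K)) (hV : V ≤ homogeneousSubmodule (Fin 3) K t) :
    Module.finrank K V ≤
      Module.finrank K ↥(V ⊓ (pointIdeal P ^ m).restrictScalars K) + (m + 1).choose 2 := by
  obtain ⟨k, hk⟩ := Function.ne_iff.1 hP
  obtain ⟨T, hT, hle⟩ := forms_le P k hk m t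
  have : Module.Finite K V := Submodule.finiteDimensional_of_le hV
  set J := (pointIdeal P ^ m).restrictScalars K
  let q := J.mkQ.domRestrict V
  have h1 := q.finrank_range_add_finrank_ker
  have h2 : Module.finrank K (LinearMap.range q) ≤ (m + 1).choose 2 := by
    have : LinearMap.range q ≤ (Submodule.span K (T : Set (MvPolynomial (Fin 3) K))).map J.mkQ := by
      rintro _ ⟨x, rfl⟩
      obtain ⟨a, ha, b, hb, hab⟩ := Submodule.mem_sup.1 (hle (hV x.2))
      refine ⟨b, hb, ?_⟩
      simp only [q, LinearMap.domRestrict_apply, ← hab, map_add]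
      rw [(Submodule.Quotient.mk_eq_zero J).2 ha |> fun h => (show J.mkQ a = 0 from h), zero_add]
    refine (Submodule.finrank_mono this).trans ((Submodule.finrank_map_le _ _).trans ?_)
    exact (finrank_span_finset_le_card T).trans hT
  have h3 : Module.finrank K (LinearMap.ker q) ≤ Module.finrank K ↥(V ⊓ J) := by
    have : Module.Finite K ↥(V ⊓ J) := Submodule.finiteDimensional_of_le inf_le_left
    have e : (LinearMap.ker q).map V.subtype ≤ V ⊓ J := by
      rintro _ ⟨x, hx, rfl⟩
      refine ⟨x.2, ?_⟩
      have : J.mkQ x.1 = 0 := hx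
      exact (Submodule.Quotient.mk_eq_zero J).1 this
    rw [← Submodule.finrank_map_subtype_eq]
    exact Submodule.finrank_mono e
  omega

lemma codim_inf {K : Type} [Field K] {s : ℕ} (p : Fin s → Fin 3 → K) (hp : ∀ i, p i ≠ 0)
    (m : Fin s → ℕ) (t : ℕ) (S : Finset (Fin s)) :
    Module.finrank K ↥(homogeneousSubmodule (Fin 3) K t) ≤
      Module.finrank K ↥(homogeneousSubmodule (Fin 3) K t ⊓
        (⨅ i ∈ S, pointIdeal (p i) ^ m i).restrictScalars K) + ∑ i ∈ S, (m i + 1).choose 2 := by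
  classical
  induction S using Finset.induction_on with
  | empty =>
    have e : homogeneousSubmodule (Fin 3) K t ⊓
        (⨅ i ∈ (∅ : Finset (Fin s)), pointIdeal (p i) ^ m i).restrictScalars K =
        homogeneousSubmodule (Fin 3) K t := by
      ext x; simp
    rw [e]
    simp
  | insert a S ha ih =>
    have h := codim_point (p a) (hp a) (m a) t (homogeneousSubmodule (Fin 3) K t ⊓
        (⨅ i ∈ S, pointIdeal (p i) ^ m i).restrictScalars K) inf_le_left
    rw [Finset.sum_insert ha]
    have e : homogeneousSubmodule (Fin 3) K t ⊓
        (⨅ i ∈ insert a S, pointIdeal (p i) ^ m i).restrictScalars K =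
        homogeneousSubmodule (Fin 3) K t ⊓
        (⨅ i ∈ S, pointIdeal (p i) ^ m i).restrictScalars K ⊓
          (pointIdeal (p a) ^ m a).restrictScalars K := by
      rw [Finset.iInf_insert]
      ext x
      simp only [Submodule.mem_inf, Submodule.restrictScalars_mem]
      tauto
    rw [e]
    omega

lemma forms_le_gradedDim {K : Type} [Field K] {s : ℕ} (p : Fin s → Fin 3 → K) (hp : ∀ i, p i ≠ 0)
    (m : Fin s → ℕ) (t : ℕ) :
    (t + 2).choose 2 ≤ gradedDim K (fatIdeal p m) t + ∑ i, (m i + 1).choose 2 := by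
  have := codim_inf p hp m t Finset.univ
  rw [finrank_forms] at this
  have e : (⨅ i ∈ (Finset.univ : Finset (Fin s)), pointIdeal (p i) ^ m i) = fatIdeal p m := by
    simp [fatIdeal]
  rw [e] at this
  exact this

/-! ### Restriction to a line -/

/-- The coordinate forms of a basis. -/
def coordForm {K : Type} [Field K] (b : Module.Basis (Fin 3) K (Fin 3 → K)) (i : Fin 3) :
    MvPolynomial (Fin 3) K :=
  linForm fun k => b.coord i (Pi.single k 1)

lemma eval_coordForm {K : Type} [Field K] (b : Module.Basis (Fin 3) K (Fin 3 → K)) (i : Fin 3)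
    (x : Fin 3 → K) : eval x (coordForm b i) = b.coord i x := by
  rw [coordForm, eval_linForm]
  conv_rhs => rw [← Finset.univ_sum_single x, map_sum]
  refine Finset.sum_congr rfl fun k _ => ?_
  have : (Pi.single k (x k) : Fin 3 → K) = x k • Pi.single k (1 : K) := by
    ext j
    by_cases h : j = k
    · subst h; simp
    · simp [h]
  rw [this, map_smul, smul_eq_mul, mul_comm]

lemma coordForm_ne_zero {K : Type} [Field K] (b : Module.Basis (Fin 3) K (Fin 3 → K))
    (i : Fin 3) : coordForm b i ≠ 0 := by
  intro h
  have := eval_coordForm b i (b i)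
  rw [h] at this
  simp at this

lemma X_eq_coord {K : Type} [Field K] (b : Module.Basis (Fin 3) K (Fin 3 → K)) (j : Fin 3) :
    (X j : MvPolynomial (Fin 3) K) = C (b 0 j) * coordForm b 0 + C (b 1 j) * coordForm b 1 +
      C (b 2 j) * coordForm b 2 := by
  have h : ∀ k, ∑ i, b.coord i (Pi.single k 1) * b i j = (Pi.single k (1 : K) : Fin 3 → K) j := by
    intro k
    have := congrFun (b.sum_repr (Pi.single k (1 : K))) j
    simpa using this
  have h2 : C (b 0 j) * coordForm b 0 + C (b 1 j) * coordForm b 1 + C (b 2 j) * coordForm b 2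
      = ∑ k, C (∑ i, b.coord i (Pi.single k 1) * b i j) * X k := by
    simp only [coordForm, linForm, Finset.mul_sum, ← Finset.sum_add_distrib]
    refine Finset.sum_congr rfl fun k _ => ?_
    rw [Fin.sum_univ_three]
    simp only [map_add, map_mul]
    ring
  rw [h2]
  simp only [h]
  rw [Finset.sum_eq_single j]
  · simp
  · intro k _ hk
    simp [hk.symm]
  · simp

/-- Restriction to the (affine part of the) line spanned by the first two basis vectors. -/
def lineRes {K : Type} [Field K] (b : Module.Basis (Fin 3) K (Fin 3 → K)) :
    MvPolynomial (Fin 3) K →ₐ[K] Polynomial K :=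
  aeval fun j => Polynomial.C (b 0 j) + Polynomial.X * Polynomial.C (b 1 j)

lemma aeval_scale {K A : Type} [Field K] [CommRing A] [Algebra K A] {d : ℕ}
    {f : MvPolynomial (Fin 3) K} (hf : f.IsHomogeneous d) (α : A) (r : Fin 3 → A) :
    aeval (fun j => α * r j) f = α ^ d * aeval r f := by
  rw [aeval_def, aeval_def, eval₂_eq', eval₂_eq', Finset.mul_sum]
  refine Finset.sum_congr rfl fun e he => ?_
  have hd : d = ∑ i, e i := by
    have h2 : d = e.degree := hf.degree_eq_sum_deg_support he
    rw [h2, Finsupp.degree_eq_sum]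
  simp only [mul_pow, Finset.prod_mul_distrib, Finset.prod_pow_eq_pow_sum, ← hd]
  ring

lemma dvd_of_lineRes {K : Type} [Field K] (b : Module.Basis (Fin 3) K (Fin 3 → K)) {d : ℕ}
    {f : MvPolynomial (Fin 3) K} (hf : f.IsHomogeneous d) (h0 : lineRes b f = 0) :
    coordForm b 2 ∣ f := by
  let q : Fin 3 → MvPolynomial (Fin 3) K := fun j =>
    C (b 0 j) * coordForm b 0 + C (b 1 j) * coordForm b 1
  have hq : aeval q f = 0 := by
    let F := FractionRing (MvPolynomial (Fin 3) K)
    let i : MvPolynomial (Fin 3) K →ₐ[K] F := IsScalarTower.toAlgHom K _ F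
    have hi : Function.Injective i := IsFractionRing.injective (MvPolynomial (Fin 3) K) F
    apply hi
    rw [map_zero]
    have hα : i (coordForm b 0) ≠ 0 := by
      rw [Ne, map_eq_zero_iff i hi]
      exact coordForm_ne_zero b 0
    set α := i (coordForm b 0)
    set β := i (coordForm b 1)
    have hβ : α * (β / α) = β := mul_div_cancel₀ β hα
    let r : Fin 3 → F := fun j => algebraMap K F (b 0 j) + (β / α) * algebraMap K F (b 1 j)
    have h1 : i (aeval q f) = aeval (fun j => α * r j) f := by
      have : i.comp (aeval q) = aeval (fun j => α * r j) := by
        ext j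
        simp only [AlgHom.comp_apply, aeval_X, q, map_add, map_mul, algHom_C, r]
        change algebraMap K F (b 0 j) * α + algebraMap K F (b 1 j) * β = _
        rw [mul_add, ← mul_assoc, hβ]
        ring
      exact DFunLike.congr_fun this f
    have h2 : aeval r f = Polynomial.aeval (β / α) (lineRes b f) := by
      have : aeval r = (Polynomial.aeval (β / α)).comp (lineRes b) := by
        ext j
        simp only [lineRes, r, AlgHom.comp_apply, aeval_X, map_add, map_mul, Polynomial.aeval_X,
          Polynomial.aeval_C]
      exact DFunLike.congr_fun this f
    rw [h1, aeval_scale hf, h2, h0, map_zero, mul_zero]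
  have hs : (Ideal.Quotient.mkₐ K (Ideal.span {coordForm b 2})).comp (aeval q) =
      Ideal.Quotient.mkₐ K (Ideal.span {coordForm b 2}) := by
    ext j
    simp only [AlgHom.comp_apply, aeval_X, Ideal.Quotient.mkₐ_eq_mk]
    rw [Ideal.Quotient.eq, Ideal.mem_span_singleton, X_eq_coord b j]
    exact ⟨-C (b 2 j), by simp only [q]; ring⟩
  have h3 := DFunLike.congr_fun hs f
  rw [AlgHom.comp_apply, hq, map_zero] at h3
  exact Ideal.mem_span_singleton.1 (Ideal.Quotient.eq_zero_iff_mem.1 h3.symm)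

lemma exists_homog_factor {K : Type} [Field K] {l f : MvPolynomial (Fin 3) K} {t : ℕ}
    (hl : l.IsHomogeneous 1) (hf : f.IsHomogeneous (t + 1)) (h : l ∣ f) :
    ∃ g, g.IsHomogeneous t ∧ f = l * g := by
  letI : GradedAlgebra (homogeneousSubmodule (Fin 3) K) := MvPolynomial.gradedAlgebra
  obtain ⟨g, rfl⟩ := h
  refine ⟨homogeneousComponent t g, homogeneousComponent_isHomogeneous _ _, ?_⟩
  have := DirectSum.coe_decompose_mul_add_of_left_mem (homogeneousSubmodule (Fin 3) K)
    (i := 1) (j := t) (b := g) (show l ∈ homogeneousSubmodule (Fin 3) K 1 from hl)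
  have e : ∀ (p : MvPolynomial (Fin 3) K) (i : ℕ),
    ((DirectSum.decompose (homogeneousSubmodule (Fin 3) K) p i : _) : MvPolynomial (Fin 3) K)
      = homogeneousComponent i p := fun p i => by
      exact decomposition.decompose'_apply p i
  rw [e, e, add_comm 1 t, homogeneousComponent_eq_self hf] at this
  exact this

lemma lineRes_dvd {K : Type} [Field K] (b : Module.Basis (Fin 3) K (Fin 3 → K)) (P : Fin 3 → K)
    (h2 : b.coord 2 P = 0) (h0 : b.coord 0 P ≠ 0) (m : ℕ) (f : MvPolynomial (Fin 3) K)
    (hf : f ∈ pointIdeal P ^ m) :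
    (Polynomial.X - Polynomial.C (b.coord 1 P / b.coord 0 P)) ^ m ∣ lineRes b f := by
  have hP : ∀ j, P j = b.coord 0 P * b 0 j + b.coord 1 P * b 1 j := by
    intro j
    have := congrFun (b.sum_repr P) j
    simp only [Fin.sum_univ_three, Pi.add_apply, Pi.smul_apply, smul_eq_mul] at this
    simp only [Module.Basis.coord_apply] at h2 ⊢
    rw [h2] at this
    rw [← this]
    ring
  have h1 : (pointIdeal P).map (lineRes b) ≤
      Ideal.span {Polynomial.X - Polynomial.C (b.coord 1 P / b.coord 0 P)} := by
    rw [pointIdeal, Ideal.map_span, Ideal.span_le]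
    rintro _ ⟨g, ⟨hg, hg0⟩, rfl⟩
    obtain ⟨a, rfl⟩ := exists_linForm hg
    rw [SetLike.mem_coe, Ideal.mem_span_singleton]
    rw [eval_linForm] at hg0
    have e1 : lineRes b (linForm a) = Polynomial.C (∑ k, a k * b 0 k) +
        Polynomial.X * Polynomial.C (∑ k, a k * b 1 k) := by
      simp only [linForm, map_sum, map_mul, lineRes, aeval_X, algHom_C,
        Polynomial.algebraMap_eq, Finset.mul_sum, ← Finset.sum_add_distrib]
      refine Finset.sum_congr rfl fun i _ => ?_
      ring
    have e2 : b.coord 0 P * (∑ k, a k * b 0 k) + b.coord 1 P * (∑ k, a k * b 1 k) = 0 := by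
      rw [← hg0, Finset.mul_sum, Finset.mul_sum, ← Finset.sum_add_distrib]
      refine Finset.sum_congr rfl fun i _ => ?_
      rw [hP i]
      ring
    have e3 : (∑ k, a k * b 0 k) = - (b.coord 1 P / b.coord 0 P * (∑ k, a k * b 1 k)) := by
      field_simp
      linear_combination e2
    refine ⟨Polynomial.C (∑ k, a k * b 1 k), ?_⟩
    rw [e1, e3, map_neg, map_mul]
    ring
  have h2 := Ideal.mem_map_of_mem (lineRes b) hf
  rw [Ideal.map_pow] at h2
  have h3 := Ideal.pow_right_mono h1 m h2
  rwa [Ideal.span_singleton_pow, Ideal.mem_span_singleton] at h3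

/-- Residuation along a line. -/
lemma line_step {K : Type} [Field K] {s : ℕ} (b : Module.Basis (Fin 3) K (Fin 3 → K))
    (p : Fin s → Fin 3 → K) (hdist : ProjDistinct p) (S : Finset (Fin s))
    (hS : ∀ i, i ∈ S ↔ b.coord 2 (p i) = 0) (h0 : ∀ i ∈ S, b.coord 0 (p i) ≠ 0)
    (m m' : Fin s → ℕ) (hm' : ∀ i ∈ S, m' i = m i - 1) (hm'' : ∀ i, i ∉ S → m' i = m i)
    (t : ℕ) (ht : ∑ i ∈ S, m i ≤ t + 2) :
    gradedDim K (fatIdeal p m) (t + 1) + ∑ i ∈ S, m i ≤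
      gradedDim K (fatIdeal p m') t + (t + 2) := by
  classical
  unfold gradedDim
  set V := homogeneousSubmodule (Fin 3) K (t + 1) ⊓ (fatIdeal p m).restrictScalars K with hV
  set V' := homogeneousSubmodule (Fin 3) K t ⊓ (fatIdeal p m').restrictScalars K with hV'
  have : Module.Finite K V := Submodule.finiteDimensional_of_le inf_le_left
  have : Module.Finite K V' := Submodule.finiteDimensional_of_le inf_le_left
  let a : Fin s → K := fun i => b.coord 1 (p i) / b.coord 0 (p i)
  have hcomb : ∀ i ∈ S, p i = b.coord 0 (p i) • (b 0 + a i • b 1) := by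
    intro i hi
    have h := b.sum_repr (p i)
    have h2 := (hS i).1 hi
    simp only [Fin.sum_univ_three] at h
    simp only [Module.Basis.coord_apply] at h2
    rw [h2, zero_smul, add_zero] at h
    conv_lhs => rw [← h]
    rw [smul_add, smul_smul, mul_div_cancel₀ _ (h0 i hi)]
    rfl
  have hainj : ∀ i ∈ S, ∀ j ∈ S, i ≠ j → a i ≠ a j := by
    intro i hi j hj hij haij
    apply hdist.2 i j hij (b.coord 0 (p i) / b.coord 0 (p j))
    have h1 := hcomb i hi
    have h2 := hcomb j hj
    have h3 : (b.coord 0 (p i) / b.coord 0 (p j)) • p j =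
        (b.coord 0 (p i) / b.coord 0 (p j)) • b.coord 0 (p j) • (b 0 + a j • b 1) :=
      congrArg _ h2
    rw [smul_smul, div_mul_cancel₀ _ (h0 j hj), ← haij] at h3
    exact h1.trans h3.symm
  let G : Polynomial K := ∏ i ∈ S, (Polynomial.X - Polynomial.C (a i)) ^ m i
  have hGm : G.Monic := Polynomial.monic_prod_of_monic _ _ fun i _ =>
    (Polynomial.monic_X_sub_C _).pow _
  have hGd : G.natDegree = ∑ i ∈ S, m i := by
    rw [Polynomial.natDegree_prod_of_monic _ _ fun i _ => (Polynomial.monic_X_sub_C _).pow _]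
    simp
  have hGdvd : ∀ f ∈ V, G ∣ lineRes b f := by
    intro f hf
    refine Finset.prod_dvd_of_coprime ?_ ?_
    · intro i hi j hj hij
      refine IsCoprime.pow ?_
      exact Polynomial.isCoprime_X_sub_C_of_isUnit_sub
        (sub_ne_zero.2 (hainj i hi j hj hij)).isUnit
    · intro i hi
      refine lineRes_dvd b (p i) ((hS i).1 hi) (h0 i hi) _ f ?_
      have hfI : f ∈ fatIdeal p m := hf.2
      exact (Ideal.mem_iInf.1 hfI) i
  let q := (lineRes b).toLinearMap.domRestrict V
  have h1 := q.finrank_range_add_finrank_ker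
  have h2 : Module.finrank K (LinearMap.range q) ≤ t + 2 - ∑ i ∈ S, m i := by
    have hle : LinearMap.range q ≤ (Polynomial.degreeLT K (t + 2 - ∑ i ∈ S, m i)).map
        (LinearMap.mulLeft K G) := by
      rintro _ ⟨f, rfl⟩
      obtain ⟨r, hr⟩ := hGdvd f.1 f.2
      refine ⟨r, ?_, hr.symm⟩
      by_cases hr0 : r = 0
      · rw [hr0]; exact Submodule.zero_mem _
      have hdeg : (lineRes b f.1).natDegree ≤ (t + 1) * 1 := by
        refine aeval_natDegree_le _ (IsHomogeneous.totalDegree_le f.2.1) _ fun j => ?_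
        compute_degree
      rw [hr, hGm.natDegree_mul' hr0, hGd] at hdeg
      rw [SetLike.mem_coe, Polynomial.mem_degreeLT, Polynomial.degree_eq_natDegree hr0]
      exact_mod_cast (by omega : r.natDegree < t + 2 - ∑ i ∈ S, m i)
    have hfin : Module.Finite K (Polynomial.degreeLT K (t + 2 - ∑ i ∈ S, m i)) :=
      Module.Finite.equiv (Polynomial.degreeLTEquiv K _).symm
    refine (Submodule.finrank_mono hle).trans ((Submodule.finrank_map_le _ _).trans ?_)
    rw [(Polynomial.degreeLTEquiv K _).finrank_eq]
    simp
  have h3 : Module.finrank K (LinearMap.ker q) ≤ Module.finrank K V' := by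
    have hle : (LinearMap.ker q).map V.subtype ≤ V'.map (LinearMap.mulLeft K (coordForm b 2)) := by
      rintro _ ⟨f, hf, rfl⟩
      have hf0 : lineRes b f.1 = 0 := hf
      obtain ⟨g, hg, hfg⟩ := exists_homog_factor (linForm_isHomogeneous _)
        (show f.1.IsHomogeneous (t + 1) from f.2.1) (dvd_of_lineRes b f.2.1 hf0)
      refine ⟨g, ⟨hg, ?_⟩, hfg.symm⟩
      have hfI : f.1 ∈ fatIdeal p m := f.2.2
      change g ∈ fatIdeal p m'
      refine Ideal.mem_iInf.2 fun i => ?_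
      have hfi := (Ideal.mem_iInf.1 hfI) i
      rw [hfg] at hfi
      by_cases hi : i ∈ S
      · rw [hm' i hi]
        refine colon_mem (p i) (hdist.1 i) _ ?_ (coordForm_ne_zero b 2) _ g hfi
        exact (eval_coordForm b 2 (p i)).trans ((hS i).1 hi)
      · rw [hm'' i hi]
        refine colon_notMem (p i) (hdist.1 i) _ ?_ _ g hfi
        intro h
        exact hi ((hS i).2 ((eval_coordForm b 2 (p i)).symm.trans h))
    rw [← Submodule.finrank_map_subtype_eq]
    exact (Submodule.finrank_mono hle).trans (Submodule.finrank_map_le _ _)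
  omega

/-- Multiplication by the equation of a line. -/
lemma line_mul {K : Type} [Field K] {s : ℕ} (b : Module.Basis (Fin 3) K (Fin 3 → K))
    (p : Fin s → Fin 3 → K) (S : Finset (Fin s))
    (hS : ∀ i ∈ S, b.coord 2 (p i) = 0)
    (m m' : Fin s → ℕ) (hm' : ∀ i ∈ S, m i ≤ m' i + 1) (hm'' : ∀ i, i ∉ S → m' i = m i) (t : ℕ) :
    gradedDim K (fatIdeal p m') t ≤ gradedDim K (fatIdeal p m) (t + 1) := by
  unfold gradedDim
  set V := homogeneousSubmodule (Fin 3) K (t + 1) ⊓ (fatIdeal p m).restrictScalars K with hV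
  set V' := homogeneousSubmodule (Fin 3) K t ⊓ (fatIdeal p m').restrictScalars K with hV'
  have : Module.Finite K V := Submodule.finiteDimensional_of_le inf_le_left
  have hinj : Function.Injective (LinearMap.mulLeft K (coordForm b 2)) :=
    fun x y h => mul_left_cancel₀ (coordForm_ne_zero b 2) h
  have hle : V'.map (LinearMap.mulLeft K (coordForm b 2)) ≤ V := by
    rintro _ ⟨g, ⟨hg, hgI⟩, rfl⟩
    refine ⟨?_, ?_⟩
    · have := (linForm_isHomogeneous (fun k => b.coord 2 (Pi.single k 1))).mul
        (show g.IsHomogeneous t from hg)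
      rw [add_comm] at this
      exact this
    · change coordForm b 2 * g ∈ fatIdeal p m
      have hgI : g ∈ fatIdeal p m' := hgI
      refine Ideal.mem_iInf.2 fun i => ?_
      have hgi := (Ideal.mem_iInf.1 hgI) i
      by_cases hi : i ∈ S
      · refine Ideal.pow_le_pow_right (hm' i hi) ?_
        rw [pow_succ']
        refine Ideal.mul_mem_mul (mem_pointIdeal_linForm _ _ ?_) hgi
        exact (eval_coordForm b 2 (p i)).trans (hS i hi)
      · rw [← hm'' i hi]
        exact Ideal.mul_mem_left _ _ hgi
  calc _ = Module.finrank K ↥(V'.map (LinearMap.mulLeft K (coordForm b 2))) :=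
        (LinearEquiv.finrank_eq (Submodule.equivMapOfInjective _ hinj V'))
    _ ≤ _ := Submodule.finrank_mono hle

/-! ### Geometry of the configuration -/

lemma exists_line_basis {K : Type} [Field K] (W : Submodule K (Fin 3 → K))
    (hW : Module.finrank K W = 2) (v : Fin 3 → K) (hv : v ∈ W) (hv0 : v ≠ 0) :
    ∃ b : Module.Basis (Fin 3) K (Fin 3 → K), (∀ x, x ∈ W ↔ b.coord 2 x = 0) ∧
      ∀ x ∈ W, x ∉ Submodule.span K {v} → b.coord 0 x ≠ 0 := by
  obtain ⟨u, hu, huv⟩ : ∃ u ∈ W, u ∉ Submodule.span K {v} := by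
    by_contra! h
    have h1 : W ≤ Submodule.span K {v} := h
    have h2 := Submodule.finrank_mono h1
    rw [hW, finrank_span_singleton hv0] at h2
    omega
  obtain ⟨w, hw⟩ : ∃ w, w ∉ W := by
    by_contra! h
    have h1 : W = ⊤ := by ext x; simp [h x]
    rw [h1, finrank_top] at hW
    simp at hW
  have hli : LinearIndependent K ![u, v, w] := by
    rw [Fintype.linearIndependent_iff]
    intro g hg
    simp only [Fin.sum_univ_three, Matrix.cons_val_zero, Matrix.cons_val_one,
      Matrix.cons_val] at hg
    have g2 : g 2 = 0 := by
      by_contra h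
      apply hw
      have h1 : g 2 • w ∈ W := by
        have : g 2 • w = -(g 0 • u + g 1 • v) := (neg_eq_of_add_eq_zero_right hg).symm
        rw [this]
        exact W.neg_mem (W.add_mem (W.smul_mem _ hu) (W.smul_mem _ hv))
      exact (W.smul_mem_iff h).1 h1
    rw [g2, zero_smul, add_zero] at hg
    have g0 : g 0 = 0 := by
      by_contra h
      apply huv
      refine ((Submodule.span K {v}).smul_mem_iff h).1 ?_
      rw [eq_neg_of_add_eq_zero_left hg]
      exact Submodule.neg_mem _ (Submodule.smul_mem _ _ (Submodule.mem_span_singleton_self v))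
    rw [g0, zero_smul, zero_add] at hg
    have g1 : g 1 = 0 := (smul_eq_zero.1 hg).resolve_right hv0
    intro i
    fin_cases i
    · exact g0
    · exact g1
    · exact g2
  let b := basisOfLinearIndependentOfCardEqFinrank hli (by simp)
  have hb : ∀ i, b i = ![u, v, w] i := fun i => by
    simp [b, coe_basisOfLinearIndependentOfCardEqFinrank]
  have hsum : ∀ x, b.coord 0 x • u + b.coord 1 x • v + b.coord 2 x • w = x := by
    intro x
    have h := b.sum_repr x
    simp only [Fin.sum_univ_three, hb] at h
    simpa using h
  have hiff : ∀ x, x ∈ W ↔ b.coord 2 x = 0 := by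
    intro x
    have hmem : b.coord 0 x • u + b.coord 1 x • v ∈ W :=
      W.add_mem (W.smul_mem _ hu) (W.smul_mem _ hv)
    constructor
    · intro hx
      by_contra h
      apply hw
      refine (W.smul_mem_iff h).1 ?_
      refine (W.add_mem_iff_right hmem).1 ?_
      rw [hsum x]
      exact hx
    · intro hx
      have h := hsum x
      rw [hx, zero_smul, add_zero] at h
      rw [← h]
      exact hmem
  refine ⟨b, hiff, fun x hx hxv h0 => hxv ?_⟩
  have h := hsum x
  rw [h0, (hiff x).1 hx, zero_smul, zero_smul, add_zero, zero_add] at h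
  rw [← h]
  exact Submodule.smul_mem _ _ (Submodule.mem_span_singleton_self v)

/-- Residuation, phrased for a plane `W` (that is, a line of `ℙ²`). -/
lemma line_step' {K : Type} [Field K] {s : ℕ} (W : Submodule K (Fin 3 → K))
    (hW : Module.finrank K W = 2) (v : Fin 3 → K) (hv : v ∈ W) (hv0 : v ≠ 0)
    (p : Fin s → Fin 3 → K) (hdist : ProjDistinct p) (S : Finset (Fin s))
    (hS : ∀ i, i ∈ S ↔ p i ∈ W) (h0 : ∀ i ∈ S, p i ∉ Submodule.span K {v})
    (m m' : Fin s → ℕ) (hm' : ∀ i ∈ S, m' i = m i - 1) (hm'' : ∀ i, i ∉ S → m' i = m i)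
    (t : ℕ) (ht : ∑ i ∈ S, m i ≤ t + 2) :
    gradedDim K (fatIdeal p m) (t + 1) + ∑ i ∈ S, m i ≤
      gradedDim K (fatIdeal p m') t + (t + 2) := by
  obtain ⟨b, hb, hb0⟩ := exists_line_basis W hW v hv hv0
  exact line_step b p hdist S (fun i => (hS i).trans (hb _))
    (fun i hi => hb0 _ ((hS i).1 hi) (h0 i hi)) m m' hm' hm'' t ht

lemma gradedDim_zero {K : Type} [Field K] {s : ℕ} (p : Fin s → Fin 3 → K) (m : Fin s → ℕ)
    (i : Fin s) (hi : m i = 1) : gradedDim K (fatIdeal p m) 0 = 0 := by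
  have : homogeneousSubmodule (Fin 3) K 0 ⊓ (fatIdeal p m).restrictScalars K = ⊥ := by
    rw [eq_bot_iff]
    rintro f ⟨hf, hfI⟩
    have hfI : f ∈ fatIdeal p m := hfI
    have hfi := (Ideal.mem_iInf.1 hfI) i
    rw [hi, pow_one] at hfi
    have hle : pointIdeal (p i) ≤ RingHom.ker (eval (p i)) := by
      rw [pointIdeal, Ideal.span_le]
      rintro g ⟨_, hg⟩
      exact hg
    have he : eval (p i) f = 0 := hle hfi
    have hc : f = C (coeff 0 f) :=
      totalDegree_eq_zero_iff_eq_C.1 ((totalDegree_zero_iff_isHomogeneous _).2 hf)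
    rw [hc, eval_C] at he
    rw [hc, he, map_zero]
    exact Submodule.zero_mem _
  rw [gradedDim, this]
  simp

lemma exists_inter {K : Type} [Field K] (W₁ W₂ : Submodule K (Fin 3 → K))
    (h1 : Module.finrank K ↥W₁ = 2) (h2 : Module.finrank K ↥W₂ = 2) :
    ∃ v, v ∈ W₁ ∧ v ∈ W₂ ∧ v ≠ 0 := by
  have h := Submodule.finrank_sup_add_finrank_inf_eq W₁ W₂
  have h3 : Module.finrank K ↥(W₁ ⊔ W₂) ≤ 3 := by
    have := Submodule.finrank_le (W₁ ⊔ W₂)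
    simpa using this
  have hne : W₁ ⊓ W₂ ≠ ⊥ := by
    intro hb
    rw [hb, finrank_bot] at h
    omega
  obtain ⟨v, hv, hv0⟩ := Submodule.exists_mem_ne_zero_of_ne_bot hne
  exact ⟨v, hv.1, hv.2, hv0⟩

lemma finrank_pair {K : Type} [Field K] (x y : Fin 3 → K) :
    Module.finrank K ↥(Submodule.span K {x, y}) ≤ 2 := by
  classical
  have h := finrank_span_finset_le_card (R := K) ({x, y} : Finset (Fin 3 → K))
  have h2 : Module.finrank K ↥(Submodule.span K {x, y}) =
    (({x, y} : Finset (Fin 3 → K)) : Set (Fin 3 → K)).finrank K := by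
    rw [Finset.coe_pair]; rfl
  rw [h2]
  exact h.trans Finset.card_le_two

/-- Two distinct points span their common line. -/
lemma eq_of_two_points {K : Type} [Field K] {W W' : Submodule K (Fin 3 → K)}
    (hW : Module.finrank K W ≤ 2) (hW' : Module.finrank K W' = 2) {x y : Fin 3 → K}
    (hx0 : x ≠ 0) (hxy : ∀ c : K, y ≠ c • x)
    (hx : x ∈ W) (hy : y ∈ W) (hx' : x ∈ W') (hy' : y ∈ W') : W = W' := by
  have h2 : 2 ≤ Module.finrank K ↥(W ⊓ W') := by
    by_contra h
    have hle : Submodule.span K {x} ≤ W ⊓ W' := by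
      rw [Submodule.span_le]
      rintro _ rfl
      exact ⟨hx, hx'⟩
    have heq := Submodule.eq_of_le_of_finrank_le hle (by
      rw [finrank_span_singleton hx0]; omega)
    have hyi : y ∈ W ⊓ W' := ⟨hy, hy'⟩
    rw [← heq] at hyi
    obtain ⟨c, hc⟩ := Submodule.mem_span_singleton.1 hyi
    exact hxy c hc.symm
  have e1 := Submodule.eq_of_le_of_finrank_le (inf_le_left : W ⊓ W' ≤ W) (by omega)
  have e2 := Submodule.eq_of_le_of_finrank_le (inf_le_right : W ⊓ W' ≤ W') (by omega)
  exact e1.symm.trans e2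

lemma exists_third_line {K : Type} [Field K] [Infinite K] (p : Fin 6 → Fin 3 → K)
    (hdist : ProjDistinct p) : ∃ (W : Submodule K (Fin 3 → K)) (v : Fin 3 → K),
      Module.finrank K W = 2 ∧ v ∈ W ∧ v ≠ 0 ∧ (∀ i, i ∈ ({5} : Finset (Fin 6)) ↔ p i ∈ W) ∧
      p 5 ∉ Submodule.span K {v} := by
  obtain ⟨v, hv⟩ : ∃ v, ∀ i, v ∉ Submodule.span K {p 5, p i} := by
    by_contra! h
    obtain ⟨i, hi⟩ := Subspace.exists_eq_top_of_iUnion_eq_univ (k := K)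
      (p := fun i : Fin 6 => Submodule.span K {p 5, p i}) (by
        ext v
        simpa using h v)
    have := finrank_pair (p 5) (p i)
    rw [hi, finrank_top] at this
    simp at this
  have hv0 : v ≠ 0 := by
    rintro rfl
    exact hv 0 (Submodule.zero_mem _)
  have h5v : p 5 ∉ Submodule.span K {v} := by
    intro h
    obtain ⟨c, hc⟩ := Submodule.mem_span_singleton.1 h
    have hc0 : c ≠ 0 := by
      rintro rfl
      exact hdist.1 5 (by rw [← hc, zero_smul])
    apply hv 5
    refine ((Submodule.span K {p 5, p 5}).smul_mem_iff hc0).1 ?_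
    rw [hc]
    exact Submodule.subset_span (by simp)
  refine ⟨Submodule.span K {p 5, v}, v, ?_, Submodule.subset_span (by simp), hv0, ?_, h5v⟩
  · refine le_antisymm (finrank_pair _ _) ?_
    by_contra h
    have hle : Submodule.span K {v} ≤ Submodule.span K {p 5, v} :=
      Submodule.span_mono (by simp)
    have heq := Submodule.eq_of_le_of_finrank_le hle (by
      rw [finrank_span_singleton hv0]; omega)
    apply h5v
    rw [heq]
    exact Submodule.subset_span (by simp)
  · intro i
    rw [Finset.mem_singleton]
    constructor
    · rintro rfl
      exact Submodule.subset_span (by simp)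
    · intro hi
      by_contra hne
      obtain ⟨a, c, hac⟩ := Submodule.mem_span_pair.1 hi
      by_cases hc : c = 0
      · rw [hc, zero_smul, add_zero] at hac
        exact hdist.2 i 5 hne a hac.symm
      · apply hv i
        refine ((Submodule.span K {p 5, p i}).smul_mem_iff hc).1 ?_
        rw [eq_sub_of_add_eq' hac]
        exact Submodule.sub_mem _ (Submodule.subset_span (by simp))
          (Submodule.smul_mem _ _ (Submodule.subset_span (by simp)))

/-! ### The upper and lower bounds -/

lemma choose_two_succ (n : ℕ) : (n + 1).choose 2 = n + n.choose 2 := by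
  rw [Nat.choose_succ_succ' n 1, Nat.choose_one_right]

lemma upper_bound_s12 {K : Type} [Field K] [Infinite K]
    (W₁ W₂ : Submodule K (Fin 3 → K))
    (h1 : Module.finrank K ↥W₁ = 2) (h2 : Module.finrank K ↥W₂ = 2)
    (p : Fin 6 → Fin 3 → K) (hdist : ProjDistinct p)
    (h123 : ∀ i : Fin 6, (i : ℕ) < 3 → p i ∈ W₁ ∧ p i ∉ W₂)
    (h45 : ∀ i : Fin 6, (i : ℕ) = 3 ∨ (i : ℕ) = 4 → p i ∈ W₂ ∧ p i ∉ W₁)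
    (h6 : p 5 ∉ W₁ ∧ p 5 ∉ W₂) (k : ℕ) :
    gradedDim K (fatIdeal p fun _ => k + 1) (3 * k + 2) + 6 * (k + 2).choose 2 ≤
      (3 * k + 4).choose 2 := by
  obtain ⟨v, hv1, hv2, hv0⟩ := exists_inter W₁ W₂ h1 h2
  obtain ⟨W₃, w, h3, hw, hw0, hS3, h5w⟩ := exists_third_line p hdist
  have hS1 : ∀ i, i ∈ ({0, 1, 2} : Finset (Fin 6)) ↔ p i ∈ W₁ := by
    intro i
    fin_cases i
    · simpa using (h123 0 (by decide)).1
    · simpa using (h123 1 (by decide)).1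
    · simpa using (h123 2 (by decide)).1
    · simpa using (h45 3 (by decide)).2
    · simpa using (h45 4 (by decide)).2
    · simpa using h6.1
  have hS2 : ∀ i, i ∈ ({3, 4} : Finset (Fin 6)) ↔ p i ∈ W₂ := by
    intro i
    fin_cases i
    · simpa using (h123 0 (by decide)).2
    · simpa using (h123 1 (by decide)).2
    · simpa using (h123 2 (by decide)).2
    · simpa using (h45 3 (by decide)).1
    · simpa using (h45 4 (by decide)).1
    · simpa using h6.2
  have hn1 : ∀ i ∈ ({0, 1, 2} : Finset (Fin 6)), p i ∉ Submodule.span K {v} := by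
    intro i hi hs
    have hle : Submodule.span K {v} ≤ W₂ := by
      rw [Submodule.span_le]; rintro _ rfl; exact hv2
    have := (hS2 i).2 (hle hs)
    clear hs
    revert hi this
    revert i
    decide
  have hn2 : ∀ i ∈ ({3, 4} : Finset (Fin 6)), p i ∉ Submodule.span K {v} := by
    intro i hi hs
    have hle : Submodule.span K {v} ≤ W₁ := by
      rw [Submodule.span_le]; rintro _ rfl; exact hv1
    have := (hS1 i).2 (hle hs)
    clear hs
    revert hi this
    revert i
    decide
  have hn3 : ∀ i ∈ ({5} : Finset (Fin 6)), p i ∉ Submodule.span K {w} := by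
    intro i hi
    rw [Finset.mem_singleton.1 hi]
    exact h5w
  let m1 : ℕ → Fin 6 → ℕ := fun k i => if (i : ℕ) < 3 then k else k + 1
  let m2 : ℕ → Fin 6 → ℕ := fun k i => if (i : ℕ) < 5 then k else k + 1
  have s1 : ∀ k, gradedDim K (fatIdeal p fun _ => k + 1) (3 * k + 2) + 3 * (k + 1) ≤
      gradedDim K (fatIdeal p (m1 k)) (3 * k + 1) + (3 * k + 3) := by
    intro k
    have hs : ∑ i ∈ ({0, 1, 2} : Finset (Fin 6)), (k + 1) = 3 * (k + 1) := by simp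
    have h := line_step' W₁ h1 v hv1 hv0 p hdist {0, 1, 2} hS1 hn1 (fun _ => k + 1) (m1 k)
      (by intro i; fin_cases i <;> simp [m1]) (by intro i; fin_cases i <;> simp [m1])
      (3 * k + 1) (by rw [hs]; omega)
    rw [hs] at h
    exact h
  have s2 : ∀ k, gradedDim K (fatIdeal p (m1 k)) (3 * k + 1) + 2 * (k + 1) ≤
      gradedDim K (fatIdeal p (m2 k)) (3 * k) + (3 * k + 2) := by
    intro k
    have hs : ∑ i ∈ ({3, 4} : Finset (Fin 6)), m1 k i = 2 * (k + 1) := by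
      rw [Finset.sum_pair (by decide)]
      simp [m1]
      ring
    have h := line_step' W₂ h2 v hv2 hv0 p hdist {3, 4} hS2 hn2 (m1 k) (m2 k)
      (by intro i; fin_cases i <;> simp [m1, m2]) (by intro i; fin_cases i <;> simp [m1, m2])
      (3 * k) (by rw [hs]; omega)
    rw [hs] at h
    exact h
  have s3 : ∀ k, gradedDim K (fatIdeal p (m2 (k + 1))) (3 * k + 3) + (k + 2) ≤
      gradedDim K (fatIdeal p fun _ => k + 1) (3 * k + 2) + (3 * k + 4) := by
    intro k
    have hs : ∑ i ∈ ({5} : Finset (Fin 6)), m2 (k + 1) i = k + 2 := by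
      rw [Finset.sum_singleton]
      simp [m2]
    have h := line_step' W₃ h3 w hw hw0 p hdist {5} hS3 hn3 (m2 (k + 1)) (fun _ => k + 1)
      (by intro i; fin_cases i <;> simp [m2]) (by intro i; fin_cases i <;> simp [m2])
      (3 * k + 2) (by rw [hs]; omega)
    rw [hs] at h
    exact h
  induction k with
  | zero =>
    have a := s1 0
    have b := s2 0
    have c : gradedDim K (fatIdeal p (m2 0)) 0 = 0 := gradedDim_zero p (m2 0) 5 (by simp [m2])
    have e : Nat.choose 4 2 = 6 := rfl
    have e' : Nat.choose 2 2 = 1 := rfl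
    simp only [Nat.mul_zero, Nat.zero_add] at a b ⊢
    omega
  | succ k ih =>
    have a := s1 (k + 1)
    have b := s2 (k + 1)
    have c : gradedDim K (fatIdeal p (m2 (k + 1))) (3 * (k + 1)) + (k + 2) ≤
        gradedDim K (fatIdeal p fun _ => k + 1) (3 * k + 2) + (3 * k + 4) := s3 k
    have e1 : (3 * (k + 1) + 4).choose 2 = (3 * k + 6) + ((3 * k + 5) + ((3 * k + 4) +
        (3 * k + 4).choose 2)) := by
      rw [← choose_two_succ, ← choose_two_succ, ← choose_two_succ]
      rfl
    have e2 : (k + 1 + 2).choose 2 = (k + 2) + (k + 2).choose 2 := choose_two_succ (k + 2)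
    omega

lemma lower_bound {K : Type} [Field K]
    (W₁ W₂ : Submodule K (Fin 3 → K))
    (h1 : Module.finrank K ↥W₁ = 2) (h2 : Module.finrank K ↥W₂ = 2)
    (p : Fin 6 → Fin 3 → K) (hdist : ProjDistinct p)
    (h123 : ∀ i : Fin 6, (i : ℕ) < 3 → p i ∈ W₁ ∧ p i ∉ W₂) (k t : ℕ) :
    (t + 2).choose 2 + 3 * (k + 1) ≤
      gradedDim K (fatIdeal p fun _ => k + 1) (t + 1) + 6 * (k + 2).choose 2 := by
  obtain ⟨v, hv1, hv2, hv0⟩ := exists_inter W₁ W₂ h1 h2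
  obtain ⟨b, hb, -⟩ := exists_line_basis W₁ h1 v hv1 hv0
  let m1 : Fin 6 → ℕ := fun i => if (i : ℕ) < 3 then k else k + 1
  have h := line_mul b p (Finset.univ.filter fun i : Fin 6 => (i : ℕ) < 3)
    (fun i hi => (hb _).1 (h123 i (by simpa using hi)).1) (fun _ => k + 1) m1
    (fun i hi => by simp only [m1]; split_ifs <;> omega)
    (fun i hi => by
      have : ¬ (i : ℕ) < 3 := by simpa using hi
      simp [m1, this]) t
  have h' := forms_le_gradedDim p hdist.1 m1 t
  have e : ∑ i, (m1 i + 1).choose 2 = 3 * (k + 1).choose 2 + 3 * (k + 2).choose 2 := by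
    simp [Fin.sum_univ_six, m1]
    ring
  have e2 : (k + 2).choose 2 = (k + 1) + (k + 1).choose 2 := choose_two_succ (k + 1)
  omega

lemma card_le_three_aux (Q : Finset (Fin 6))
    (f1 : ∀ i j : Fin 6, i ∈ Q → j ∈ Q → i ≠ j → (i : ℕ) < 3 → (j : ℕ) < 3 →
      ∀ l ∈ Q, (l : ℕ) < 3)
    (f2 : (3 : Fin 6) ∈ Q → (4 : Fin 6) ∈ Q → (5 : Fin 6) ∉ Q) : Q.card ≤ 3 := by
  by_cases h : ∀ l ∈ Q, (l : ℕ) < 3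
  · have hs : Q ⊆ {0, 1, 2} := by
      intro l hl
      have := h l hl
      clear f1 f2 h hl
      revert l
      decide
    exact (Finset.card_le_card hs).trans (by decide)
  · have f01 : (0 : Fin 6) ∈ Q → (1 : Fin 6) ∉ Q := fun a b =>
      h (f1 0 1 a b (by decide) (by decide) (by decide))
    have f02 : (0 : Fin 6) ∈ Q → (2 : Fin 6) ∉ Q := fun a b =>
      h (f1 0 2 a b (by decide) (by decide) (by decide))
    have f12 : (1 : Fin 6) ∈ Q → (2 : Fin 6) ∉ Q := fun a b =>
      h (f1 1 2 a b (by decide) (by decide) (by decide))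
    clear f1 h
    revert Q
    decide

lemma segre_value {K : Type} [Field K]
    (W₁ W₂ : Submodule K (Fin 3 → K))
    (h1 : Module.finrank K ↥W₁ = 2) (h2 : Module.finrank K ↥W₂ = 2)
    (p : Fin 6 → Fin 3 → K) (hdist : ProjDistinct p)
    (h123 : ∀ i : Fin 6, (i : ℕ) < 3 → p i ∈ W₁ ∧ p i ∉ W₂)
    (h45 : ∀ i : Fin 6, (i : ℕ) = 3 ∨ (i : ℕ) = 4 → p i ∈ W₂ ∧ p i ∉ W₁)
    (h6 : p 5 ∉ W₁ ∧ p 5 ∉ W₂) (m : ℕ) :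
    segreBound 2 p (fun _ => m) = 3 * m := by
  classical
  have hline : ∀ Q : Finset (Fin 6), OnLinearSubspace p Q 1 → Q.card ≤ 3 := by
    rintro Q ⟨W, hW, hQ⟩
    have f1 : ∀ i j : Fin 6, i ∈ Q → j ∈ Q → i ≠ j → (i : ℕ) < 3 → (j : ℕ) < 3 →
        ∀ l ∈ Q, (l : ℕ) < 3 := by
      intro i j hi hj hij hi3 hj3 l hl
      have e := eq_of_two_points hW h1 (hdist.1 i) (hdist.2 j i hij.symm) (hQ i hi) (hQ j hj)
        (h123 i hi3).1 (h123 j hj3).1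
      have hl' := hQ l hl
      rw [e] at hl'
      by_contra hl3
      by_cases hl5 : l = 5
      · rw [hl5] at hl'; exact h6.1 hl'
      · exact (h45 l (by omega)).2 hl'
    have f2 : (3 : Fin 6) ∈ Q → (4 : Fin 6) ∈ Q → (5 : Fin 6) ∉ Q := by
      intro h3 h4 h5
      have e := eq_of_two_points hW h2 (hdist.1 3) (hdist.2 4 3 (by decide)) (hQ 3 h3) (hQ 4 h4)
        (h45 3 (by decide)).1 (h45 4 (by decide)).1
      have hl' := hQ 5 h5
      rw [e] at hl'
      exact h6.2 hl'
    exact card_le_three_aux Q f1 f2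
  unfold segreBound
  apply le_antisymm
  · refine Finset.sup_le fun j hj => Finset.sup_le fun Q _ => ?_
    have hj' := Finset.mem_Icc.1 hj
    split_ifs with h
    · rw [Finset.sum_const, smul_eq_mul]
      obtain rfl | rfl : j = 1 ∨ j = 2 := by omega
      · have := Nat.mul_le_mul_right m (hline Q h.2)
        omega
      · have hc : Q.card ≤ 6 := by simpa using Finset.card_le_univ Q
        have := Nat.mul_le_mul_right m hc
        omega
    · exact Nat.zero_le _
  · refine le_trans ?_ (Finset.le_sup (f := fun j => Finset.univ.powerset.sup fun Q =>
      if Q.Nonempty ∧ OnLinearSubspace p Q j then (∑ i ∈ Q, m + j - 2) / j else 0)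
      (show 2 ∈ Finset.Icc 1 2 by decide))
    refine le_trans ?_ (Finset.le_sup (f := fun Q =>
      if Q.Nonempty ∧ OnLinearSubspace p Q 2 then (∑ i ∈ Q, m + 2 - 2) / 2 else 0)
      (show (Finset.univ : Finset (Fin 6)) ∈ Finset.univ.powerset by simp))
    have hc : (Finset.univ : Finset (Fin 6)).Nonempty ∧ OnLinearSubspace p Finset.univ 2 :=
      ⟨Finset.univ_nonempty, ⊤, by simp, by simp⟩
    simp only [if_pos hc]
    simp
    omega

/-- Example 4.4: for the configuration of six points on two lines in `ℙ²`,
`reg(Z) = 3m - 1 < T(Z) = T₂(Z) = 3m`. -/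
theorem stmt12 {K : Type} [Field K] [IsAlgClosed K]
    (W₁ W₂ : Submodule K (Fin 3 → K))
    (h1 : Module.finrank K ↥W₁ = 2) (h2 : Module.finrank K ↥W₂ = 2) (hW : W₁ ≠ W₂)
    (p : Fin 6 → Fin 3 → K) (hdist : ProjDistinct p)
    (h123 : ∀ i : Fin 6, (i : ℕ) < 3 → p i ∈ W₁ ∧ p i ∉ W₂)
    (h45 : ∀ i : Fin 6, (i : ℕ) = 3 ∨ (i : ℕ) = 4 → p i ∈ W₂ ∧ p i ∉ W₁)
    (h6 : p 5 ∉ W₁ ∧ p 5 ∉ W₂)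
    (m : ℕ) (hm : 0 < m) :
    regFat K p (fun _ => m) = 3 * m - 1 ∧
    segreBound 2 p (fun _ => m) = 3 * m ∧
    regFat K p (fun _ => m) < segreBound 2 p (fun _ => m) := by
  have hseg := segre_value W₁ W₂ h1 h2 p hdist h123 h45 h6 m
  have : Infinite K := IsAlgClosed.instInfinite
  have hreg : regFat K p (fun _ => m) = 3 * m - 1 := by
    obtain ⟨k, rfl⟩ : ∃ k, m = k + 1 := ⟨m - 1, by omega⟩
    have hmult : fatMult 2 (fun _ : Fin 6 => k + 1) = 6 * (k + 2).choose 2 := by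
      simp [fatMult]
    have hpos : 0 < (k + 2).choose 2 := Nat.choose_pos (by omega)
    have ht : 3 * (k + 1) - 1 = 3 * k + 2 := by omega
    unfold regFat regIndex
    rw [hmult, ht]
    have hmem : 3 * k + 2 ∈ {t | hilbFn K (fatIdeal p fun _ => k + 1) t =
        6 * (k + 2).choose 2} := by
      rw [Set.mem_ofPred_eq, hilbFn, finrank_forms]
      have a := upper_bound_s12 W₁ W₂ h1 h2 p hdist h123 h45 h6 k
      have b := forms_le_gradedDim p hdist.1 (fun _ => k + 1) (3 * k + 2)
      simp only [Finset.sum_const, Finset.card_univ, Fintype.card_fin, smul_eq_mul] at b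
      have e : (3 * k + 2 + 2).choose 2 = (3 * k + 4).choose 2 := rfl
      have e' : (k + 1 + 1).choose 2 = (k + 2).choose 2 := rfl
      omega
    refine le_antisymm (Nat.sInf_le hmem) (le_csInf ⟨_, hmem⟩ ?_)
    intro t htm
    by_contra hlt
    rw [Set.mem_ofPred_eq, hilbFn, finrank_forms] at htm
    rcases t with _ | t
    · have : (0 + 2).choose 2 = 1 := rfl
      omega
    · have a := lower_bound W₁ W₂ h1 h2 p hdist h123 k t
      have e : (t + 1 + 2).choose 2 = (t + 2) + (t + 2).choose 2 := choose_two_succ (t + 2)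
      omega
  refine ⟨hreg, hseg, ?_⟩
  rw [hreg, hseg]
  omega
end
end
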